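/- arXiv:1809.07736 — 2 statements merged into one kernel-verified Lean document; each statement's English description precedes it below -/
import Mathlib

section
/- There exists a constant c > 0 such that for every positive integer k, every Hamiltonian graph G on n vertices with n ≥ c·k^{11/5} and independence number at most k is pancyclic, i.e., G contains a cycle of every length ℓ with 3 ≤ ℓ ≤ n. -/
set_option linter.unusedSectionVars false
set_option linter.unusedVariables false
namespace PC
variable {V : Type} [DecidableEq V] {G : SimpleGraph V}

def Ind (G : SimpleGraph V) (s : Finset V) : Prop := ∀ u ∈ s, ∀ v ∈ s, u ≠ v → ¬ G.Adj u v

open Classical in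
noncomputable def nb (G : SimpleGraph V) (U : Finset V) (v : V) : Finset V :=
  U.filter (fun w => G.Adj v w)

open Classical in
noncomputable def al (G : SimpleGraph V) (U : Finset V) : ℕ :=
  (U.powerset.filter (fun s => Ind G s)).sup Finset.card

lemma mem_nb {U : Finset V} {v w : V} : w ∈ nb G U v ↔ w ∈ U ∧ G.Adj v w := by
  simp [nb]

lemma Ind.mono {s t : Finset V} (h : Ind G t) (hs : s ⊆ t) : Ind G s :=
  fun u hu v hv => h u (hs hu) v (hs hv)

lemma card_le_al {U s : Finset V} (hs : Ind G s) (hsU : s ⊆ U) : s.card ≤ al G U := by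
  unfold al
  exact Finset.le_sup (f := Finset.card) (by simp [hs, hsU])

lemma al_attained (G : SimpleGraph V) (U : Finset V) : ∃ s ⊆ U, Ind G s ∧ s.card = al G U := by
  classical
  have hne : (U.powerset.filter (fun s => Ind G s)).Nonempty :=
    ⟨∅, Finset.mem_filter.2 ⟨by simp, by intro u hu; simp at hu⟩⟩
  obtain ⟨s, hs, h⟩ := Finset.exists_mem_eq_sup _ hne Finset.card
  simp at hs
  exact ⟨s, hs.1, hs.2, by rw [← h]; unfold al; congr⟩

lemma al_mono {U W : Finset V} (h : U ⊆ W) : al G U ≤ al G W := by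
  obtain ⟨s, hs, h1, h2⟩ := al_attained G U
  rw [← h2]; exact card_le_al h1 (hs.trans h)

lemma al_le {k : ℕ} (hα : ∀ s : Finset V, Ind G s → s.card ≤ k) (U : Finset V) : al G U ≤ k := by
  obtain ⟨s, hs, h1, h2⟩ := al_attained G U
  rw [← h2]; exact hα s h1

lemma al_add {U Y Z : Finset V} (hY : Y ⊆ U) (hZ : Z ⊆ U) (hd : Disjoint Y Z)
    (hno : ∀ y ∈ Y, ∀ z ∈ Z, ¬ G.Adj y z) : al G Y + al G Z ≤ al G U := by
  obtain ⟨s, hs, h1, h2⟩ := al_attained G Y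
  obtain ⟨t, ht, h3, h4⟩ := al_attained G Z
  rw [← h2, ← h4, ← Finset.card_union_of_disjoint (Finset.disjoint_of_subset_left hs
    (Finset.disjoint_of_subset_right ht hd))]
  apply card_le_al _ (Finset.union_subset (hs.trans hY) (ht.trans hZ))
  intro u hu v hv huv
  rcases Finset.mem_union.1 hu with hu | hu <;> rcases Finset.mem_union.1 hv with hv | hv
  · exact h1 u hu v hv huv
  · exact hno u (hs hu) v (ht hv)
  · exact fun h => hno v (hs hv) u (ht hu) h.symm
  · exact h3 u hu v hv huv

lemma exists_edge {k : ℕ} (hα : ∀ s : Finset V, Ind G s → s.card ≤ k) {s : Finset V}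
    (hs : k < s.card) : ∃ a ∈ s, ∃ b ∈ s, G.Adj a b := by
  by_contra h
  push Not at h
  have := hα s (fun u hu v hv _ => h u hu v hv)
  omega

def Good (G : SimpleGraph V) (M : ℕ) (U : Finset V) : Prop :=
  U.Nonempty ∧ 2 * M * al G U ≤ 2 * U.card + M ∧
    ∀ A ⊆ U, A.Nonempty → A ≠ U → 2 * A.card + M < 2 * M * al G A

lemma good_exists {M : ℕ} {U0 : Finset V} (h0 : U0.Nonempty)
    (h : 2 * M * al G U0 ≤ 2 * U0.card + M) : ∃ U ⊆ U0, Good G M U := by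
  induction U0 using Finset.strongInduction with
  | H U0 ih =>
    by_cases hA : ∀ A ⊆ U0, A.Nonempty → A ≠ U0 → 2 * A.card + M < 2 * M * al G A
    · exact ⟨U0, subset_rfl, h0, h, hA⟩
    · push Not at hA
      obtain ⟨A, hAU, hAn, hAne, hA⟩ := hA
      obtain ⟨U, hU, hg⟩ := ih A (hAU.ssubset_of_ne hAne) hAn hA
      exact ⟨U, hU.trans hAU, hg⟩

/-- expansion -/
lemma Good.exp {M : ℕ} {U I N : Finset V} (hU : Good G M U) (hI : I ⊆ U) (hi : Ind G I)
    (hIN : I ⊆ N) (hN : ∀ v ∈ I, nb G U v ⊆ N) (hNU : N ⊆ U) : M * I.card ≤ 2 * N.card := by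
  rcases I.eq_empty_or_nonempty with rfl | hne
  · simp
  obtain ⟨h0, h1, h2⟩ := hU
  have hc : 1 ≤ I.card := hne.card_pos
  by_cases hA : (U \ N).Nonempty
  · have hne' : U \ N ≠ U := by
      obtain ⟨v, hv⟩ := hne
      intro h
      have : v ∈ U \ N := by rw [h]; exact hI hv
      exact (Finset.mem_sdiff.1 this).2 (hIN hv)
    have h3 := h2 _ Finset.sdiff_subset hA hne'
    have h4 : al G (U \ N) + al G I ≤ al G U := by
      apply al_add Finset.sdiff_subset hI
      · exact Finset.disjoint_of_subset_right hIN Finset.sdiff_disjoint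
      · intro y hy z hz hyz
        have hy' := Finset.mem_sdiff.1 hy
        exact hy'.2 (hN z hz (mem_nb.2 ⟨hy'.1, hyz.symm⟩))
    have h5 : I.card ≤ al G I := card_le_al hi subset_rfl
    have h6 : (U \ N).card + N.card = U.card := Finset.card_sdiff_add_card_eq_card hNU
    nlinarith
  · rw [Finset.not_nonempty_iff_eq_empty, Finset.sdiff_eq_empty_iff_subset] at hA
    have : N = U := Finset.Subset.antisymm hNU hA
    subst this
    have := card_le_al hi hI
    nlinarith

lemma Good.deg {M : ℕ} {U : Finset V} (hU : Good G M U) {v : V} (hv : v ∈ U) :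
    M ≤ 2 * (nb G U v).card + 2 := by
  have := hU.exp (I := {v}) (N := insert v (nb G U v)) (by simpa using hv)
    (by intro u hu v hv h; simp at hu hv; subst hu; exact absurd hv.symm h) (by simp)
    (by intro w hw; simp at hw; subst hw; exact Finset.subset_insert _ _)
    (by intro w hw; rcases Finset.mem_insert.1 hw with rfl | hw; exact hv; exact (mem_nb.1 hw).1)
  have h2 := Finset.card_insert_le v (nb G U v)
  simp at this
  omega

def IsP (G : SimpleGraph V) (L : List V) (a b : V) : Prop :=
  L.IsChain G.Adj ∧ L.Nodup ∧ L.head? = some a ∧ L.getLast? = some b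

lemma exists_path_step {L : List V} {a y z : V} (hL : IsP G L a y) (h : G.Adj y z) :
    ∃ L', IsP G L' a z ∧ ∀ x ∈ L', x ∈ L ∨ x = z := by
  obtain ⟨h1, h2, h3, h4⟩ := hL
  by_cases hz : z ∈ L
  · obtain ⟨s, t, rfl⟩ := List.append_of_mem hz
    refine ⟨s ++ [z], ⟨?_, ?_, ?_, ?_⟩, ?_⟩
    · have : s ++ z :: t = (s ++ [z]) ++ t := by simp
      rw [this] at h1
      exact h1.left_of_append
    · have : s ++ z :: t = (s ++ [z]) ++ t := by simp
      rw [this] at h2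
      exact h2.of_append_left
    · cases s <;> simp_all
    · simp
    · intro x hx; simp at hx ⊢; tauto
  · refine ⟨L ++ [z], ⟨?_, ?_, ?_, ?_⟩, ?_⟩
    · rw [List.isChain_append]
      refine ⟨h1, by simp, ?_⟩
      rw [h4]; simpa using h
    · rw [List.nodup_append]
      refine ⟨h2, by simp, ?_⟩
      intro a ha b hb; simp at hb; subst hb; rintro rfl; exact hz ha
    · cases L <;> simp_all
    · simp
    · simp

lemma Good.conn {M : ℕ} {U X : Finset V} (hU : Good G M U) (hX : X ⊆ U) (hM : 2 * X.card ≤ M)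
    {a b : V} (ha : a ∈ U \ X) (hb : b ∈ U \ X) :
    ∃ L, IsP G L a b ∧ ∀ x ∈ L, x ∈ U \ X := by
  classical
  by_contra hcon
  set Y := (U \ X).filter (fun y => ∃ L, IsP G L a y ∧ ∀ x ∈ L, x ∈ U \ X) with hY
  set Z := (U \ X) \ Y with hZ
  have hYs : Y ⊆ U \ X := Finset.filter_subset _ _
  have haY : a ∈ Y := by
    rw [hY, Finset.mem_filter]
    exact ⟨ha, [a], by simp [IsP], by simpa using ha⟩
  have hbZ : b ∈ Z := by
    rw [hZ, Finset.mem_sdiff]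
    refine ⟨hb, fun h => hcon (Finset.mem_filter.1 h).2⟩
  have hno : ∀ y ∈ Y, ∀ z ∈ Z, ¬ G.Adj y z := by
    intro y hy z hz hyz
    obtain ⟨_, L, hL, hLs⟩ := Finset.mem_filter.1 hy
    obtain ⟨hz1, hz2⟩ := Finset.mem_sdiff.1 hz
    obtain ⟨L', hL', hs⟩ := exists_path_step hL hyz
    refine hz2 (Finset.mem_filter.2 ⟨hz1, L', hL', ?_⟩)
    intro x hx
    rcases hs x hx with h | rfl
    · exact hLs x h
    · exact hz1
  have hYU : Y ⊆ U := hYs.trans Finset.sdiff_subset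
  have hZU : Z ⊆ U := Finset.sdiff_subset.trans Finset.sdiff_subset
  have hd : Disjoint Y Z := Finset.disjoint_sdiff
  have h1 := al_add hYU hZU hd hno
  obtain ⟨g0, g1, g2⟩ := hU
  have hYne : Y ≠ U := by
    intro h
    have : b ∈ Y := by rw [h]; exact (Finset.mem_sdiff.1 hb).1
    exact (Finset.mem_sdiff.1 hbZ).2 this
  have hZne : Z ≠ U := by
    intro h
    have : a ∈ Z := by rw [h]; exact (Finset.mem_sdiff.1 ha).1
    exact (Finset.mem_sdiff.1 this).2 haY
  have h2 := g2 Y hYU ⟨a, haY⟩ hYne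
  have h3 := g2 Z hZU ⟨b, hbZ⟩ hZne
  have h4 : Z.card + Y.card = (U \ X).card := Finset.card_sdiff_add_card_eq_card hYs
  have h5 : (U \ X).card + X.card = U.card := Finset.card_sdiff_add_card_eq_card hX
  nlinarith


def HasCyc (G : SimpleGraph V) (ℓ : ℕ) : Prop := ∃ (u : V) (w : G.Walk u u), w.IsCycle ∧ w.length = ℓ

lemma IsP.close {L : List V} {a b : V} (h : IsP G L a b) (h3 : 3 ≤ L.length) (hba : G.Adj b a) :
    HasCyc G L.length := by
  obtain ⟨h1, h2, hh, hl⟩ := h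
  have hne : L ≠ [] := by rintro rfl; simp at h3
  have e1 : L.head hne = a := by rw [List.head?_eq_some_head hne] at hh; simpa using hh
  have e2 : L.getLast hne = b := by rw [List.getLast?_eq_some_getLast hne] at hl; simpa using hl
  let p := SimpleGraph.Walk.ofSupport L hne h1
  have hp : p.IsPath := by
    rw [SimpleGraph.Walk.isPath_def]
    simp [p, h2]
  have hadj : G.Adj (L.getLast hne) (L.head hne) := by rw [e1, e2]; exact hba
  have hlen : p.length + 1 = L.length := by
    simp [p, SimpleGraph.Walk.length_ofSupport]; omega
  refine ⟨_, SimpleGraph.Walk.cons hadj p, ?_, by simpa using hlen⟩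
  rw [SimpleGraph.Walk.cons_isCycle_iff]
  refine ⟨hp, fun hm => ?_⟩
  rw [Sym2.eq_swap] at hm
  have := hp.length_eq_one_of_mem_edges hm
  omega

lemma ham_list [Fintype V] (hG : G.IsHamiltonian) (hc : Fintype.card V ≠ 1) :
    ∃ (P : List V) (a b : V), IsP G P a b ∧ P.length = Fintype.card V ∧ G.Adj b a := by
  obtain ⟨a, p, hp⟩ := hG hc
  have hcyc := hp.isCycle
  obtain ⟨h1, h2⟩ := SimpleGraph.Walk.isCycle_iff_isPath_tail_and_le_length.1 hcyc
  have ht := hp.isHamiltonian_tail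
  refine ⟨p.tail.support, p.snd, a, ⟨p.tail.isChain_adj_support, ht.isPath.support_nodup, ?_, ?_⟩,
    ht.length_support, ?_⟩
  · rw [List.head?_eq_some_head p.tail.support_ne_nil, SimpleGraph.Walk.head_support]
  · rw [List.getLast?_eq_some_getLast p.tail.support_ne_nil, SimpleGraph.Walk.getLast_support]
  · exact p.adj_snd hcyc.not_nil

lemma split1 {α : Type} (L : List α) {i : ℕ} (hi : i < L.length) :
    ∃ A B, L = A ++ L[i] :: B ∧ A.length = i :=
  ⟨L.take i, L.drop (i+1), by simp, by simp; omega⟩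

lemma split2 {α : Type} (L : List α) {i j : ℕ} (hij : i < j) (hj : j < L.length) :
    ∃ A M B, L = A ++ L[i] :: (M ++ L[j] :: B) ∧ A.length = i ∧ M.length + i + 1 = j := by
  obtain ⟨A, B, h, hA⟩ := split1 L (hij.trans hj)
  have hj' : j - i - 1 < B.length := by
    have := congrArg List.length h
    simp at this; omega
  obtain ⟨M, B', h', hM⟩ := split1 B hj'
  refine ⟨A, M, B', ?_, hA, by omega⟩
  have e : B[j-i-1] = L[j] := by
    have : L[j] = (A ++ L[i] :: B)[j]'(by rw [← h]; exact hj) := by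
      congr 1
    rw [this, List.getElem_append_right (by omega), List.getElem_cons]
    simp [hA, show j - i ≠ 0 by omega]
  rw [← e, ← h', ← h]

/-- one shortening step -/
lemma shorten1 {k : ℕ} (hα : ∀ s : Finset V, Ind G s → s.card ≤ k) {Z : List V} {a b : V}
    (hZ : IsP G Z a b) (hl : 2 * k + 1 ≤ Z.length) :
    ∃ Z', IsP G Z' a b ∧ Z' ⊆ Z ∧ Z'.length < Z.length ∧ Z.length + 1 ≤ Z'.length + 2 * k := by
  obtain ⟨h1, h2, h3, h4⟩ := hZ
  have hlt : ∀ i : Fin (k+1), 2 * i.1 < Z.length := fun i => by omega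
  let f : Fin (k+1) → V := fun i => Z[2 * i.1]'(hlt i)
  have hf : Function.Injective f := by
    intro i j hij
    have := (h2.getElem_inj_iff).1 hij
    ext; omega
  obtain ⟨u, hu, v, hv, huv⟩ := exists_edge hα (s := Finset.univ.image f) (by
    rw [Finset.card_image_of_injective _ hf]; simp)
  have key : ∃ i j : Fin (k+1), i < j ∧ G.Adj (f i) (f j) := by
    simp at hu hv
    obtain ⟨i, rfl⟩ := hu
    obtain ⟨j, rfl⟩ := hv
    rcases lt_trichotomy i j with h | h | h
    · exact ⟨i, j, h, huv⟩
    · subst h; exact absurd huv (G.irrefl)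
    · exact ⟨j, i, h, huv.symm⟩
  obtain ⟨i, j, hij, hadj⟩ := key
  have hij' : 2 * i.1 < 2 * j.1 := by have : i.1 < j.1 := hij; omega
  obtain ⟨A, M, B, hZe, hA, hM⟩ := split2 Z hij' (hlt j)
  have hadj' : G.Adj (Z[2 * i.1]'(hlt i)) (Z[2 * j.1]'(hlt j)) := hadj
  generalize Z[2 * i.1]'(hlt i) = x at *
  generalize Z[2 * j.1]'(hlt j) = y at *
  subst hZe
  refine ⟨A ++ x :: y :: B, ⟨?_, ?_, ?_, ?_⟩, ?_, ?_, ?_⟩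
  · grind [List.isChain_append, List.isChain_cons]
  · grind
  · cases A <;> simp_all
  · simp [List.getLast?_append, List.getLast?_cons] at h4 ⊢; exact h4
  · intro w; simp; tauto
  · simp; omega
  · simp; omega

lemma shorten {k : ℕ} (hα : ∀ s : Finset V, Ind G s → s.card ≤ k) (hk : 0 < k) {a b : V} {m : ℕ}
    (hm : 2 * k + 1 ≤ m) : ∀ (N : ℕ) (Z : List V), Z.length ≤ N → IsP G Z a b → m ≤ Z.length →
    ∃ Z', IsP G Z' a b ∧ Z' ⊆ Z ∧ Z'.length ≤ m ∧ m < Z'.length + 2 * k := by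
  intro N
  induction N with
  | zero => intro Z h1 h2 h3; omega
  | succ N ih =>
    intro Z h1 h2 h3
    by_cases he : Z.length = m
    · exact ⟨Z, h2, fun _ h => h, he.le, by omega⟩
    obtain ⟨Z1, g1, g2, g3, g4⟩ := shorten1 hα h2 (by omega)
    by_cases hc : m ≤ Z1.length
    · obtain ⟨Z', f1, f2, f3, f4⟩ := ih Z1 (by omega) g1 hc
      exact ⟨Z', f1, fun _ h => g2 (f2 h), f3, f4⟩
    · exact ⟨Z1, g1, g2, by omega, by omega⟩

lemma IsP.append {L L' : List V} {a b c d : V} (h : IsP G L a b) (h' : IsP G L' c d)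
    (hadj : G.Adj b c) (hd : ∀ x ∈ L, x ∉ L') : IsP G (L ++ L') a d := by
  obtain ⟨h1, h2, h3, h4⟩ := h
  obtain ⟨g1, g2, g3, g4⟩ := h'
  refine ⟨?_, ?_, ?_, ?_⟩
  · rw [List.isChain_append]
    refine ⟨h1, g1, ?_⟩
    rw [h4, g3]; simpa using hadj
  · rw [List.nodup_append]
    exact ⟨h2, g2, fun x hx y hy hxy => hd x hx (hxy ▸ hy)⟩
  · simp [h3]
  · simp [g4]

lemma IsP.single (a : V) : IsP G [a] a a := by simp [IsP]

lemma IsP.rev {L : List V} {a b : V} (h : IsP G L a b) : IsP G L.reverse b a := by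
  obtain ⟨h1, h2, h3, h4⟩ := h
  refine ⟨?_, by simpa using h2, by simpa using h4, by simpa using h3⟩
  rw [List.isChain_reverse]
  exact h1.imp (fun _ _ h => h.symm)

lemma IsP.ne {L : List V} {a b : V} (h : IsP G L a b) (hl : 2 ≤ L.length) : a ≠ b := by
  obtain ⟨h1, h2, h3, h4⟩ := h
  match L, hl with
  | x :: y :: L, _ =>
    simp at h3
    subst h3
    rw [List.getLast?_cons_cons] at h4
    have := List.mem_of_getLast? h4
    rintro rfl
    exact (List.nodup_cons.1 h2).1 this

lemma IsP.tail {L : List V} {a b : V} (h : IsP G L a b) (hl : 2 ≤ L.length) :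
    ∃ c L', L = a :: L' ∧ IsP G L' c b ∧ G.Adj a c ∧ a ∉ L' := by
  obtain ⟨h1, h2, h3, h4⟩ := h
  match L, hl with
  | x :: y :: L, _ =>
    simp at h3
    subst h3
    rw [List.getLast?_cons_cons] at h4
    rw [List.isChain_cons_cons] at h1
    rw [List.nodup_cons] at h2
    exact ⟨y, y :: L, rfl, ⟨h1.2, h2.2, rfl, h4⟩, h1.1, h2.1⟩

lemma IsP.mem_last {L : List V} {a b : V} (h : IsP G L a b) : b ∈ L := List.mem_of_getLast? h.2.2.2
lemma IsP.mem_head {L : List V} {a b : V} (h : IsP G L a b) : a ∈ L := List.mem_of_head? h.2.2.1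

lemma tri_chain {k : ℕ} (hα : ∀ s : Finset V, Ind G s → s.card ≤ k) {X F : Finset V} {x0 : V}
    (hx0 : x0 ∈ X) (r : ℕ) (hdeg : ∀ v ∈ X, k + 2 * r + F.card ≤ (nb G X v).card) :
    ∃ W ⊆ X, ∃ y ∈ W, W.card ≤ 2 * r + 1 ∧ x0 ∈ W ∧ (∀ x ∈ W, x ≠ x0 → x ∉ F) ∧
      ∀ s, r ≤ s → s ≤ 2 * r → ∃ L, IsP G L x0 y ∧ L.length = s + 1 ∧ ∀ x ∈ L, x ∈ W := by
  induction r with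
  | zero =>
    refine ⟨{x0}, by simpa using hx0, x0, by simp, by simp, by simp, by simp, ?_⟩
    intro s _ hs
    exact ⟨[x0], IsP.single _, by simp; omega, by simp⟩
  | succ r ih =>
    obtain ⟨W, hWX, y, hyW, hWc, hx0W, hWF, hW⟩ := ih (fun v hv => by have := hdeg v hv; omega)
    have hc : k < ((nb G X y) \ (W ∪ F)).card := by
      have h1 := Finset.le_card_sdiff (W ∪ F) (nb G X y)
      have h2 := Finset.card_union_le W F
      have h3 := hdeg y (hWX hyW)
      omega
    obtain ⟨a, ha, b, hb, hab⟩ := exists_edge hα hc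
    simp only [Finset.mem_sdiff, mem_nb, Finset.mem_union, not_or] at ha hb
    obtain ⟨⟨haX, hya⟩, haW, haF⟩ := ha
    obtain ⟨⟨hbX, hyb⟩, hbW, hbF⟩ := hb
    refine ⟨insert a (insert b W), ?_, b, by simp, ?_, by simp [hx0W], ?_, ?_⟩
    · intro x hx; simp at hx; rcases hx with rfl | rfl | hx
      exacts [haX, hbX, hWX hx]
    · have h1 := Finset.card_insert_le a (insert b W)
      have h2 := Finset.card_insert_le b W
      omega
    · intro x hx hne; simp at hx; rcases hx with rfl | rfl | hx
      exacts [haF, hbF, hWF x hx hne]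
    · intro s hs1 hs2
      by_cases hs : s ≤ 2 * r + 1
      · obtain ⟨L, hL, hLl, hLW⟩ := hW (s - 1) (by omega) (by omega)
        refine ⟨L ++ [b], hL.append (IsP.single b) hyb ?_, by simp; omega, ?_⟩
        · intro x hx; simp; rintro rfl; exact hbW (hLW _ hx)
        · intro x hx; simp at hx ⊢; rcases hx with hx | hx
          · exact Or.inr (Or.inr (hLW x hx))
          · exact Or.inr (Or.inl hx)
      · obtain ⟨L, hL, hLl, hLW⟩ := hW (2 * r) (by omega) (by omega)
        have hL2 : IsP G [a, b] a b := by simp [IsP, hab, hab.ne]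
        refine ⟨L ++ [a, b], hL.append hL2 hya ?_, by simp; omega, ?_⟩
        · intro x hx; simp; constructor <;> (rintro rfl)
          · exact haW (hLW _ hx)
          · exact hbW (hLW _ hx)
        · intro x hx; simp at hx ⊢; rcases hx with hx | hx | hx
          · exact Or.inr (Or.inr (hLW x hx))
          · exact Or.inl hx
          · exact Or.inr (Or.inl hx)


lemma cyc_of_two_paths {L Z : List V} {p y : V} (hL : IsP G L p y) (hZ : IsP G Z y p)
    (hl : 2 ≤ L.length) (hz : 2 ≤ Z.length) (hlz : 5 ≤ L.length + Z.length)
    (hd : ∀ x ∈ L, x ∈ Z → x = p ∨ x = y) : HasCyc G (L.length + Z.length - 2) := by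
  obtain ⟨d, L', rfl, hL', hpd, hpL'⟩ := hL.tail hl
  obtain ⟨c, Z', rfl, hZ', hyc, hyZ'⟩ := hZ.tail hz
  have h := hL'.append hZ' hyc (by
    intro x hx hx'
    rcases hd x (by simp [hx]) (by simp [hx']) with rfl | rfl
    · exact hpL' hx
    · exact hyZ' hx')
  have := h.close (by simp at *; omega) hpd
  convert this using 1
  simp; omega

lemma first_split {α : Type} (p : α → Prop) (L : List α) (h : ∃ x ∈ L, p x) :
    ∃ A x B, L = A ++ x :: B ∧ p x ∧ ∀ y ∈ A, ¬ p y := by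
  induction L with
  | nil => simp at h
  | cons a L ih =>
    by_cases ha : p a
    · exact ⟨[], a, L, rfl, ha, by simp⟩
    · obtain ⟨x, hx, hp⟩ := h
      have : x ∈ L := by
        rcases List.mem_cons.1 hx with rfl | h
        · exact absurd hp ha
        · exact h
      obtain ⟨A, x, B, rfl, h1, h2⟩ := ih ⟨x, this, hp⟩
      refine ⟨a :: A, x, B, rfl, h1, ?_⟩
      intro y hy
      rcases List.mem_cons.1 hy with rfl | h
      · exact ha
      · exact h2 y h

lemma last_split {α : Type} (p : α → Prop) (L : List α) (h : ∃ x ∈ L, p x) :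
    ∃ A x B, L = A ++ x :: B ∧ p x ∧ ∀ y ∈ B, ¬ p y := by
  obtain ⟨A, x, B, h1, h2, h3⟩ := first_split p L.reverse (by simpa using h)
  refine ⟨B.reverse, x, A.reverse, ?_, h2, by simpa using h3⟩
  have := congrArg List.reverse h1
  simpa using this

lemma mid_range {k M : ℕ} (hα : ∀ s : Finset V, Ind G s → s.card ≤ k) (hk : 0 < k)
    {A0 B0 : List V} {a b : V} (hP : IsP G (A0 ++ B0) a b) (hba : G.Adj b a) (hB0 : B0 ≠ [])
    {U : Finset V} (hU : Good G M U) (hUA : ∀ x ∈ U, x ∈ A0) (hM : 20 * k ≤ M)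
    {ℓ : ℕ} (h1 : 4 * k ≤ ℓ) (h2 : ℓ + 1 ≤ B0.length) : HasCyc G ℓ := by
  have hdeg : ∀ v ∈ U, 9 * k ≤ (nb G U v).card := fun v hv => by
    have := hU.deg hv; omega
  obtain ⟨u, hu⟩ := hU.1
  have hcard : 2 ≤ U.card := by
    have h1 := hdeg u hu
    have h2 : nb G U u ⊆ U := fun x hx => (mem_nb.1 hx).1
    have h3 := Finset.card_le_card h2
    omega
  obtain ⟨P1, p, T, hT, hpU, hP1⟩ := first_split (· ∈ U) A0 ⟨u, hUA u hu, hu⟩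
  obtain ⟨q', hq', hq'p⟩ := Finset.exists_mem_ne hcard p
  have hq'T : q' ∈ T := by
    have h := hUA q' hq'
    rw [hT] at h
    simp at h
    rcases h with h | h | h
    · exact absurd hq' (hP1 _ h)
    · exact absurd h hq'p
    · exact h
  obtain ⟨P2, q, P3', hT', hqU, hP3'⟩ := last_split (· ∈ U) T ⟨q', hq'T, hq'⟩
  subst hT'
  subst hT
  obtain ⟨hch, hnd, hhd, hlt⟩ := hP
  set P3 := P3' ++ B0 with hP3
  have hP3ne : P3 ≠ [] := by simp [hP3, hB0]
  have hPe : (P1 ++ p :: (P2 ++ q :: P3')) ++ B0 = P1 ++ p :: (P2 ++ q :: P3) := by simp [hP3]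
  have hB0U : ∀ x ∈ B0, x ∉ U := by
    intro x hx hxU
    have := hUA x hxU
    exact (List.disjoint_of_nodup_append hnd) this hx
  have hP3U : ∀ x ∈ P3, x ∉ U := by
    intro x hx
    rcases List.mem_append.1 hx with h | h
    · exact hP3' x h
    · exact hB0U x h
  rw [hPe] at hch hnd hhd hlt
  have hpq : p ≠ q := by
    rintro rfl
    simp [List.nodup_append] at hnd
  -- the tail paths
  have hp1 : IsP G (P1 ++ [p]) a p := by
    refine ⟨?_, ?_, ?_, by simp⟩
    · have : P1 ++ p :: (P2 ++ q :: P3) = (P1 ++ [p]) ++ (P2 ++ q :: P3) := by simp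
      rw [this] at hch; exact hch.left_of_append
    · have : P1 ++ p :: (P2 ++ q :: P3) = (P1 ++ [p]) ++ (P2 ++ q :: P3) := by simp
      rw [this] at hnd; exact hnd.of_append_left
    · cases P1 <;> simp_all
  have hqP3 : (q :: P3).IsChain G.Adj := by
    have : P1 ++ p :: (P2 ++ q :: P3) = (P1 ++ p :: P2) ++ (q :: P3) := by simp
    rw [this] at hch; exact hch.right_of_append
  obtain ⟨c, P3t, hc⟩ := List.exists_cons_of_ne_nil hP3ne
  have hqc : G.Adj q c := by
    rw [hc, List.isChain_cons_cons] at hqP3; exact hqP3.1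
  have hp3 : IsP G P3 c b := by
    refine ⟨hqP3.of_cons, ?_, by rw [hc]; rfl, ?_⟩
    · have : P1 ++ p :: (P2 ++ q :: P3) = (P1 ++ p :: (P2 ++ [q])) ++ P3 := by simp
      rw [this] at hnd; exact hnd.of_append_right
    · have : P1 ++ p :: (P2 ++ q :: P3) = (P1 ++ p :: (P2 ++ [q])) ++ P3 := by simp
      rw [this, List.getLast?_append_of_ne_nil _ hP3ne] at hlt; exact hlt
  have hdis : ∀ x ∈ P3, x ∉ P1 ++ [p] := by
    have : P1 ++ p :: (P2 ++ q :: P3) = ((P1 ++ [p]) ++ (P2 ++ [q])) ++ P3 := by simp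
    rw [this] at hnd
    intro x hx hx'
    exact List.disjoint_of_nodup_append hnd (List.mem_append_left _ hx') hx
  have hD := hp3.append hp1 hba hdis
  obtain ⟨W, hWU, y, hyW, hWc, hpW, hWF, hW⟩ := tri_chain hα (F := {q}) hpU (2 * k) (by
    intro v hv; have := hdeg v hv; simp; omega)
  obtain ⟨L0, hL0, hL0l, _⟩ := hW (2 * k) le_rfl (by omega)
  have hpy : p ≠ y := hL0.ne (by omega)
  have hqW : q ∉ W := fun h => hWF q h hpq.symm (by simp)
  obtain ⟨C, hC, hCU⟩ := hU.conn (X := W.erase y) ((Finset.erase_subset _ _).trans hWU)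
    (by have := Finset.card_erase_le (s := W) (a := y); omega) (a := y) (b := q)
    (by simp [hWU hyW]) (by simp [hqU, hqW])
  have hZ := hC.append hD hqc (by
    intro x hx hx'
    have hxC := Finset.mem_sdiff.1 (hCU x hx)
    simp only [List.mem_append, List.mem_singleton] at hx'
    rcases hx' with h | h | h
    · exact hP3U x h hxC.1
    · exact hP1 x h hxC.1
    · subst h; exact hxC.2 (Finset.mem_erase.2 ⟨hpy, hpW⟩))
  have hZW : ∀ x ∈ C ++ (P3 ++ (P1 ++ [p])), x ∈ W → x = p ∨ x = y := by
    intro x hx hxW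
    simp only [List.mem_append, List.mem_singleton] at hx
    rcases hx with h | h | h | h
    · have hxC := Finset.mem_sdiff.1 (hCU x h)
      right
      by_contra hne
      exact hxC.2 (Finset.mem_erase.2 ⟨hne, hxW⟩)
    · exact absurd (hWU hxW) (hP3U x h)
    · exact absurd (hWU hxW) (hP1 x h)
    · exact Or.inl h
  obtain ⟨Z', hZ', hZs, hZ1, hZ2⟩ := shorten hα hk (m := ℓ + 1 - 2 * k) (by omega) _ _ le_rfl hZ (by
    simp [hP3]; omega)
  have hZ'2 : 2 ≤ Z'.length := by
    omega
  obtain ⟨L, hL, hLl, hLW⟩ := hW (ℓ + 1 - Z'.length) (by omega) (by omega)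
  have := cyc_of_two_paths hL hZ' (by omega) hZ'2 (by omega) (by
    intro x hx hx'
    exact hZW x (hZs hx') (hLW x hx))
  convert this using 1
  omega


lemma greedy {X : Finset V} (m : ℕ) (hX : X.Nonempty) (hdeg : ∀ v ∈ X, m ≤ (nb G X v).card) :
    ∃ L a b, IsP G L a b ∧ L.length = m + 1 ∧ ∀ x ∈ L, x ∈ X := by
  induction m with
  | zero =>
    obtain ⟨x, hx⟩ := hX
    exact ⟨[x], x, x, IsP.single x, rfl, by simpa using hx⟩
  | succ m ih =>
    obtain ⟨L, a, b, hL, hl, hs⟩ := ih (fun v hv => by have := hdeg v hv; omega)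
    have hb := hs b hL.mem_last
    -- L.toFinset minus b has m elements
    have hc : ((nb G X b) \ (L.toFinset.erase b)).Nonempty := by
      rw [← Finset.card_pos]
      have h1 := Finset.le_card_sdiff (L.toFinset.erase b) (nb G X b)
      have h2 : (L.toFinset.erase b).card = m := by
        rw [Finset.card_erase_of_mem (by simpa using hL.mem_last), List.toFinset_card_of_nodup hL.2.1]
        omega
      have := hdeg b hb
      omega
    obtain ⟨c, hc⟩ := hc
    obtain ⟨hc1, hc2⟩ := Finset.mem_sdiff.1 hc
    obtain ⟨hcX, hbc⟩ := mem_nb.1 hc1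
    have hcL : c ∉ L := by
      intro h
      exact hc2 (Finset.mem_erase.2 ⟨hbc.ne', by simpa using h⟩)
    refine ⟨L ++ [c], a, c, hL.append (IsP.single c) hbc ?_, by simp [hl], ?_⟩
    · intro x hx; simp; rintro rfl; exact hcL hx
    · intro x hx; simp at hx; rcases hx with h | rfl
      · exact hs x h
      · exact hcX

/-- cycles of bounded length -/
lemma tiny_range {k M : ℕ} (hα : ∀ s : Finset V, Ind G s → s.card ≤ k) (hk : 0 < k)
    {U : Finset V} (hU : Good G M U) (hM : 200 * k ≤ M) {ℓ : ℕ} (h1 : 3 ≤ ℓ) (h2 : ℓ ≤ 18) :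
    HasCyc G ℓ := by
  obtain ⟨v, hv⟩ := hU.1
  have hd := hU.deg hv
  have ha := al_le hα (nb G U v)
  obtain ⟨X, hX, hg⟩ := good_exists (G := G) (M := 40) (U0 := nb G U v)
    (by rw [← Finset.card_pos]; omega) (by omega)
  obtain ⟨L, a, b, hL, hl, hs⟩ := greedy (G := G) (ℓ - 2) hg.1 (fun v hv => by have := hg.deg hv; omega)
  have hadj : ∀ x ∈ L, G.Adj v x := fun x hx => (mem_nb.1 (hX (hs x hx))).2
  have hp := (IsP.single (G := G) v).append hL (hadj a hL.mem_head) (by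
    intro x hx; simp at hx; subst hx; intro h; exact G.irrefl (hadj x h))
  have := hp.close (by simp; omega) (hadj b hL.mem_last).symm
  convert this using 1
  simp; omega

noncomputable def ball (G : SimpleGraph V) (U : Finset V) (v : V) : ℕ → Finset V
  | 0 => {v}
  | i + 1 => ball G U v i ∪ (ball G U v i).biUnion (fun w => nb G U w)

noncomputable def layer (G : SimpleGraph V) (U : Finset V) (v : V) (i : ℕ) : Finset V :=
  ball G U v (i+1) \ ball G U v i

lemma ball_sub_succ {U : Finset V} {v : V} (i : ℕ) : ball G U v i ⊆ ball G U v (i+1) :=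
  Finset.subset_union_left

lemma ball_sub {U : Finset V} {v : V} (hv : v ∈ U) (i : ℕ) : ball G U v i ⊆ U := by
  induction i with
  | zero => simpa [ball] using hv
  | succ i ih =>
    intro x hx
    rw [ball, Finset.mem_union, Finset.mem_biUnion] at hx
    rcases hx with h | ⟨w, _, h⟩
    · exact ih h
    · exact (mem_nb.1 h).1

lemma layer_parent {U : Finset V} {v x : V} {i : ℕ} (hx : x ∈ layer G U v i) :
    ∃ w ∈ ball G U v i, G.Adj w x := by
  rw [layer, Finset.mem_sdiff, ball, Finset.mem_union, Finset.mem_biUnion] at hx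
  rcases hx with ⟨h | ⟨w, hw, h⟩, h'⟩
  · exact absurd h h'
  · exact ⟨w, hw, (mem_nb.1 h).2⟩

lemma layer_parent' {U : Finset V} {v x : V} {i : ℕ} (hv : v ∈ U) (hx : x ∈ layer G U v (i+1)) :
    ∃ w ∈ layer G U v i, G.Adj w x := by
  obtain ⟨w, hw, h⟩ := layer_parent hx
  refine ⟨w, Finset.mem_sdiff.2 ⟨hw, fun hw' => ?_⟩, h⟩
  refine (Finset.mem_sdiff.1 hx).2 ?_
  rw [ball, Finset.mem_union, Finset.mem_biUnion]
  exact Or.inr ⟨w, hw', mem_nb.2 ⟨ball_sub hv _ (Finset.mem_sdiff.1 hx).1, h⟩⟩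

lemma fork {U : Finset V} {v : V} (hv : v ∈ U) : ∀ (i : ℕ) (x y : V), x ∈ layer G U v i →
    y ∈ layer G U v i → x ≠ y → ∃ h Q, 1 ≤ h ∧ h ≤ i + 1 ∧ IsP G Q x y ∧ Q.length = 2 * h + 1 ∧
      ∀ z ∈ Q, z = x ∨ z = y ∨ z ∈ ball G U v i := by
  intro i
  induction i with
  | zero =>
    intro x y hx hy hxy
    obtain ⟨w, hw, hwx⟩ := layer_parent hx
    obtain ⟨w', hw', hwy⟩ := layer_parent hy
    have e1 : w = v := by simpa [ball] using hw
    have e2 : w' = v := by simpa [ball] using hw'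
    rw [e1] at hwx
    rw [e2] at hwy
    refine ⟨1, [x, v, y], le_rfl, le_rfl, ?_, rfl, ?_⟩
    · simp [IsP, hwx.symm, hwy, hwx.ne', hxy, hwy.ne]
    · intro z hz; simp [ball] at hz ⊢; tauto
  | succ i ih =>
    intro x y hx hy hxy
    obtain ⟨w, hw, hwx⟩ := layer_parent' hv hx
    obtain ⟨w', hw', hwy⟩ := layer_parent' hv hy
    have hb : ∀ z ∈ layer G U v i, z ∈ ball G U v (i+1) := fun z hz => (Finset.mem_sdiff.1 hz).1
    by_cases hww : w = w'
    · subst hww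
      refine ⟨1, [x, w, y], le_rfl, by omega, ?_, rfl, ?_⟩
      · simp [IsP, hwx.symm, hwy, hwx.ne', hxy, hwy.ne]
      · intro z hz; simp at hz ⊢
        rcases hz with h | h | h
        · simp [h]
        · subst h; exact Or.inr (Or.inr (hb _ hw))
        · simp [h]
    · obtain ⟨h, Q, h1, h2, hQ, hQl, hQs⟩ := ih w w' hw hw' hww
      have hQb : ∀ z ∈ Q, z ∈ ball G U v (i+1) := by
        intro z hz
        rcases hQs z hz with rfl | rfl | h
        · exact hb _ hw
        · exact hb _ hw'
        · exact ball_sub_succ i h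
      have hxQ : x ∉ Q := fun h => (Finset.mem_sdiff.1 hx).2 (hQb _ h)
      have hyQ : y ∉ Q := fun h => (Finset.mem_sdiff.1 hy).2 (hQb _ h)
      refine ⟨h + 1, [x] ++ (Q ++ [y]), by omega, by omega, ?_, by simp; omega, ?_⟩
      · refine (IsP.single x).append (hQ.append (IsP.single y) hwy ?_) hwx.symm ?_
        · intro z hz; simp; rintro rfl; exact hyQ hz
        · intro z hz; simp at hz; subst hz; simp [hxQ, hxy]
      · intro z hz
        simp at hz
        rcases hz with h | h | h
        · exact Or.inl h
        · exact Or.inr (Or.inr (hQb z h))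
        · exact Or.inr (Or.inl h)

lemma dense_layer {k M R t : ℕ} (hα : ∀ s : Finset V, Ind G s → s.card ≤ k)
    {U : Finset V} (hU : Good G M U) {v : V} (hv : v ∈ U) (hR : 0 < R) (ht : k < t ^ 5)
    (hM : 12 * R * t ≤ M) : ∃ i < 5, R * al G (layer G U v i) < (layer G U v i).card := by
  by_contra hcon
  push Not at hcon
  set a : ℕ → ℕ := fun i => al G (ball G U v i) with ha
  have hmono : ∀ i, a i ≤ a (i+1) := fun i => al_mono (ball_sub_succ i)
  have ha0 : 1 ≤ a 0 := by
    have : ({v} : Finset V).card ≤ al G (ball G U v 0) := card_le_al (by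
      intro x hx y hy h; simp at hx hy; exact absurd (hx.trans hy.symm) h) (by simp [ball])
    simpa using this
  have ha1 : ∀ i, 1 ≤ a i := by
    intro i; induction i with
    | zero => exact ha0
    | succ i ih => exact ih.trans (hmono i)
  have hcard : ∀ i ≤ 5, (ball G U v i).card ≤ 1 + i * (R * a i) := by
    intro i
    induction i with
    | zero => intro _; simp [ball]
    | succ i ih =>
      intro hi
      have h1 := ih (by omega)
      have h2 := hcon i (by omega)
      have h3 : al G (layer G U v i) ≤ a (i+1) := al_mono Finset.sdiff_subset
      have h4 : (layer G U v i).card + (ball G U v i).card = (ball G U v (i+1)).card :=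
        Finset.card_sdiff_add_card_eq_card (ball_sub_succ i)
      have h5 : R * al G (layer G U v i) ≤ R * a (i+1) := Nat.mul_le_mul_left _ h3
      have h6 : i * (R * a i) ≤ i * (R * a (i+1)) :=
        Nat.mul_le_mul_left _ (Nat.mul_le_mul_left _ (hmono i))
      rw [add_mul]; omega
  have hgrow : ∀ i < 5, t * a i ≤ a (i+1) := by
    intro i hi
    obtain ⟨I, hI, hi1, hi2⟩ := al_attained G (ball G U v i)
    have h1 := hU.exp (hI.trans (ball_sub hv i)) hi1 (N := ball G U v (i+1))
      (hI.trans (ball_sub_succ i)) (by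
        intro w hw x hx
        rw [ball, Finset.mem_union, Finset.mem_biUnion]
        exact Or.inr ⟨w, hI hw, hx⟩) (ball_sub hv _)
    rw [hi2] at h1
    have h2 := hcard (i+1) (by omega)
    have h3 : (i+1) * (R * a (i+1)) ≤ 5 * (R * a (i+1)) := Nat.mul_le_mul_right _ (by omega)
    have h4 : 1 ≤ R * a (i+1) := Nat.mul_pos hR (ha1 _)
    have h5 : M * a i ≤ 12 * (R * a (i+1)) := by
      have : al G (ball G U v i) = a i := rfl
      rw [this] at h1
      omega
    have h6 : 12 * R * t * a i ≤ M * a i := Nat.mul_le_mul_right _ hM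
    have h7 : (12 * R) * (t * a i) ≤ (12 * R) * a (i+1) := by nlinarith
    exact Nat.le_of_mul_le_mul_left h7 (by omega)
  have hpow : ∀ i ≤ 5, t ^ i ≤ a i := by
    intro i
    induction i with
    | zero => intro _; simpa using ha0
    | succ i ih =>
      intro hi
      calc t ^ (i+1) = t * t ^ i := by ring
        _ ≤ t * a i := Nat.mul_le_mul_left _ (ih (by omega))
        _ ≤ _ := hgrow i (by omega)
  have h1 := hpow 5 le_rfl
  have h2 : a 5 ≤ k := al_le hα _
  omega

lemma small_range {k M t : ℕ} (hα : ∀ s : Finset V, Ind G s → s.card ≤ k) (hk : 0 < k)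
    {U : Finset V} (hU : Good G M U) (ht : k < t ^ 5) (hM : 12 * (40 * k) * t ≤ M)
    {ℓ : ℕ} (h1 : 19 ≤ ℓ) (h2 : ℓ ≤ 4 * k) : HasCyc G ℓ := by
  obtain ⟨v, hv⟩ := hU.1
  obtain ⟨i, hi, hd⟩ := dense_layer hα hU hv (R := 40 * k) (by omega) ht hM
  obtain ⟨X, hX, hg⟩ := good_exists (G := G) (M := 40 * k) (U0 := layer G U v i)
    (by rw [← Finset.card_pos]; omega) (by nlinarith)
  obtain ⟨x0, hx0⟩ := hg.1
  obtain ⟨W, hWX, y, hyW, hWc, hpW, hWF, hW⟩ := tri_chain hα (F := ∅) hx0 (ℓ / 2) (by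
    intro v hv; have := hg.deg hv; simp; omega)
  obtain ⟨L0, hL0, hL0l, _⟩ := hW (ℓ / 2) le_rfl (by omega)
  have hpy : x0 ≠ y := hL0.ne (by omega)
  obtain ⟨h, Q, g1, g2, hQ, hQl, hQs⟩ := fork hv i x0 y (hX hx0) (hX (hWX hyW)) hpy
  obtain ⟨L, hL, hLl, hLW⟩ := hW (ℓ - 2 * h) (by omega) (by omega)
  have := cyc_of_two_paths hL hQ.rev (by omega) (by simp; omega) (by simp; omega) (by
    intro x hx hx'
    rcases hQs x (by simpa using hx') with h | h | h
    · exact Or.inl h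
    · exact Or.inr h
    · exact absurd h (Finset.mem_sdiff.1 (hX (hWX (hLW x hx)))).2)
  convert this using 1
  simp; omega


def Reach (G : SimpleGraph V) (L : List V) (b z : V) : Prop :=
  ∃ (A S T : List V) (x s0 t0 : V), L = A ++ (S ++ T) ∧ A.getLast? = some x ∧ S.head? = some s0 ∧
    S.getLast? = some z ∧ T.head? = some t0 ∧ G.Adj x b ∧ G.Adj z b ∧ G.Adj s0 t0

lemma reach_of_idx {L : List V} {b : V} {i j : ℕ} (hij : i < j) (hj : j + 1 < L.length)
    (h1 : G.Adj L[i] b) (h2 : G.Adj L[j] b) (h3 : G.Adj L[i+1] L[j+1]) : Reach G L b L[j] := by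
  refine ⟨L.take (i+1), (L.drop (i+1)).take (j-i), L.drop (j+1), L[i], L[i+1], L[j+1],
    ?_, ?_, ?_, ?_, ?_, h1, h2, h3⟩
  · have : L.drop (j+1) = (L.drop (i+1)).drop (j-i) := by
      rw [List.drop_drop]; congr 1; omega
    rw [this, List.take_append_drop, List.take_append_drop]
  · rw [List.getLast?_take]; rw [if_neg (by omega)]; simp [List.getElem?_eq_getElem (show i < L.length by omega)]
  · rw [List.head?_take]; simp; omega
  · rw [List.getLast?_take]
    have : i + 1 + (j - i - 1) = j := by omega
    rw [if_neg (by omega)]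
    simp [this, List.getElem?_eq_getElem (show j < L.length by omega)]
  · simp

lemma reach_count {k : ℕ} (hα : ∀ s : Finset V, Ind G s → s.card ≤ k) {L : List V} {b : V}
    (hnd : L.Nodup) (D : Finset V) (hD : ∀ z ∈ D, z ∈ L ∧ G.Adj b z ∧ ¬ Reach G L b z) :
    D.card ≤ k + 1 := by
  classical
  set D1 := D.filter (fun z => L.idxOf z + 1 < L.length) with hD1
  set D2 := D.filter (fun z => ¬ (L.idxOf z + 1 < L.length)) with hD2
  have hcard : D1.card + D2.card = D.card := Finset.card_filter_add_card_filter_not _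
  have h2 : D2.card ≤ 1 := by
    rw [Finset.card_le_one]
    intro x hx y hy
    obtain ⟨hx1, hx2⟩ := Finset.mem_filter.1 hx
    obtain ⟨hy1, hy2⟩ := Finset.mem_filter.1 hy
    have e1 := List.idxOf_lt_length_of_mem (hD x hx1).1
    have e2 := List.idxOf_lt_length_of_mem (hD y hy1).1
    exact (List.idxOf_inj (hD x hx1).1).1 (by omega)
  let f : V → V := fun z => L.getD (L.idxOf z + 1) z
  have hf : ∀ z ∈ D1, ∃ h : L.idxOf z + 1 < L.length, f z = L[L.idxOf z + 1] := by
    intro z hz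
    obtain ⟨_, h⟩ := Finset.mem_filter.1 hz
    exact ⟨h, by simp [f, List.getD_eq_getElem?_getD, h]⟩
  have hinj : Set.InjOn f D1 := by
    intro x hx y hy hxy
    obtain ⟨hx1, hx2⟩ := hf x hx
    obtain ⟨hy1, hy2⟩ := hf y hy
    rw [hx2, hy2] at hxy
    have := (hnd.getElem_inj_iff).1 hxy
    exact (List.idxOf_inj (hD x (Finset.mem_filter.1 hx).1).1).1 (by omega)
  have key : ∀ x ∈ D1, ∀ y ∈ D1, L.idxOf x < L.idxOf y → ¬ G.Adj (f x) (f y) := by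
    intro x hx y hy hlt hadj
    obtain ⟨hx1, hx2⟩ := hf x hx
    obtain ⟨hy1, hy2⟩ := hf y hy
    rw [hx2, hy2] at hadj
    have gx := hD x (Finset.mem_filter.1 hx).1
    have gy := hD y (Finset.mem_filter.1 hy).1
    have ex : L[L.idxOf x] = x := List.getElem_idxOf _
    have ey : L[L.idxOf y] = y := List.getElem_idxOf _
    have := reach_of_idx (G := G) (b := b) hlt hy1 (by rw [ex]; exact gx.2.1.symm)
      (by rw [ey]; exact gy.2.1.symm) hadj
    rw [ey] at this
    exact gy.2.2 this
  have h1 : (D1.image f).card ≤ k := by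
    apply hα
    intro u hu v hv huv
    obtain ⟨x, hx, rfl⟩ := Finset.mem_image.1 hu
    obtain ⟨y, hy, rfl⟩ := Finset.mem_image.1 hv
    rcases lt_trichotomy (L.idxOf x) (L.idxOf y) with h | h | h
    · exact key x hx y hy h
    · have := (List.idxOf_inj (hD x (Finset.mem_filter.1 hx).1).1).1 h
      exact absurd (by rw [this]) huv
    · exact fun h' => key y hy x hx h h'.symm
  rw [Finset.card_image_of_injOn hinj] at h1
  omega

lemma reach_path {L B : List V} {b z : V} (h : Reach G L b z) (hc : (L ++ B).IsChain G.Adj)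
    (hB : B.getLast? = some b) :
    ∃ L' : List V, L'.Perm (L ++ B) ∧ L'.IsChain G.Adj ∧ L'.head? = L.head? ∧ L'.getLast? = some z := by
  obtain ⟨A, S, T, x, s0, t0, rfl, hA, hS0, hSz, hT0, hxb, hzb, hst⟩ := h
  refine ⟨A ++ (B.reverse ++ (T.reverse ++ S)), ?_, ?_, ?_, ?_⟩
  · rw [List.append_assoc]
    apply List.Perm.append_left
    have h1 : (B.reverse ++ (T.reverse ++ S)).Perm (B ++ (T ++ S)) :=
      (List.reverse_perm B).append ((List.reverse_perm T).append_right S)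
    refine h1.trans ?_
    refine List.perm_append_comm.trans ?_
    exact (List.perm_append_comm).append_right B
  · have hsym : ∀ {l : List V}, l.IsChain G.Adj → l.reverse.IsChain G.Adj := by
      intro l hl
      rw [List.isChain_reverse]; exact hl.imp (fun _ _ h => h.symm)
    have hTne : T ≠ [] := by rintro rfl; simp at hT0
    have hBne : B ≠ [] := by rintro rfl; simp at hB
    rw [List.isChain_append] at hc
    obtain ⟨hc1, hcB, hcc⟩ := hc
    rw [List.isChain_append, List.isChain_append] at hc1
    obtain ⟨hcA, ⟨hcS, hcT, _⟩, _⟩ := hc1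
    rw [List.isChain_append, List.isChain_append, List.isChain_append]
    refine ⟨hcA, ⟨hsym hcB, ⟨hsym hcT, hcS, ?_⟩, ?_⟩, ?_⟩
    · intro u hu v hv
      rw [List.getLast?_reverse, hT0] at hu
      rw [hS0] at hv
      simp at hu hv; subst hu; subst hv; exact hst.symm
    · intro u hu v hv
      rw [List.getLast?_reverse] at hu
      rw [List.head?_append_of_ne_nil _ (by simpa using hTne), List.head?_reverse] at hv
      refine (hcc v ?_ u hu).symm
      rw [← List.append_assoc, List.getLast?_append_of_ne_nil _ hTne]; exact hv
    · intro u hu v hv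
      rw [List.head?_append_of_ne_nil _ (by simpa using hBne), List.head?_reverse, hB] at hv
      rw [hA] at hu
      simp at hu hv; subst hu; subst hv; exact hxb
  · have hAne : A ≠ [] := by rintro rfl; simp at hA
    simp [List.head?_append_of_ne_nil _ hAne]
  · have hSne : S ≠ [] := by rintro rfl; simp at hS0
    rw [← List.append_assoc, ← List.append_assoc, List.getLast?_append_of_ne_nil _ hSne]; exact hSz

open Classical in
lemma reach_card {k m : ℕ} (hα : ∀ s : Finset V, Ind G s → s.card ≤ k) {L : List V} {b : V}
    (hnd : L.Nodup) (hm : m + k + 1 ≤ (nb G L.toFinset b).card) :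
    m ≤ (L.toFinset.filter (fun z => G.Adj b z ∧ Reach G L b z)).card := by
  have h1 := reach_count hα hnd ((nb G L.toFinset b).filter (fun z => ¬ Reach G L b z)) (by
    intro z hz
    obtain ⟨hz1, hz2⟩ := Finset.mem_filter.1 hz
    obtain ⟨hz3, hz4⟩ := mem_nb.1 hz1
    exact ⟨by simpa using hz3, hz4, hz2⟩)
  have h2 : ((nb G L.toFinset b).filter (fun z => Reach G L b z)).card +
    ((nb G L.toFinset b).filter (fun z => ¬ Reach G L b z)).card = (nb G L.toFinset b).card :=
    Finset.card_filter_add_card_filter_not _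
  have h3 : (L.toFinset.filter (fun z => G.Adj b z ∧ Reach G L b z)) =
    ((nb G L.toFinset b).filter (fun z => Reach G L b z)) := by
    ext z; simp [mem_nb, and_assoc]
  rw [h3]; omega

lemma insert_one {k : ℕ} (hα : ∀ s : Finset V, Ind G s → s.card ≤ k) {L : List V} {a b v : V}
    (hL : IsP G L a b) (hv : v ∉ L) (hm : k + 2 ≤ (nb G L.toFinset v).card) :
    ∃ L', IsP G L' a b ∧ L'.Perm (L ++ [v]) := by
  classical
  have h1 := reach_card (m := 1) hα hL.2.1 (b := v) (by omega)
  obtain ⟨z, hz⟩ := Finset.card_pos.1 h1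
  obtain ⟨_, _, A, S, T, x, s0, t0, rfl, hA, hS0, hSz, hT0, hxb, hzb, hst⟩ := Finset.mem_filter.1 hz
  obtain ⟨hc, hnd, hhd, hlt⟩ := hL
  have hperm : (A ++ (v :: (S.reverse ++ T))).Perm (A ++ (S ++ T) ++ [v]) := by
    rw [List.append_assoc]
    apply List.Perm.append_left
    refine List.Perm.trans ?_ (List.perm_append_comm (l₁ := [v]))
    exact List.Perm.cons v ((List.reverse_perm S).append_right T)
  have hTne : T ≠ [] := by rintro rfl; simp at hT0
  have hSne : S ≠ [] := by rintro rfl; simp at hS0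
  have hAne : A ≠ [] := by rintro rfl; simp at hA
  refine ⟨A ++ (v :: (S.reverse ++ T)), ⟨?_, ?_, ?_, ?_⟩, hperm⟩
  · rw [List.isChain_append, List.isChain_append] at hc
    obtain ⟨hcA, ⟨hcS, hcT, _⟩, _⟩ := hc
    rw [List.isChain_append, List.isChain_cons, List.isChain_append]
    refine ⟨hcA, ⟨?_, ?_, hcT, ?_⟩, ?_⟩
    · intro y hy
      rw [List.head?_append_of_ne_nil _ (by simpa using hSne), List.head?_reverse, hSz] at hy
      simp at hy; subst hy; exact hzb.symm
    · rw [List.isChain_reverse]; exact hcS.imp (fun _ _ h => h.symm)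
    · rw [List.getLast?_reverse, hS0, hT0]; simpa using hst
    · rw [hA]; simpa using hxb
  · rw [hperm.nodup_iff, List.nodup_append]
    refine ⟨hnd, by simp, ?_⟩
    intro x hx y hy; simp at hy; subst hy; rintro rfl; exact hv hx
  · rw [List.head?_append_of_ne_nil _ hAne] at hhd ⊢; exact hhd
  · have e : A ++ (v :: (S.reverse ++ T)) = (A ++ (v :: S.reverse)) ++ T := by simp
    rw [e, List.getLast?_append_of_ne_nil _ hTne]
    rw [← List.append_assoc, List.getLast?_append_of_ne_nil _ hTne] at hlt; exact hlt

lemma insert_many {k : ℕ} (hα : ∀ s : Finset V, Ind G s → s.card ≤ k) {a b : V} :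
    ∀ (J L : List V), IsP G L a b → (L ++ J).Nodup →
      (∀ v ∈ J, k + 2 ≤ (nb G L.toFinset v).card) →
    ∃ L', IsP G L' a b ∧ L'.Perm (L ++ J) := by
  intro J
  induction J with
  | nil => intro L hL _ _; exact ⟨L, hL, by simp⟩
  | cons v J ih =>
    intro L hL hnd hm
    have e : L ++ v :: J = (L ++ [v]) ++ J := by simp
    have hv : v ∉ L := by
      intro h
      exact List.disjoint_of_nodup_append hnd h (by simp)
    obtain ⟨L1, hL1, hp1⟩ := insert_one hα hL hv (hm v (by simp))
    have hpp : (L1 ++ J).Perm (L ++ v :: J) := by rw [e]; exact hp1.append_right J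
    obtain ⟨L', hL', hp'⟩ := ih L1 hL1 (by rw [hpp.nodup_iff]; exact hnd) (by
      intro w hw
      refine (hm w (by simp [hw])).trans (Finset.card_le_card ?_)
      intro x hx
      obtain ⟨hx1, hx2⟩ := mem_nb.1 hx
      refine mem_nb.2 ⟨?_, hx2⟩
      rw [List.mem_toFinset, hp1.mem_iff]
      simp at hx1 ⊢; exact Or.inl hx1)
    exact ⟨L', hL', hp'.trans hpp⟩


structure Gap (V : Type) where
  A : List V
  l : V
  I : List V
  h : V
  C : List V

def Gap.list (g : Gap V) : List V := g.A ++ g.l :: (g.I ++ g.h :: g.C)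

def IsGap (G : SimpleGraph V) (P : List V) (m D : ℕ) (g : Gap V) : Prop :=
  P = g.list ∧ 1 ≤ g.I.length ∧ g.I.length ≤ 3 ∧ m ≤ (nb G g.A.toFinset g.l).card ∧
    m ≤ (nb G g.A.toFinset g.h).card ∧ ∀ x ∈ g.I, D ≤ (nb G P.toFinset x).card

/-- reroutings of the initial segment -/
def QRel (G : SimpleGraph V) (g : Gap V) (w w' : V) : Prop :=
  ∃ Y : List V, Y.Perm (g.A ++ [g.l]) ∧ Y.IsChain G.Adj ∧ Y.head? = g.A.head? ∧
    Y.getLast? = some w ∧ g.A ≠ [] ∧ G.Adj g.l w ∧ G.Adj g.h w' ∧ Reach G Y g.h w'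

open Classical in
lemma QRel_card {k m q D : ℕ} (hα : ∀ s : Finset V, Ind G s → s.card ≤ k) {P : List V} {a b : V}
    (hP : IsP G P a b) {g : Gap V} (hg : IsGap G P m D g) (hm : q + k + 1 ≤ m) :
    q * q ≤ (P.toFinset.sigma (fun w => P.toFinset.filter (fun w' => QRel G g w w'))).card := by
  obtain ⟨hPg, hI1, hI2, hl, hh, hD⟩ := hg
  obtain ⟨hch, hnd, hhd, hlt⟩ := hP
  have hAP : ∀ x ∈ g.A ++ [g.l], x ∈ P := by
    intro x hx; rw [hPg]; simp [Gap.list] at hx ⊢; tauto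
  have hsub : P = (g.A ++ [g.l]) ++ (g.I ++ g.h :: g.C) := by rw [hPg]; simp [Gap.list]
  have hnd1 : (g.A ++ [g.l]).Nodup := by rw [hsub] at hnd; exact hnd.of_append_left
  have hch1 : (g.A ++ [g.l]).IsChain G.Adj := by rw [hsub] at hch; exact hch.left_of_append
  set Rw := g.A.toFinset.filter (fun z => G.Adj g.l z ∧ Reach G g.A g.l z) with hRw
  have hRwc : q ≤ Rw.card := reach_card hα hnd1.of_append_left (by omega)
  have hRwP : Rw ⊆ P.toFinset := by
    intro x hx
    have := (Finset.mem_filter.1 hx).1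
    simp at this ⊢
    exact hAP x (by simp [this])
  have hfib : ∀ w ∈ Rw, q ≤ (P.toFinset.filter (fun w' => QRel G g w w')).card := by
    intro w hw
    obtain ⟨hw1, hw2, hw3⟩ := Finset.mem_filter.1 hw
    obtain ⟨Y, hY1, hY2, hY3, hY4⟩ := reach_path hw3 hch1 (by simp)
    have hAne : g.A ≠ [] := by rintro h; rw [h] at hw1; simp at hw1
    have hc := reach_card (m := q) (k := k) (L := Y) (b := g.h) hα (by rw [hY1.nodup_iff]; exact hnd1) (by
      refine (hm.trans hh).trans (Finset.card_le_card ?_)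
      intro x hx
      obtain ⟨hx1, hx2⟩ := mem_nb.1 hx
      refine mem_nb.2 ⟨?_, hx2⟩
      rw [List.mem_toFinset, hY1.mem_iff]
      simp at hx1 ⊢; exact Or.inl hx1)
    refine hc.trans (Finset.card_le_card ?_)
    intro x hx
    obtain ⟨hx1, hx2, hx3⟩ := Finset.mem_filter.1 hx
    refine Finset.mem_filter.2 ⟨?_, Y, hY1, hY2, hY3, hY4, hAne, hw2, hx2, hx3⟩
    rw [List.mem_toFinset] at hx1 ⊢
    exact hAP x (hY1.mem_iff.1 hx1)
  rw [Finset.card_sigma]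
  calc q * q ≤ Rw.card * q := Nat.mul_le_mul_right _ hRwc
    _ = ∑ w ∈ Rw, q := by simp
    _ ≤ ∑ w ∈ Rw, (P.toFinset.filter (fun w' => QRel G g w w')).card := Finset.sum_le_sum hfib
    _ ≤ _ := Finset.sum_le_sum_of_subset hRwP

/-- two gaps with a common rerouting pair -/
lemma two_gaps {k m D : ℕ} (hα : ∀ s : Finset V, Ind G s → s.card ≤ k) {P : List V} {a b : V}
    (hP : IsP G P a b) {g g' : Gap V} (hg : IsGap G P m D g) (hg' : IsGap G P m D g')
    (hD : k + 8 ≤ D) (hsep : g.A.length + g.I.length + 1 < g'.A.length) {w w' : V}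
    (hq : QRel G g w w') (hq' : QRel G g' w w') :
    ∃ P', IsP G P' a b ∧ P'.length + 1 = P.length := by
  obtain ⟨hPg, hI1, hI2, hl, hh, hdeg⟩ := hg
  obtain ⟨hPg', hI1', hI2', hl', hh', hdeg'⟩ := hg'
  obtain ⟨Y, hY1, hY2, hY3, hY4, hAne, hlw, hhw', hR⟩ := hq
  obtain ⟨-, -, -, -, -, -, hlw2, hhw2, -⟩ := hq'
  obtain ⟨A, l, I, h, C⟩ := g
  obtain ⟨A', l', I', h', C'⟩ := g'
  simp only [Gap.list] at *
  obtain ⟨hch, hnd, hhd, hlt⟩ := hP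
  -- decompose A'
  obtain ⟨E, hE⟩ : ∃ E, A' = (A ++ l :: (I ++ [h])) ++ E := by
    have h1 : (A ++ l :: (I ++ [h])) <+: P := ⟨C, by rw [hPg]; simp⟩
    have h2 : A' <+: P := ⟨l' :: (I' ++ h' :: C'), hPg'.symm⟩
    obtain ⟨E, hE⟩ := List.prefix_of_prefix_length_le h1 h2 (by simp; omega)
    exact ⟨E, hE.symm⟩
  subst hE
  clear hPg
  have hPe : P = (A ++ [l]) ++ (I ++ ((h :: (E ++ [l'])) ++ (I' ++ (h' :: C')))) := by
    rw [hPg']; simp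
  set B0 := h :: (E ++ [l']) with hB0
  have hchP := hch
  rw [hPe] at hch
  have c1 := hch.right_of_append.right_of_append
  have cB0 : B0.IsChain G.Adj := c1.left_of_append
  have cC : (h' :: C').IsChain G.Adj := c1.right_of_append.right_of_append
  have cYB : (Y ++ B0.reverse).IsChain G.Adj := by
    rw [List.isChain_append]
    refine ⟨hY2, ?_, ?_⟩
    · rw [List.isChain_reverse]; exact cB0.imp (fun _ _ h => h.symm)
    · rw [hY4]
      have : B0.reverse.head? = some l' := by
        rw [List.head?_reverse, hB0, ← List.cons_append, List.getLast?_append_of_ne_nil _ (by simp)]; rfl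
      rw [this]; simpa using hlw2.symm
  obtain ⟨Z, hZ1, hZ2, hZ3, hZ4⟩ := reach_path hR cYB (by rw [List.getLast?_reverse, hB0]; rfl)
  have hYne : Y ≠ [] := by rintro rfl; simp at hY4
  have hZne : Z ≠ [] := by rintro rfl; simp at hZ4
  set K := Z ++ (h' :: C') with hK
  have hKp : K.Perm ((A ++ [l]) ++ (B0 ++ (h' :: C'))) := by
    rw [hK, ← List.append_assoc]
    refine List.Perm.append_right _ (hZ1.trans ?_)
    exact hY1.append (List.reverse_perm B0)
  have hKIp : (K ++ (I ++ I')).Perm P := by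
    rw [hPe]
    refine (hKp.append_right _).trans ?_
    rw [List.append_assoc]
    apply List.Perm.append_left
    -- B0 ++ H ++ (I ++ I') ~ I ++ (B0 ++ (I' ++ H))
    rw [← List.append_assoc (B0 ++ h' :: C') I I']
    refine ((List.perm_append_comm (l₁ := B0 ++ h' :: C') (l₂ := I)).append_right I').trans ?_
    rw [List.append_assoc, List.append_assoc]
    apply List.Perm.append_left
    apply List.Perm.append_left
    exact List.perm_append_comm
  have hndK : (K ++ (I ++ I')).Nodup := by rw [hKIp.nodup_iff]; exact hnd
  have hKP : IsP G K a b := by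
    refine ⟨?_, hndK.of_append_left, ?_, ?_⟩
    · rw [hK, List.isChain_append]
      refine ⟨hZ2, cC, ?_⟩
      rw [hZ4]; simpa using hhw2.symm
    · rw [hK, List.head?_append_of_ne_nil _ hZne, hZ3, hY3]
      rw [hPg'] at hhd
      simp only [List.append_assoc] at hhd
      rw [List.head?_append_of_ne_nil _ hAne] at hhd; exact hhd
    · rw [hK, List.getLast?_append_of_ne_nil _ (by simp)]
      have e : P = ((A ++ l :: (I ++ [h])) ++ E ++ l' :: I') ++ (h' :: C') := by rw [hPg']; simp
      rw [e, List.getLast?_append_of_ne_nil _ (by simp)] at hlt; exact hlt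
  have hdegK : ∀ x ∈ I ++ I', k + 2 ≤ (nb G K.toFinset x).card := by
    intro x hx
    have h1 : D ≤ (nb G P.toFinset x).card := by
      rcases List.mem_append.1 hx with h | h
      · exact hdeg x h
      · exact hdeg' x h
    have h2 : nb G P.toFinset x ⊆ nb G K.toFinset x ∪ (I ++ I').toFinset := by
      intro y hy
      obtain ⟨hy1, hy2⟩ := mem_nb.1 hy
      rw [List.mem_toFinset, ← hKIp.mem_iff, List.mem_append] at hy1
      rw [Finset.mem_union, mem_nb, List.mem_toFinset, List.mem_toFinset]
      rcases hy1 with h | h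
      · exact Or.inl ⟨h, hy2⟩
      · exact Or.inr h
    have h3 := (Finset.card_le_card h2).trans (Finset.card_union_le _ _)
    have h4 := List.toFinset_card_le (I ++ I')
    simp only [List.length_append] at h4
    omega
  have hIne : I ≠ [] := by rintro rfl; simp at hI1
  obtain ⟨i0, It, hIt⟩ := List.exists_cons_of_ne_nil hIne
  obtain ⟨P', hP', hp'⟩ := insert_many hα (It ++ I') K hKP (by
    refine hndK.sublist ?_
    apply List.Sublist.append_left
    apply List.Sublist.append_right
    rw [hIt]; simp) (by
    intro x hx
    apply hdegK
    rw [hIt]; simp at hx ⊢; tauto)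
  refine ⟨P', hP', ?_⟩
  have e1 := hp'.length_eq
  have e2 := hKIp.length_eq
  rw [hIt] at e2
  simp only [List.length_append, List.length_cons] at e1 e2 ⊢
  omega

lemma core {k m q D : ℕ} (hα : ∀ s : Finset V, Ind G s → s.card ≤ k) {P : List V} {a b : V}
    (hP : IsP G P a b) (T : Finset ℕ) (g : ℕ → Gap V) (hg : ∀ t ∈ T, IsGap G P m D (g t))
    (hsep : ∀ t ∈ T, ∀ t' ∈ T, t ≠ t' → (g t).A.length + (g t).I.length + 1 < (g t').A.length ∨
      (g t').A.length + (g t').I.length + 1 < (g t).A.length)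
    (hD : k + 8 ≤ D) (hm : q + k + 1 ≤ m) (hT : P.length * P.length < T.card * (q * q)) :
    ∃ P', IsP G P' a b ∧ P'.length + 1 = P.length := by
  classical
  set Q : ℕ → Finset (Σ _ : V, V) := fun t =>
    P.toFinset.sigma (fun w => P.toFinset.filter (fun w' => QRel G (g t) w w')) with hQ
  have hQc : ∀ t ∈ T, q * q ≤ (Q t).card := fun t ht => QRel_card hα hP (hg t ht) hm
  by_cases hdis : ∀ t ∈ T, ∀ t' ∈ T, t ≠ t' → Disjoint (Q t) (Q t')
  · exfalso
    have h1 : (T.biUnion Q).card = ∑ t ∈ T, (Q t).card := Finset.card_biUnion hdis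
    have h2 : T.biUnion Q ⊆ P.toFinset.sigma (fun _ => P.toFinset) := by
      intro x hx
      obtain ⟨t, _, hx⟩ := Finset.mem_biUnion.1 hx
      rw [hQ, Finset.mem_sigma, Finset.mem_filter] at hx
      exact Finset.mem_sigma.2 ⟨hx.1, hx.2.1⟩
    have h3 := Finset.card_le_card h2
    rw [Finset.card_sigma, Finset.sum_const, smul_eq_mul, List.toFinset_card_of_nodup hP.2.1, h1] at h3
    have h4 : T.card * (q * q) ≤ ∑ t ∈ T, (Q t).card := by
      rw [← smul_eq_mul, ← Finset.sum_const]; exact Finset.sum_le_sum hQc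
    omega
  · push Not at hdis
    obtain ⟨t, ht, t', ht', hne, hnd⟩ := hdis
    rw [Finset.not_disjoint_iff] at hnd
    obtain ⟨⟨w, w'⟩, hx, hx'⟩ := hnd
    rw [hQ, Finset.mem_sigma, Finset.mem_filter] at hx hx'
    rcases hsep t ht t' ht' hne with h | h
    · exact two_gaps hα hP (hg t ht) (hg t' ht') hD h hx.2.2 hx'.2.2
    · exact two_gaps hα hP (hg t' ht') (hg t ht) hD h hx'.2.2 hx.2.2


def Gap.rev (g : Gap V) : Gap V := ⟨g.C.reverse, g.h, g.I.reverse, g.l, g.A.reverse⟩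

lemma isGap_of {P : List V} {m D : ℕ} {A I C : List V} {l h : V}
    (hP : P = A ++ l :: (I ++ h :: C)) (h1 : 1 ≤ I.length) (h2 : I.length ≤ 3)
    (hI : ∀ x ∈ I, D ≤ (nb G P.toFinset x).card)
    (hLR : (m ≤ (nb G A.toFinset l).card ∧ m ≤ (nb G A.toFinset h).card) ∨
      (m ≤ (nb G C.toFinset l).card ∧ m ≤ (nb G C.toFinset h).card)) :
    IsGap G P m D ⟨A, l, I, h, C⟩ ∨ IsGap G P.reverse m D (Gap.rev ⟨A, l, I, h, C⟩) := by
  rcases hLR with ⟨g1, g2⟩ | ⟨g1, g2⟩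
  · exact Or.inl ⟨hP, h1, h2, g1, g2, hI⟩
  · refine Or.inr ⟨?_, ?_, ?_, ?_, ?_, ?_⟩
    · rw [hP]; simp [Gap.rev, Gap.list]
    · simpa [Gap.rev] using h1
    · simpa [Gap.rev] using h2
    · simpa [Gap.rev] using g2
    · simpa [Gap.rev] using g1
    · simpa [Gap.rev] using hI

lemma nb_mono {A B : Finset V} (h : A ⊆ B) (v : V) : (nb G A v).card ≤ (nb G B v).card := by
  apply Finset.card_le_card
  intro x hx
  exact mem_nb.2 ⟨h (mem_nb.1 hx).1, (mem_nb.1 hx).2⟩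

lemma per_block {P : List V} {m D r : ℕ} (hr : 5 * r + 4 < P.length) (hD : 2 * m + 5 ≤ D)
    (hdeg : ∀ i v, P[i]? = some v → 5 * r ≤ i → i < 5 * r + 5 → D ≤ (nb G P.toFinset v).card) :
    ∃ g : Gap V, 5 * r ≤ g.A.length ∧ g.A.length + g.I.length + 1 ≤ 5 * r + 4 ∧ P = g.list ∧
      (IsGap G P m D g ∨ IsGap G P.reverse m D g.rev) := by
  obtain ⟨A, v0, v1, v2, v3, v4, C, hA, hP⟩ : ∃ A v0 v1 v2 v3 v4 C, A.length = 5 * r ∧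
      P = A ++ v0 :: v1 :: v2 :: v3 :: v4 :: C := by
    have h1 : P = P.take (5 * r) ++ P.drop (5 * r) := by simp
    have h2 : 5 ≤ (P.drop (5 * r)).length := by simp; omega
    match hd : P.drop (5 * r), h2 with
    | v0 :: v1 :: v2 :: v3 :: v4 :: C, _ =>
      exact ⟨P.take (5 * r), v0, v1, v2, v3, v4, C, by simp; omega, by rw [← hd]; exact h1⟩
  have d0 : D ≤ (nb G P.toFinset v0).card := hdeg (5 * r) v0 (by rw [hP, ← hA]; simp) le_rfl (by omega)
  have d1 : D ≤ (nb G P.toFinset v1).card := hdeg (5 * r + 1) v1 (by rw [hP, ← hA]; simp) (by omega) (by omega)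
  have d2 : D ≤ (nb G P.toFinset v2).card := hdeg (5 * r + 2) v2 (by rw [hP, ← hA]; simp) (by omega) (by omega)
  have d3 : D ≤ (nb G P.toFinset v3).card := hdeg (5 * r + 3) v3 (by rw [hP, ← hA]; simp) (by omega) (by omega)
  have d4 : D ≤ (nb G P.toFinset v4).card := hdeg (5 * r + 4) v4 (by rw [hP, ← hA]; simp) (by omega) (by omega)
  have typ : ∀ v, D ≤ (nb G P.toFinset v).card →
      m ≤ (nb G A.toFinset v).card ∨ m ≤ (nb G C.toFinset v).card := by
    intro v hv
    have h1 : nb G P.toFinset v ⊆ (nb G A.toFinset v ∪ nb G C.toFinset v) ∪ [v0, v1, v2, v3, v4].toFinset := by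
      intro x hx
      obtain ⟨hx1, hx2⟩ := mem_nb.1 hx
      rw [List.mem_toFinset, hP] at hx1
      simp only [Finset.mem_union, mem_nb, List.mem_toFinset]
      simp at hx1 ⊢
      tauto
    have h2 := Finset.card_le_card h1
    have h3 := Finset.card_union_le (nb G A.toFinset v ∪ nb G C.toFinset v) [v0, v1, v2, v3, v4].toFinset
    have h4 := Finset.card_union_le (nb G A.toFinset v) (nb G C.toFinset v)
    have h5 := List.toFinset_card_le [v0, v1, v2, v3, v4]
    simp only [List.length_cons, List.length_nil] at h5
    omega
  have hAm : ∀ v, (nb G A.toFinset v).card ≤ (nb G (A ++ [v0, v1]).toFinset v).card := fun v =>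
    nb_mono (by intro x; simp; tauto) v
  have hCm : ∀ v, (nb G C.toFinset v).card ≤ (nb G (v3 :: v4 :: C).toFinset v).card := fun v =>
    nb_mono (by intro x; simp; tauto) v
  have pick : ∀ {p q : V → Prop}, (p v0 ∨ q v0) → (p v2 ∨ q v2) → (p v4 ∨ q v4) →
      ((p v0 ∧ p v2) ∨ (q v0 ∧ q v2)) ∨ ((p v0 ∧ p v4) ∨ (q v0 ∧ q v4)) ∨
        ((p v2 ∧ p v4) ∨ (q v2 ∧ q v4)) := by
    intro p q h0 h2 h4; tauto
  rcases pick (p := fun v => m ≤ (nb G A.toFinset v).card)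
    (q := fun v => m ≤ (nb G C.toFinset v).card) (typ v0 d0) (typ v2 d2) (typ v4 d4) with h | h | h
  · refine ⟨⟨A, v0, [v1], v2, v3 :: v4 :: C⟩, by simp; omega, by simp; omega, hP, ?_⟩
    refine isGap_of hP (by simp) (by simp) (by simpa using d1) ?_
    exact h.imp id (fun h => ⟨h.1.trans (hCm _), h.2.trans (hCm _)⟩)
  · refine ⟨⟨A, v0, [v1, v2, v3], v4, C⟩, by simp; omega, by simp; omega, hP, ?_⟩
    refine isGap_of hP (by simp) (by simp) ?_ h
    intro x hx; simp at hx; rcases hx with rfl | rfl | rfl <;> assumption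
  · have hP' : P = (A ++ [v0, v1]) ++ v2 :: ([v3] ++ v4 :: C) := by rw [hP]; simp
    refine ⟨⟨A ++ [v0, v1], v2, [v3], v4, C⟩, by simp; omega, by simp; omega, hP', ?_⟩
    refine isGap_of hP' (by simp) (by simp) (by simpa using d3) ?_
    exact h.imp (fun h => ⟨h.1.trans (hAm _), h.2.trans (hAm _)⟩) id

lemma arith1 {n k D q T : ℕ} (hk : 0 < k) (hn : 1000000 * k ^ 2 ≤ n) (hD1 : 40 * k * D ≤ n)
    (hD2 : n < 40 * k * (D + 1)) (hq : 2 * D ≤ 5 * q) (hT : n ≤ 20 * T) : n * n < T * (q * q) := by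
  have h1 : 25000 * k < D + 1 := by
    have : 40 * k * (25000 * k) < 40 * k * (D + 1) := by nlinarith
    exact Nat.lt_of_mul_lt_mul_left this
  have h2 : n ≤ 41 * (k * D) := by nlinarith
  have h3 : 4 * (D * D) ≤ 25 * (q * q) := by nlinarith
  have h4 : 500 * n < 4 * (D * D) := by nlinarith
  have hn0 : 0 < n := by have : 0 < k ^ 2 := by positivity
                         omega
  have h5 : 500 * (n * n) < n * (4 * (D * D)) := by nlinarith
  have h6 : n * (4 * (D * D)) ≤ (20 * T) * (25 * (q * q)) := Nat.mul_le_mul hT h3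
  nlinarith

lemma descent {k : ℕ} (hα : ∀ s : Finset V, Ind G s → s.card ≤ k) (hk : 0 < k) {P : List V} {a b : V}
    (hP : IsP G P a b) (hn : 1000000 * k ^ 2 ≤ P.length) :
    ∃ P', IsP G P' a b ∧ P'.length + 1 = P.length := by
  classical
  set n := P.length with hnn
  set D := n / (40 * k) with hDdef
  have hD1 : 40 * k * D ≤ n := Nat.mul_div_le n (40 * k)
  have hD2 : n < 40 * k * (D + 1) := Nat.lt_mul_div_succ n (by omega)
  have hDk : 25000 * k < D + 1 := by
    have : 40 * k * (25000 * k) < 40 * k * (D + 1) := by nlinarith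
    exact Nat.lt_of_mul_lt_mul_left this
  set bad := P.toFinset.filter (fun v => (nb G P.toFinset v).card < D) with hbad
  have hbadc : bad.card < (2 * D + 2) * k := by
    by_contra hcon
    push Not at hcon
    have ha := al_le hα bad
    have hpos : 0 < (2 * D + 2) * k := by positivity
    obtain ⟨U, hU, hg⟩ := good_exists (G := G) (M := 2 * D + 2) (U0 := bad)
      (by rw [← Finset.card_pos]; omega) (by nlinarith)
    obtain ⟨v, hv⟩ := hg.1
    have h1 := hg.deg hv
    have h2 := (Finset.mem_filter.1 (hU hv)).2
    have h3 : (nb G U v).card ≤ (nb G P.toFinset v).card :=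
      nb_mono (hU.trans (Finset.filter_subset _ _)) v
    omega
  set N := n / 5 with hN
  set BB := bad.image (fun v => P.idxOf v / 5) with hBB
  set Gd := Finset.range N \ BB with hGd
  have hGdc : N ≤ Gd.card + bad.card := by
    have h1 := Finset.le_card_sdiff BB (Finset.range N)
    have h2 : BB.card ≤ bad.card := Finset.card_image_le
    rw [← hGd] at h1
    simp only [Finset.card_range] at h1
    omega
  set m := (D - 5) / 2 with hm
  have hblock : ∀ r ∈ Gd, ∃ g : Gap V, 5 * r ≤ g.A.length ∧ g.A.length + g.I.length + 1 ≤ 5 * r + 4 ∧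
      P = g.list ∧ (IsGap G P m D g ∨ IsGap G P.reverse m D g.rev) := by
    intro r hr
    obtain ⟨hr1, hr2⟩ := Finset.mem_sdiff.1 hr
    rw [Finset.mem_range] at hr1
    apply per_block (by omega) (by omega)
    intro i v hiv h1 h2
    by_contra hlt
    push Not at hlt
    obtain ⟨hi, rfl⟩ := List.getElem?_eq_some_iff.1 hiv
    apply hr2
    rw [hBB, Finset.mem_image]
    refine ⟨P[i], Finset.mem_filter.2 ⟨by simp, hlt⟩, ?_⟩
    rw [List.Nodup.idxOf_getElem hP.2.1]
    omega
  have hinh : Nonempty (Gap V) := ⟨⟨[], a, [], a, []⟩⟩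
  choose! g hg1 hg2 hg3 hg4 using hblock
  set T1 := Gd.filter (fun r => IsGap G P m D (g r)) with hT1
  set T2 := Gd.filter (fun r => ¬ IsGap G P m D (g r)) with hT2
  have hTc : T1.card + T2.card = Gd.card := Finset.card_filter_add_card_filter_not _
  have hGn : 2 * n ≤ 20 * Gd.card := by
    have e1 : 20 * ((2 * D + 2) * k) = 40 * k * D + 40 * k := by ring
    have e2 : k ≤ k ^ 2 := by nlinarith
    omega
  have hqq : 2 * D ≤ 5 * (m - k - 1) := by omega
  by_cases hcase : n ≤ 20 * T1.card
  · refine core hα hP T1 g (fun t ht => (Finset.mem_filter.1 ht).2) ?_ (by omega) (q := m - k - 1)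
      (by omega) (arith1 hk hn hD1 hD2 hqq hcase)
    intro t ht t' ht' hne
    have ht := (Finset.mem_filter.1 ht).1
    have ht' := (Finset.mem_filter.1 ht').1
    have a1 := hg1 t ht
    have a2 := hg2 t ht
    have b1 := hg1 t' ht'
    have b2 := hg2 t' ht'
    omega
  · have hcase2 : n ≤ 20 * T2.card := by omega
    have hlen : P.reverse.length = n := by simp [hnn]
    obtain ⟨P', hP', hl'⟩ := core hα hP.rev T2 (fun t => (g t).rev) (m := m) (D := D) (q := m - k - 1)
      (by
        intro t ht
        obtain ⟨ht1, ht2⟩ := Finset.mem_filter.1 ht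
        exact (hg4 t ht1).resolve_left ht2)
      (by
        intro t ht t' ht' hne
        have ht := (Finset.mem_filter.1 ht).1
        have ht' := (Finset.mem_filter.1 ht').1
        have a1 := hg1 t ht
        have a2 := hg2 t ht
        have b1 := hg1 t' ht'
        have b2 := hg2 t' ht'
        have a3 := congrArg List.length (hg3 t ht)
        have b3 := congrArg List.length (hg3 t' ht')
        simp only [Gap.list, List.length_append, List.length_cons] at a3 b3
        simp only [Gap.rev, List.length_reverse]
        omega) (by omega) (by omega) (by rw [hlen]; exact arith1 hk hn hD1 hD2 hqq hcase2)
    exact ⟨P'.reverse, hP'.rev, by simpa [hnn] using hl'⟩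

lemma descent_all {k : ℕ} (hα : ∀ s : Finset V, Ind G s → s.card ≤ k) (hk : 0 < k) {a b : V} {ℓ : ℕ}
    (hℓ : 1000000 * k ^ 2 ≤ ℓ) : ∀ (d : ℕ) (P : List V), IsP G P a b → P.length = ℓ + d →
    ∃ P', IsP G P' a b ∧ P'.length = ℓ := by
  intro d
  induction d with
  | zero => intro P hP h; exact ⟨P, hP, h⟩
  | succ d ih =>
    intro P hP h
    obtain ⟨P', hP', hl⟩ := descent hα hk hP (by omega)
    exact ih P' hP' (by omega)


lemma exists_t {k n : ℕ} (hk : 0 < k) (hn : (10000000 : ℝ) * (k : ℝ) ^ ((11 : ℝ) / 5) ≤ (n : ℝ)) :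
    ∃ t : ℕ, 0 < t ∧ k < t ^ 5 ∧ 5000000 * (k ^ 2 * t) ≤ n := by
  have hk1 : (1 : ℝ) ≤ (k : ℝ) := by exact_mod_cast hk
  set x : ℝ := (k : ℝ) ^ ((1 : ℝ) / 5) with hx
  have hx1 : 1 ≤ x := Real.one_le_rpow hk1 (by norm_num)
  have hx5 : x ^ 5 = k := by
    rw [hx, ← Real.rpow_natCast, ← Real.rpow_mul (by linarith)]; norm_num
  have hx11 : (k : ℝ) ^ ((11 : ℝ) / 5) = (k : ℝ) ^ 2 * x := by
    rw [hx, ← Real.rpow_natCast, ← Real.rpow_add (by linarith)]; norm_num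
  refine ⟨⌊x⌋₊ + 1, by omega, ?_, ?_⟩
  · have h1 : x < ((⌊x⌋₊ + 1 : ℕ) : ℝ) := by push_cast; exact Nat.lt_floor_add_one x
    have h2 : x ^ 5 < ((⌊x⌋₊ + 1 : ℕ) : ℝ) ^ 5 := by gcongr
    rw [hx5] at h2
    exact_mod_cast h2
  · have h1 : ((⌊x⌋₊ + 1 : ℕ) : ℝ) ≤ 2 * x := by
      push_cast
      have := Nat.floor_le (show 0 ≤ x by linarith)
      linarith
    have h2 : (k : ℝ) ^ 2 * ((⌊x⌋₊ + 1 : ℕ) : ℝ) ≤ (k : ℝ) ^ 2 * (2 * x) := by gcongr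
    rw [hx11] at hn
    have h3 : (5000000 : ℝ) * ((k : ℝ) ^ 2 * ((⌊x⌋₊ + 1 : ℕ) : ℝ)) ≤ n := by linarith
    exact_mod_cast h3

lemma main {k : ℕ} (hk : 0 < k) [Fintype V] (hG : G.IsHamiltonian)
    (hα : ∀ s : Finset V, Ind G s → s.card ≤ k)
    (hn : (10000000 : ℝ) * (k : ℝ) ^ ((11 : ℝ) / 5) ≤ (Fintype.card V : ℝ)) {ℓ : ℕ} (h3 : 3 ≤ ℓ)
    (hℓ : ℓ ≤ Fintype.card V) : HasCyc G ℓ := by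
  obtain ⟨t, ht0, ht, htn⟩ := exists_t hk hn
  have hk2 : k ≤ k ^ 2 := by nlinarith
  have hk2t : k ^ 2 ≤ k ^ 2 * t := Nat.le_mul_of_pos_right _ ht0
  have hkt : k ≤ k * t := Nat.le_mul_of_pos_right _ ht0
  obtain ⟨P, a, b, hP, hlen, hba⟩ := ham_list hG (by omega)
  by_cases hbig : 1000000 * k ^ 2 ≤ ℓ
  · obtain ⟨P', hP', hl⟩ := descent_all hα hk hbig (P.length - ℓ) P hP (by omega)
    rw [← hl]
    exact hP'.close (by omega) hba
  set n := Fintype.card V with hnn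
  set A0 := P.take (n / 2) with hA0
  set B0 := P.drop (n / 2) with hB0
  have hAB : A0 ++ B0 = P := List.take_append_drop _ _
  have hA0l : A0.length = n / 2 := by simp [hA0]; omega
  have hB0l : B0.length = n - n / 2 := by simp [hB0]; omega
  have hA0nd : A0.Nodup := by
    have := hP.2.1; rw [← hAB] at this; exact this.of_append_left
  have hSc : A0.toFinset.card = n / 2 := by rw [List.toFinset_card_of_nodup hA0nd, hA0l]
  have ha := al_le hα A0.toFinset
  obtain ⟨U, hUA, hU⟩ := good_exists (G := G) (M := 12 * (40 * k) * t) (U0 := A0.toFinset)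
    (by rw [← Finset.card_pos]; omega) (by
      have e1 : 2 * (12 * (40 * k) * t) * al G A0.toFinset ≤ 2 * (12 * (40 * k) * t) * k :=
        Nat.mul_le_mul_left _ ha
      have e2 : 2 * (12 * (40 * k) * t) * k = 960 * (k ^ 2 * t) := by ring
      rw [hSc]
      omega)
  have hMe : 12 * (40 * k) * t = 480 * (k * t) := by ring
  by_cases hmid : 4 * k ≤ ℓ
  · exact mid_range hα hk (A0 := A0) (B0 := B0) (by rw [hAB]; exact hP) hba
      (by intro h; rw [h] at hB0l; simp at hB0l; omega) hU
      (fun x hx => by simpa using hUA hx) (by omega) hmid (by omega)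
  · by_cases ht18 : ℓ ≤ 18
    · exact tiny_range hα hk hU (by omega) h3 ht18
    · exact small_range hα hk hU ht le_rfl (by omega) (by omega)
end PC

/-- There exists a constant `c > 0` such that for every positive integer `k`,
every Hamiltonian graph `G` on `n` vertices with `n ≥ c·k^(11/5)` and independence number at
most `k` is pancyclic, i.e. `G` contains a cycle of every length `ℓ` with `3 ≤ ℓ ≤ n`. -/
theorem statement0 :
    ∃ c : ℝ, 0 < c ∧
      ∀ (k : ℕ), 0 < k →
        ∀ (V : Type) [Fintype V] [DecidableEq V] (G : SimpleGraph V),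
          G.IsHamiltonian →
          (∀ s : Finset V, (∀ u ∈ s, ∀ v ∈ s, u ≠ v → ¬ G.Adj u v) → s.card ≤ k) →
          c * (k : ℝ) ^ ((11 : ℝ) / 5) ≤ (Fintype.card V : ℝ) →
          ∀ ℓ : ℕ, 3 ≤ ℓ → ℓ ≤ Fintype.card V →
            ∃ (u : V) (w : G.Walk u u), w.IsCycle ∧ w.length = ℓ := by
  refine ⟨10000000, by norm_num, ?_⟩
  intro k hk V _ _ G hG hα hn ℓ h3 hℓ
  exact PC.main hk hG hα hn h3 hℓ
end

section
/- There exists a constant c > 0 such that for every positive integer k the following holds: if G is a Hamiltonian graph on n vertices with n ≥ c·k^{11/5} and independence number at most k, and W is a set of at most 20k² vertices of G, then G contains a cycle of length n−1 passing through all vertices of W. -/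
namespace HamCyc

/-- Cyclic lists. -/
def CycL {V : Type} (G : SimpleGraph V) (l : List V) : Prop :=
  3 ≤ l.length ∧ l.Nodup ∧ l.IsChain G.Adj ∧ ∀ x ∈ l.getLast?, ∀ y ∈ l.head?, G.Adj x y

/-- Cyclic parametrisations. -/
structure CF {V : Type} (G : SimpleGraph V) (m : ℕ) (f : ℕ → V) : Prop where
  pos : 3 ≤ m
  adj : ∀ i, G.Adj (f i) (f (i + 1))
  per : ∀ i, f (i + m) = f i
  inj : ∀ i < m, ∀ j < m, f i = f j → i = j

lemma CF.modEq {V : Type} {G : SimpleGraph V} {m : ℕ} {f : ℕ → V} (h : CF G m f) (i : ℕ) :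
    f i = f (i % m) := by
  have key : ∀ q r, f (r + q * m) = f r := by
    intro q
    induction q with
    | zero => intro r; simp
    | succ q ih =>
      intro r
      rw [Nat.succ_mul, ← add_assoc, h.per, ih]
  conv_lhs => rw [← Nat.mod_add_div i m, mul_comm m]
  exact key _ _

lemma CF.injW {V : Type} {G : SimpleGraph V} {m : ℕ} {f : ℕ → V} (h : CF G m f) (x i j : ℕ)
    (hi : x ≤ i) (hi' : i < x + m) (hj : x ≤ j) (hj' : j < x + m) (e : f i = f j) : i = j := by
  have hm := h.pos
  have h1 := h.inj (i % m) (Nat.mod_lt _ (by omega)) (j % m) (Nat.mod_lt _ (by omega))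
    (by rw [← h.modEq, ← h.modEq, e])
  rcases le_total i j with hij | hij
  · have h2 : m ∣ j - i := (Nat.modEq_iff_dvd' hij).1 h1
    have := Nat.eq_zero_of_dvd_of_lt h2 (by omega)
    omega
  · have h2 : m ∣ i - j := (Nat.modEq_iff_dvd' hij).1 h1.symm
    have := Nat.eq_zero_of_dvd_of_lt h2 (by omega)
    omega

lemma CF.window {V : Type} {G : SimpleGraph V} {m : ℕ} {f : ℕ → V} (h : CF G m f) (x i : ℕ) :
    ∃ j, x ≤ j ∧ j < x + m ∧ f j = f i := by
  have hm := h.pos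
  refine ⟨x + (i + (m - 1) * x) % m, by omega, ?_, ?_⟩
  · have := Nat.mod_lt (i + (m - 1) * x) (show m > 0 by omega)
    omega
  · rw [h.modEq, h.modEq i]
    congr 1
    rw [Nat.add_mod_mod]
    have : x + (i + (m - 1) * x) = i + m * x := by
      obtain ⟨r, rfl⟩ : ∃ r, m = r + 1 := ⟨m - 1, by omega⟩
      simp; ring
    rw [this]; simp

lemma CycL.toCF {V : Type} {G : SimpleGraph V} {l : List V} (h : CycL G l) :
    ∃ f, CF G l.length f ∧ ∀ v, v ∈ l ↔ ∃ i < l.length, f i = v := by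
  obtain ⟨h3, hnd, hch, hcl⟩ := h
  have hm : 0 < l.length := by omega
  refine ⟨fun i => l[i % l.length]'(Nat.mod_lt _ hm), ⟨h3, ?_, ?_, ?_⟩, ?_⟩
  · intro i
    have hlt := Nat.mod_lt i hm
    by_cases hc : i % l.length + 1 < l.length
    · have : (i + 1) % l.length = i % l.length + 1 := by
        rw [Nat.add_mod, Nat.mod_eq_of_lt (a := 1) (by omega), Nat.mod_eq_of_lt hc]
      simp only [this]
      exact List.isChain_iff_getElem.1 hch _ hc
    · have h1 : i % l.length = l.length - 1 := by omega
      have : (i + 1) % l.length = 0 := by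
        rw [Nat.add_mod, Nat.mod_eq_of_lt (a := 1) (by omega), h1, Nat.sub_add_cancel hm,
          Nat.mod_self]
      simp only [this, h1]
      apply hcl
      · simp [List.getLast?_eq_getElem?]
      · simp [List.head?_eq_getElem?]
  · intro i; simp
  · intro i hi j hj e
    have := (List.Nodup.getElem_inj_iff hnd).1 e
    rwa [Nat.mod_eq_of_lt hi, Nat.mod_eq_of_lt hj] at this
  · intro v
    rw [List.mem_iff_getElem]
    constructor
    · rintro ⟨i, hi, rfl⟩
      exact ⟨i, hi, by simp [Nat.mod_eq_of_lt hi]⟩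
    · rintro ⟨i, hi, rfl⟩
      exact ⟨i % l.length, Nat.mod_lt _ hm, rfl⟩

/-- Segments of indices. -/
def seg (a b : ℕ) : List ℕ := List.range' a (b + 1 - a)

lemma mem_seg {a b i : ℕ} : i ∈ seg a b ↔ a ≤ i ∧ i ≤ b := by
  simp [seg, List.mem_range'_1]; omega

lemma seg_nodup (a b : ℕ) : (seg a b).Nodup := List.nodup_range'

lemma seg_length (a b : ℕ) : (seg a b).length = b + 1 - a := by simp [seg]

lemma seg_head {a b : ℕ} (h : a ≤ b) : (seg a b).head? = some a := by
  have : b + 1 - a ≠ 0 := by omega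
  simp [seg, List.head?_range', this]

lemma seg_last {a b : ℕ} (h : a ≤ b) : (seg a b).getLast? = some b := by
  simp [seg, List.getLast?_range']; omega

lemma seg_ne {a b : ℕ} (h : a ≤ b) : seg a b ≠ [] := by
  intro e
  have := seg_length a b
  rw [e] at this; simp at this; omega

lemma seg_chain {V : Type} {G : SimpleGraph V} {m : ℕ} {f : ℕ → V} (h : CF G m f) (a b : ℕ) :
    (seg a b).IsChain (fun i j => G.Adj (f i) (f j)) := by
  rw [List.isChain_iff_getElem]
  intro i hi
  simp [seg]
  exact h.adj _

lemma seg_chain' {V : Type} {G : SimpleGraph V} {m : ℕ} {f : ℕ → V} (h : CF G m f) (a b : ℕ) :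
    (seg a b).IsChain (fun i j => G.Adj (f j) (f i)) :=
  (seg_chain h a b).imp (fun _ _ h => h.symm)

lemma CycL.ofIdx {V : Type} {G : SimpleGraph V} {m : ℕ} {f : ℕ → V} (h : CF G m f)
    (x : ℕ) (I : List ℕ) (hnd : I.Nodup) (hw : ∀ i ∈ I, x ≤ i ∧ i < x + m) (h3 : 3 ≤ I.length)
    (hch : I.IsChain (fun i j => G.Adj (f i) (f j)))
    (hcl : ∀ i ∈ I.getLast?, ∀ j ∈ I.head?, G.Adj (f i) (f j)) : CycL G (I.map f) := by
  refine ⟨by simpa using h3, ?_, ?_, ?_⟩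
  · refine List.Nodup.map_on ?_ hnd
    intro i hi j hj e
    exact h.injW x i j (hw i hi).1 (hw i hi).2 (hw j hj).1 (hw j hj).2 e
  · rw [List.isChain_map]; exact hch
  · intro u hu v hv
    simp only [List.getLast?_map, List.head?_map, Option.mem_def, Option.map_eq_some_iff] at hu hv
    obtain ⟨i, hi, rfl⟩ := hu
    obtain ⟨j, hj, rfl⟩ := hv
    exact hcl i hi j hj

/-- Absorption of one vertex. -/
lemma absorb {V : Type} [Fintype V] [DecidableEq V] {G : SimpleGraph V} [DecidableRel G.Adj] {k : ℕ}
    (hα : ∀ s : Finset V, (∀ u ∈ s, ∀ v ∈ s, u ≠ v → ¬ G.Adj u v) → s.card ≤ k)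
    (l : List V) (hl : CycL G l) (v : V) (hv : v ∉ l)
    (hd : k < (Finset.univ.filter (fun u => u ∈ l ∧ G.Adj v u)).card) :
    ∃ l', CycL G l' ∧ ∀ u, u ∈ l' ↔ u ∈ l ∨ u = v := by
  obtain ⟨f, hf, hmem⟩ := hl.toCF
  set m := l.length with hm
  set T := (Finset.range m).filter (fun i => G.Adj v (f i)) with hT
  have hTk : k < T.card := by
    refine lt_of_lt_of_le hd ?_
    have : Finset.univ.filter (fun u => u ∈ l ∧ G.Adj v u) ⊆ T.image f := by
      intro u hu
      simp only [Finset.mem_filter, Finset.mem_univ, true_and] at hu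
      obtain ⟨i, hi, rfl⟩ := (hmem u).1 hu.1
      exact Finset.mem_image_of_mem f (by simp [hT, hi, hu.2])
    exact (Finset.card_le_card this).trans Finset.card_image_le
  have hinj : Set.InjOn (fun i => f (i + 1)) (T : Set ℕ) := by
    intro i hi j hj e
    simp only [hT, Finset.coe_filter, Finset.mem_range, Set.mem_ofPred_eq] at hi hj
    have := hf.injW 1 (i + 1) (j + 1) (by omega) (by omega) (by omega) (by omega) e
    omega
  have hex : ∃ i ∈ T, ∃ j ∈ T, i < j ∧ G.Adj (f (i + 1)) (f (j + 1)) := by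
    by_contra hcon
    push Not at hcon
    have := hα (T.image (fun i => f (i + 1))) (by
      intro a ha b hb hab hadj
      obtain ⟨i, hi, rfl⟩ := Finset.mem_image.1 ha
      obtain ⟨j, hj, rfl⟩ := Finset.mem_image.1 hb
      rcases lt_trichotomy i j with h | h | h
      · exact hcon i hi j hj h hadj
      · subst h; exact hab rfl
      · exact hcon j hj i hi h hadj.symm)
    rw [Finset.card_image_of_injOn hinj] at this
    omega
  obtain ⟨i, hi, j, hj, hij, hadj⟩ := hex
  simp only [hT, Finset.mem_filter, Finset.mem_range] at hi hj
  have hmemI : ∀ u, u ∈ ((seg (i + 1) j).reverse ++ seg (j + 1) (i + m)).map f ↔ u ∈ l := by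
    intro u
    rw [hmem]
    simp only [List.mem_map, List.mem_append, List.mem_reverse, mem_seg]
    constructor
    · rintro ⟨p, hp, rfl⟩
      exact ⟨p % m, Nat.mod_lt _ (by omega), (hf.modEq p).symm⟩
    · rintro ⟨p, hp, rfl⟩
      obtain ⟨q, h1, h2, h3⟩ := hf.window (i + 1) p
      exact ⟨q, by omega, h3⟩
  refine ⟨v :: ((seg (i + 1) j).reverse ++ seg (j + 1) (i + m)).map f, ⟨?_, ?_, ?_, ?_⟩, ?_⟩
  · have := hf.pos
    simp [seg_length]; omega
  · rw [List.nodup_cons]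
    refine ⟨by rw [hmemI]; exact hv, ?_⟩
    refine List.Nodup.map_on ?_ ?_
    · intro p hp q hq e
      simp only [List.mem_append, List.mem_reverse, mem_seg] at hp hq
      exact hf.injW (i + 1) p q (by omega) (by omega) (by omega) (by omega) e
    · rw [List.nodup_append']
      refine ⟨List.nodup_reverse.2 (seg_nodup _ _), seg_nodup _ _, ?_⟩
      intro p hp hq
      simp only [List.mem_reverse, mem_seg] at hp hq
      omega
  · rw [List.map_append, ← List.singleton_append, List.isChain_append, List.isChain_append]
    refine ⟨by simp, ⟨?_, ?_, ?_⟩, ?_⟩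
    · rw [List.isChain_map, List.isChain_reverse]
      exact seg_chain' hf _ _
    · rw [List.isChain_map]; exact seg_chain hf _ _
    · simp [seg_head (show i + 1 ≤ j by omega), seg_head (show j + 1 ≤ i + m by omega)]
      exact hadj
    · simp [seg_last (show i + 1 ≤ j by omega)]
      exact hj.2
  · have := seg_last (show j + 1 ≤ i + m by omega)
    intro a ha b hb
    rw [← List.singleton_append, List.map_append, List.getLast?_append, List.getLast?_append] at ha
    simp [this, hf.per] at ha hb
    subst ha hb
    exact hi.2.symm
  · intro u
    rw [List.mem_cons, hmemI]; tauto

lemma absorb_all {V : Type} [Fintype V] [DecidableEq V] {G : SimpleGraph V} [DecidableRel G.Adj]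
    {k M : ℕ} (u0 : V)
    (hα : ∀ s : Finset V, (∀ u ∈ s, ∀ v ∈ s, u ≠ v → ¬ G.Adj u v) → s.card ≤ k) :
    ∀ (t : ℕ) (l : List V), CycL G l → u0 ∉ l →
    (Finset.univ.filter (fun u => u ∉ l)).card = t + 1 → t + 1 ≤ M →
    (∀ v ∉ l, k + M < G.degree v) → ∃ l', CycL G l' ∧ ∀ v, v ∈ l' ↔ v ≠ u0 := by
  intro t
  induction t with
  | zero =>
    intro l hl hu hc _ _
    refine ⟨l, hl, ?_⟩
    intro v
    constructor
    · rintro h rfl; exact hu h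
    · intro h
      by_contra hvl
      obtain ⟨a, ha⟩ := Finset.card_eq_one.1 hc
      have h1 : v ∈ Finset.univ.filter (fun u => u ∉ l) := by simp [hvl]
      have h2 : u0 ∈ Finset.univ.filter (fun u => u ∉ l) := by simp [hu]
      rw [ha, Finset.mem_singleton] at h1 h2
      exact h (h1.trans h2.symm)
  | succ t ih =>
    intro l hl hu hc hM hdeg
    have h2 : u0 ∈ Finset.univ.filter (fun u => u ∉ l) := by simp [hu]
    obtain ⟨v, hv, hvu⟩ := Finset.exists_mem_ne (by omega : 1 < (Finset.univ.filter (fun u => u ∉ l)).card) u0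
    have hvl : v ∉ l := by simpa using hv
    have hd : k < (Finset.univ.filter (fun u => u ∈ l ∧ G.Adj v u)).card := by
      have h3 := hdeg v hvl
      have h4 : G.neighborFinset v ⊆ (Finset.univ.filter (fun u => u ∈ l ∧ G.Adj v u)) ∪
          Finset.univ.filter (fun u => u ∉ l) := by
        intro w hw
        rw [SimpleGraph.mem_neighborFinset] at hw
        by_cases hwl : w ∈ l <;> simp [hwl, hw]
      have h5 := (Finset.card_le_card h4).trans (Finset.card_union_le _ _)
      rw [SimpleGraph.card_neighborFinset_eq_degree, hc] at h5
      omega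
    obtain ⟨l', hl', hm'⟩ := absorb hα l hl v hvl hd
    have he : (Finset.univ.filter (fun u => u ∉ l')) = (Finset.univ.filter (fun u => u ∉ l)).erase v := by
      ext w
      simp only [Finset.mem_filter, Finset.mem_univ, true_and, Finset.mem_erase, hm']
      tauto
    refine ih l' hl' ?_ ?_ (by omega) ?_
    · rw [hm']; rintro (h | h)
      · exact hu h
      · exact hvu h.symm
    · rw [he, Finset.card_erase_of_mem hv, hc]; omega
    · intro w hw
      apply hdeg
      intro h; exact hw ((hm' w).2 (Or.inl h))

lemma CycL.toWalk {V : Type} {G : SimpleGraph V} {l : List V} (h : CycL G l) :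
    ∃ (u : V) (w : G.Walk u u), w.IsCycle ∧ w.length = l.length ∧ ∀ x ∈ l, x ∈ w.support := by
  obtain ⟨h3, hnd, hch, hcl⟩ := h
  have hne : l ≠ [] := by rintro rfl; simp at h3
  have hadj : G.Adj (l.getLast hne) (l.head hne) :=
    hcl _ (List.getLast?_eq_some_getLast hne) _ (List.head?_eq_some_head hne)
  let p := SimpleGraph.Walk.ofSupport l hne hch
  have hps : p.support = l := SimpleGraph.Walk.support_ofSupport hne hch
  have hpl : p.length = l.length - 1 := SimpleGraph.Walk.length_ofSupport hne hch
  have hpath : p.IsPath := by rw [SimpleGraph.Walk.isPath_def, hps]; exact hnd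
  refine ⟨l.getLast hne, SimpleGraph.Walk.cons hadj p, ?_, ?_, ?_⟩
  · rw [SimpleGraph.Walk.cons_isCycle_iff]
    refine ⟨hpath, ?_⟩
    intro hmem
    rw [Sym2.eq_swap] at hmem
    have := hpath.length_eq_one_of_mem_edges hmem
    omega
  · rw [SimpleGraph.Walk.length_cons, hpl]; omega
  · intro x hx
    rw [SimpleGraph.Walk.support_cons, hps]
    exact List.mem_cons_of_mem _ hx

lemma CF.ofHam {V : Type} [Fintype V] [DecidableEq V] {G : SimpleGraph V} (h : G.IsHamiltonian)
    (hc : 3 ≤ Fintype.card V) : ∃ f, CF G (Fintype.card V) f ∧ ∀ v, ∃ i < Fintype.card V, f i = v := by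
  obtain ⟨a, p, hp⟩ := h (by omega)
  have hlen := hp.length_eq
  set n := Fintype.card V with hn
  have hf : CF G n (fun i => p.getVert (i % n)) := by
    refine ⟨hc, ?_, ?_, ?_⟩
    · intro i
      have hlt := Nat.mod_lt i (show n > 0 by omega)
      by_cases hc' : i % n + 1 < n
      · have : (i + 1) % n = i % n + 1 := by
          rw [Nat.add_mod, Nat.mod_eq_of_lt (a := 1) (by omega), Nat.mod_eq_of_lt hc']
        simp only [this]
        exact p.adj_getVert_succ (by omega)
      · have h1 : i % n + 1 = n := by omega
        have : (i + 1) % n = 0 := by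
          rw [Nat.add_mod, Nat.mod_eq_of_lt (a := 1) (by omega), h1, Nat.mod_self]
        simp only [this]
        have := p.adj_getVert_succ (i := i % n) (by omega)
        rw [p.getVert_zero]
        rwa [h1, ← hlen, p.getVert_length, hlen] at this
    · intro i; simp
    · intro i hi j hj e
      simp only [Nat.mod_eq_of_lt hi, Nat.mod_eq_of_lt hj] at e
      exact hp.isCycle.getVert_injOn' (by simp; omega) (by simp; omega) e
  refine ⟨_, hf, ?_⟩
  intro v
  obtain ⟨i, hi, -⟩ := SimpleGraph.Walk.mem_support_iff_exists_getVert.1 (hp.mem_support v)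
  by_cases hin : i < n
  · exact ⟨i, hin, by simp [Nat.mod_eq_of_lt hin, hi]⟩
  · refine ⟨0, by omega, ?_⟩
    rw [p.getVert_of_length_le (by omega)] at hi
    simp [hi]

end HamCyc
namespace HamCyc

/-- A long cycle missing at least one vertex, with all missed vertices satisfying `P`. -/
def Win {V : Type} (G : SimpleGraph V) (n M : ℕ) (P : V → Prop) : Prop :=
  ∃ l, CycL G l ∧ (∃ v, v ∉ l) ∧ (∀ v, v ∉ l → P v) ∧ n ≤ l.length + M

lemma win_of_index {V : Type} {G : SimpleGraph V} {n M : ℕ} {P : V → Prop} {f : ℕ → V}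
    (h : CF G n f) (hs : ∀ v, ∃ i, f i = v)
    (x : ℕ) (I : List ℕ) (hnd : I.Nodup) (hw : ∀ i ∈ I, x ≤ i ∧ i < x + n) (h3 : 3 ≤ I.length)
    (hch : I.IsChain (fun i j => G.Adj (f i) (f j)))
    (hcl : ∀ i ∈ I.getLast?, ∀ j ∈ I.head?, G.Adj (f i) (f j))
    (hmiss : ∃ i, x ≤ i ∧ i < x + n ∧ i ∉ I)
    (hP : ∀ i, x ≤ i → i < x + n → i ∉ I → P (f i))
    (hM : n ≤ I.length + M) : Win G n M P := by
  refine ⟨I.map f, CycL.ofIdx h x I hnd hw h3 hch hcl, ?_, ?_, by simpa using hM⟩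
  · obtain ⟨i, h1, h2, h4⟩ := hmiss
    refine ⟨f i, ?_⟩
    intro hm
    obtain ⟨j, hj, e⟩ := List.mem_map.1 hm
    have := h.injW x j i (hw j hj).1 (hw j hj).2 h1 h2 e
    subst this; exact h4 hj
  · intro v hv
    obtain ⟨i, rfl⟩ := hs v
    obtain ⟨j, h1, h2, e⟩ := h.window x i
    rw [← e]
    apply hP j h1 h2
    intro hj
    exact hv (List.mem_map.2 ⟨j, hj, e⟩)

lemma win_shortcut {V : Type} {G : SimpleGraph V} {n M : ℕ} {P : V → Prop} {f : ℕ → V}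
    (h : CF G n f) (hs : ∀ v, ∃ i, f i = v) (p q : ℕ) (hpq : p + 2 ≤ q) (hq : q + 3 ≤ p + n)
    (hM : q ≤ p + M) (hP : ∀ i, p < i → i < q → P (f i)) (hadj : G.Adj (f p) (f q)) :
    Win G n M P := by
  refine win_of_index h hs (p + 1) (seg q (p + n)) (seg_nodup _ _) ?_ ?_ (seg_chain h _ _) ?_ ?_ ?_ ?_
  · intro i hi; rw [mem_seg] at hi; omega
  · rw [seg_length]; omega
  · rw [seg_head (by omega), seg_last (by omega)]
    simp [h.per, hadj]
  · exact ⟨p + 1, by omega, by omega, by rw [mem_seg]; omega⟩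
  · intro i h1 h2 h3
    rw [mem_seg] at h3
    exact hP i (by omega) (by omega)
  · rw [seg_length]; omega

lemma win_tri {V : Type} {G : SimpleGraph V} {n M : ℕ} {P : V → Prop} {f : ℕ → V}
    (h : CF G n f) (hs : ∀ v, ∃ i, f i = v) (y1 y2 v u w u' : ℕ) (h1 : y1 + 2 ≤ y2)
    (h2 : y2 ≤ v) (h3 : v < u) (h4 : u ≤ w) (h5 : w < u') (h6 : u' ≤ y1 + n)
    (hM : y2 + u + u' ≤ y1 + v + w + M)
    (hP1 : ∀ i, y1 < i → i < y2 → P (f i))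
    (hP2 : ∀ i, v < i → i < u → P (f i))
    (hP3 : ∀ i, w < i → i < u' → P (f i))
    (e1 : G.Adj (f v) (f y1)) (e2 : G.Adj (f u) (f u')) (e3 : G.Adj (f w) (f y2)) :
    Win G n M P := by
  refine win_of_index h hs (y1 + 1) (seg y2 v ++ ((seg u' (y1 + n)).reverse ++ seg u w)) ?_ ?_ ?_ ?_ ?_ ?_ ?_ ?_
  · rw [List.nodup_append', List.nodup_append', List.nodup_reverse]
    refine ⟨seg_nodup _ _, ⟨seg_nodup _ _, seg_nodup _ _, ?_⟩, ?_⟩ <;> intro i hi hj <;>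
      simp only [List.mem_append, List.mem_reverse, mem_seg] at hi hj <;> omega
  · intro i hi
    simp only [List.mem_append, List.mem_reverse, mem_seg] at hi; omega
  · simp only [List.length_append, List.length_reverse, seg_length]; omega
  · rw [List.isChain_append, List.isChain_append, List.isChain_reverse]
    refine ⟨seg_chain h _ _, ⟨seg_chain' h _ _, seg_chain h _ _, ?_⟩, ?_⟩
    · simp [seg_head h4, seg_head h6, e2.symm]
    · simp [seg_last h2, seg_last h6, h.per, e1]
  · simp [seg_last h4, seg_head h2, e3]
  · refine ⟨y1 + 1, by omega, by omega, ?_⟩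
    simp only [List.mem_append, List.mem_reverse, mem_seg]; omega
  · intro i h7 h8 h9
    simp only [List.mem_append, List.mem_reverse, mem_seg] at h9
    by_cases c1 : i < y2
    · exact hP1 i (by omega) c1
    · by_cases c2 : i < u
      · exact hP2 i (by omega) c2
      · exact hP3 i (by omega) (by omega)
  · simp only [List.length_append, List.length_reverse, seg_length]; omega

/-- Combining four segments, in one of several orders/orientations. -/
lemma win_four {V : Type} {G : SimpleGraph V} {n M : ℕ} {P : V → Prop} {f : ℕ → V}
    (h : CF G n f) (hs : ∀ v, ∃ i, f i = v) (a1 b1 a2 b2 a3 b3 a4 b4 : ℕ)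
    (h1 : a1 + 2 ≤ b1) (h2 : a2 + 2 ≤ b2) (h3 : a3 + 2 ≤ b3) (h4 : a4 + 2 ≤ b4)
    (g1 : b1 ≤ a2) (g2 : b2 ≤ a3) (g3 : b3 ≤ a4) (g4 : b4 ≤ a1 + n)
    (hM : b1 + b2 + b3 + b4 ≤ a1 + a2 + a3 + a4 + M)
    (p1 : ∀ i, a1 < i → i < b1 → P (f i)) (p2 : ∀ i, a2 < i → i < b2 → P (f i))
    (p3 : ∀ i, a3 < i → i < b3 → P (f i)) (p4 : ∀ i, a4 < i → i < b4 → P (f i))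
    (I : List ℕ)
    (hI : I.Perm (seg b1 a2 ++ (seg b2 a3 ++ (seg b3 a4 ++ seg b4 (a1 + n)))))
    (hch : I.IsChain (fun i j => G.Adj (f i) (f j)))
    (hcl : ∀ i ∈ I.getLast?, ∀ j ∈ I.head?, G.Adj (f i) (f j)) : Win G n M P := by
  have hm : ∀ i, i ∈ I ↔ (b1 ≤ i ∧ i ≤ a2) ∨ (b2 ≤ i ∧ i ≤ a3) ∨ (b3 ≤ i ∧ i ≤ a4) ∨
      (b4 ≤ i ∧ i ≤ a1 + n) := by
    intro i; rw [hI.mem_iff]; simp only [List.mem_append, mem_seg]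
  have hl : I.length = (a2 + 1 - b1) + ((a3 + 1 - b2) + ((a4 + 1 - b3) + (a1 + n + 1 - b4))) := by
    rw [hI.length_eq]; simp only [List.length_append, seg_length]
  refine win_of_index h hs (a1 + 1) I ?_ ?_ ?_ hch hcl ?_ ?_ ?_
  · rw [hI.nodup_iff, List.nodup_append', List.nodup_append', List.nodup_append']
    refine ⟨seg_nodup _ _, ⟨seg_nodup _ _, ⟨seg_nodup _ _, seg_nodup _ _, ?_⟩, ?_⟩, ?_⟩ <;>
      intro i hi hj <;> simp only [List.mem_append, mem_seg] at hi hj <;> omega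
  · intro i hi; rw [hm] at hi; omega
  · omega
  · exact ⟨a1 + 1, by omega, by omega, by rw [hm]; omega⟩
  · intro i h7 h8 h9
    rw [hm] at h9
    by_cases c1 : i < b1
    · exact p1 i (by omega) c1
    by_cases c2 : i < b2
    · exact p2 i (by omega) c2
    by_cases c3 : i < b3
    · exact p3 i (by omega) c3
    · exact p4 i (by omega) (by omega)
  · omega

end HamCyc
namespace HamCyc

lemma four_chain {V : Type} {G : SimpleGraph V} {n : ℕ} {f : ℕ → V} (h : CF G n f)
    {b a x x' y y' z z' : ℕ} (hb : b ≤ a) (hx : x ≤ x') (hy : y ≤ y') (hz : z ≤ z')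
    (e1 : G.Adj (f a) (f x')) (e2 : G.Adj (f x) (f y)) (e3 : G.Adj (f y') (f z'))
    (e4 : G.Adj (f z) (f b)) :
    (seg b a ++ ((seg x x').reverse ++ (seg y y' ++ (seg z z').reverse))).IsChain
      (fun i j => G.Adj (f i) (f j)) ∧
    ∀ i ∈ (seg b a ++ ((seg x x').reverse ++ (seg y y' ++ (seg z z').reverse))).getLast?,
    ∀ j ∈ (seg b a ++ ((seg x x').reverse ++ (seg y y' ++ (seg z z').reverse))).head?,
      G.Adj (f i) (f j) := by
  constructor
  · rw [List.isChain_append, List.isChain_append, List.isChain_append, List.isChain_reverse,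
      List.isChain_reverse]
    refine ⟨seg_chain h _ _, ⟨seg_chain' h _ _, ⟨seg_chain h _ _, seg_chain' h _ _, ?_⟩, ?_⟩, ?_⟩
    · simp [seg_last hy, seg_last hz, e3]
    · simp [seg_head hy, seg_head hx, e2]
    · simp [seg_last hb, seg_last hx, e1]
  · simp [seg_head hb, seg_head hz, e4]

/-- The context of the main argument. -/
structure Ctx {V : Type} (G : SimpleGraph V) (n s ℓ k : ℕ) (P : V → Prop) (f : ℕ → V)
    (J : Finset ℕ) : Prop where
  cf : CF G n f
  surj : ∀ v, ∃ i, f i = v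
  hs : s = 2 * ℓ + 2
  hl : 1 ≤ ℓ
  big : 4 * s ≤ n
  fit : ∀ j ∈ J, j * s + s ≤ n
  good : ∀ j ∈ J, ∀ i < s, P (f (j * s + i))
  ind : ∀ t : Finset V, (∀ u ∈ t, ∀ v ∈ t, u ≠ v → ¬ G.Adj u v) → t.card ≤ k
  nowin : ¬ Win G n (4 * s) P

/-- Some edge between the parts with offset `o` of two blocks. -/
def Ed {V : Type} (G : SimpleGraph V) (s ℓ : ℕ) (f : ℕ → V) (o j j' : ℕ) : Prop :=
  ∃ i < ℓ, ∃ i' < ℓ, G.Adj (f (j * s + o + i)) (f (j' * s + o + i'))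

lemma Ed.symm {V : Type} {G : SimpleGraph V} {s ℓ : ℕ} {f : ℕ → V} {o j j' : ℕ}
    (h : Ed G s ℓ f o j j') : Ed G s ℓ f o j' j := by
  obtain ⟨i, hi, i', hi', e⟩ := h
  exact ⟨i', hi', i, hi, e.symm⟩

lemma blk_lt {j j' s : ℕ} (h : j < j') : j * s + s ≤ j' * s := by
  have := Nat.mul_le_mul_right s (show j + 1 ≤ j' from h)
  rwa [Nat.add_mul, one_mul] at this

lemma blk_good {V : Type} {G : SimpleGraph V} {n s ℓ k : ℕ} {P : V → Prop} {f : ℕ → V}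
    {J : Finset ℕ} (C : Ctx G n s ℓ k P f J) {j i : ℕ} (hj : j ∈ J) (h1 : j * s ≤ i)
    (h2 : i < j * s + s) : P (f i) := by
  have := C.good j hj (i - j * s) (by omega)
  rwa [Nat.add_sub_cancel' h1] at this

lemma four_A {V : Type} {G : SimpleGraph V} {n s ℓ k : ℕ} {P : V → Prop} {f : ℕ → V}
    {J : Finset ℕ} (C : Ctx G n s ℓ k P f J) {j1 j2 j3 j4 : ℕ}
    (m1 : j1 ∈ J) (m2 : j2 ∈ J) (m3 : j3 ∈ J) (m4 : j4 ∈ J)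
    (l12 : j1 < j2) (l23 : j2 < j3) (l34 : j3 < j4)
    (i1 i2 i3 i4 r1 r2 r3 r4 : ℕ) (hi1 : i1 < ℓ) (hi2 : i2 < ℓ) (hi3 : i3 < ℓ) (hi4 : i4 < ℓ)
    (hr1 : r1 < ℓ) (hr2 : r2 < ℓ) (hr3 : r3 < ℓ) (hr4 : r4 < ℓ) (I : List ℕ)
    (hI : I.Perm (seg (j1 * s + (ℓ + 1) + r1) (j2 * s + 0 + i2) ++
      (seg (j2 * s + (ℓ + 1) + r2) (j3 * s + 0 + i3) ++
      (seg (j3 * s + (ℓ + 1) + r3) (j4 * s + 0 + i4) ++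
       seg (j4 * s + (ℓ + 1) + r4) (j1 * s + 0 + i1 + n)))))
    (hch : I.IsChain (fun i j => G.Adj (f i) (f j)) ∧
      ∀ i ∈ I.getLast?, ∀ j ∈ I.head?, G.Adj (f i) (f j)) : False := by
  have b12 := blk_lt (s := s) l12
  have b23 := blk_lt (s := s) l23
  have b34 := blk_lt (s := s) l34
  have f4 := C.fit j4 m4
  have hs := C.hs
  refine C.nowin (win_four C.cf C.surj _ _ _ _ _ _ _ _ ?_ ?_ ?_ ?_ ?_ ?_ ?_ ?_ ?_
    ?_ ?_ ?_ ?_ I hI hch.1 hch.2)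
  any_goals omega
  · intro i h1 h2; exact blk_good C m1 (by omega) (by omega)
  · intro i h1 h2; exact blk_good C m2 (by omega) (by omega)
  · intro i h1 h2; exact blk_good C m3 (by omega) (by omega)
  · intro i h1 h2; exact blk_good C m4 (by omega) (by omega)

lemma four_cases {V : Type} {G : SimpleGraph V} {n s ℓ k : ℕ} {P : V → Prop} {f : ℕ → V}
    {J : Finset ℕ} (C : Ctx G n s ℓ k P f J) {j1 j2 j3 j4 : ℕ}
    (m1 : j1 ∈ J) (m2 : j2 ∈ J) (m3 : j3 ∈ J) (m4 : j4 ∈ J)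
    (l12 : j1 < j2) (l23 : j2 < j3) (l34 : j3 < j4)
    (H : (Ed G s ℓ f 0 j1 j2 ∧ Ed G s ℓ f 0 j3 j4 ∧ Ed G s ℓ f (ℓ + 1) j1 j3 ∧ Ed G s ℓ f (ℓ + 1) j2 j4) ∨
      (Ed G s ℓ f 0 j1 j4 ∧ Ed G s ℓ f 0 j2 j3 ∧ Ed G s ℓ f (ℓ + 1) j1 j3 ∧ Ed G s ℓ f (ℓ + 1) j2 j4) ∨
      (Ed G s ℓ f 0 j1 j3 ∧ Ed G s ℓ f 0 j2 j4 ∧ Ed G s ℓ f (ℓ + 1) j1 j2 ∧ Ed G s ℓ f (ℓ + 1) j3 j4) ∨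
      (Ed G s ℓ f 0 j1 j3 ∧ Ed G s ℓ f 0 j2 j4 ∧ Ed G s ℓ f (ℓ + 1) j1 j4 ∧ Ed G s ℓ f (ℓ + 1) j2 j3)) :
    False := by
  have b12 := blk_lt (s := s) l12
  have b23 := blk_lt (s := s) l23
  have b34 := blk_lt (s := s) l34
  have f4 := C.fit j4 m4
  have hs := C.hs
  have hper := C.cf.per
  rcases H with H | H | H | H
  · obtain ⟨⟨i1, hi1, i2, hi2, e12⟩, ⟨i3, hi3, i4, hi4, e34⟩, ⟨r1, hr1, r3, hr3, e13⟩,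
      ⟨r2, hr2, r4, hr4, e24⟩⟩ := H
    refine four_A C m1 m2 m3 m4 l12 l23 l34 i1 i2 i3 i4 r1 r2 r3 r4 hi1 hi2 hi3 hi4 hr1 hr2 hr3 hr4
      (seg (j1 * s + (ℓ + 1) + r1) (j2 * s + 0 + i2) ++
      ((seg (j4 * s + (ℓ + 1) + r4) (j1 * s + 0 + i1 + n)).reverse ++
       (seg (j2 * s + (ℓ + 1) + r2) (j3 * s + 0 + i3) ++
      (seg (j3 * s + (ℓ + 1) + r3) (j4 * s + 0 + i4)).reverse))) ?_ ?_
    · refine List.Perm.append_left _ ?_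
      refine (List.Perm.append (List.reverse_perm _)
        (List.Perm.append_left _ (List.reverse_perm _))).trans ?_
      refine List.perm_append_comm.trans ?_
      rw [List.append_assoc]
    · refine four_chain C.cf ?_ ?_ ?_ ?_ ?_ ?_ ?_ ?_
      all_goals first | omega | (try rw [hper]); first | assumption | (apply SimpleGraph.Adj.symm; assumption)
  · obtain ⟨⟨i1, hi1, i4, hi4, e14⟩, ⟨i2, hi2, i3, hi3, e23⟩, ⟨r1, hr1, r3, hr3, e13⟩,
      ⟨r2, hr2, r4, hr4, e24⟩⟩ := H
    refine four_A C m1 m2 m3 m4 l12 l23 l34 i1 i2 i3 i4 r1 r2 r3 r4 hi1 hi2 hi3 hi4 hr1 hr2 hr3 hr4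
      (seg (j1 * s + (ℓ + 1) + r1) (j2 * s + 0 + i2) ++
       ((seg (j2 * s + (ℓ + 1) + r2) (j3 * s + 0 + i3)).reverse ++
      (seg (j4 * s + (ℓ + 1) + r4) (j1 * s + 0 + i1 + n) ++
      (seg (j3 * s + (ℓ + 1) + r3) (j4 * s + 0 + i4)).reverse))) ?_ ?_
    · refine List.Perm.append_left _ ?_
      refine List.Perm.append (List.reverse_perm _) ?_
      refine List.perm_append_comm.trans ?_
      exact List.Perm.append_right _ (List.reverse_perm _)
    · refine four_chain C.cf ?_ ?_ ?_ ?_ ?_ ?_ ?_ ?_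
      all_goals first | omega | (try rw [hper]); first | assumption | (apply SimpleGraph.Adj.symm; assumption)
  · obtain ⟨⟨i1, hi1, i3, hi3, e13⟩, ⟨i2, hi2, i4, hi4, e24⟩, ⟨r1, hr1, r2, hr2, e12⟩,
      ⟨r3, hr3, r4, hr4, e34⟩⟩ := H
    refine four_A C m1 m2 m3 m4 l12 l23 l34 i1 i2 i3 i4 r1 r2 r3 r4 hi1 hi2 hi3 hi4 hr1 hr2 hr3 hr4
      (seg (j1 * s + (ℓ + 1) + r1) (j2 * s + 0 + i2) ++
      ((seg (j3 * s + (ℓ + 1) + r3) (j4 * s + 0 + i4)).reverse ++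
      (seg (j4 * s + (ℓ + 1) + r4) (j1 * s + 0 + i1 + n) ++
       (seg (j2 * s + (ℓ + 1) + r2) (j3 * s + 0 + i3)).reverse))) ?_ ?_
    · refine List.Perm.append_left _ ?_
      rw [← List.append_assoc]
      refine List.perm_append_comm.trans ?_
      refine List.Perm.append (List.reverse_perm _) ?_
      exact List.Perm.append_right _ (List.reverse_perm _)
    · refine four_chain C.cf ?_ ?_ ?_ ?_ ?_ ?_ ?_ ?_
      all_goals first | omega | (try rw [hper]); first | assumption | (apply SimpleGraph.Adj.symm; assumption)
  · obtain ⟨⟨i1, hi1, i3, hi3, e13⟩, ⟨i2, hi2, i4, hi4, e24⟩, ⟨r1, hr1, r4, hr4, e14⟩,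
      ⟨r2, hr2, r3, hr3, e23⟩⟩ := H
    refine four_A C m1 m2 m3 m4 l12 l23 l34 i1 i2 i3 i4 r1 r2 r3 r4 hi1 hi2 hi3 hi4 hr1 hr2 hr3 hr4
      (seg (j1 * s + (ℓ + 1) + r1) (j2 * s + 0 + i2) ++
      ((seg (j3 * s + (ℓ + 1) + r3) (j4 * s + 0 + i4)).reverse ++
       (seg (j2 * s + (ℓ + 1) + r2) (j3 * s + 0 + i3) ++
      (seg (j4 * s + (ℓ + 1) + r4) (j1 * s + 0 + i1 + n)).reverse))) ?_ ?_
    · refine List.Perm.append_left _ ?_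
      refine (List.Perm.append (List.reverse_perm _)
        (List.Perm.append_left _ (List.reverse_perm _))).trans ?_
      rw [← List.append_assoc, ← List.append_assoc]
      exact List.Perm.append_right _ List.perm_append_comm
    · refine four_chain C.cf ?_ ?_ ?_ ?_ ?_ ?_ ?_ ?_
      all_goals first | omega | (try rw [hper]); first | assumption | (apply SimpleGraph.Adj.symm; assumption)

/-- The two offsets. -/
def Off (ℓ x y : ℕ) : Prop := (x = 0 ∧ y = ℓ + 1) ∨ (x = ℓ + 1 ∧ y = 0)

lemma k4_aux {V : Type} {G : SimpleGraph V} {n s ℓ k : ℕ} {P : V → Prop} {f : ℕ → V}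
    {J : Finset ℕ} (C : Ctx G n s ℓ k P f J) {x y : ℕ} (ho : Off ℓ x y) {c c' b b' : ℕ}
    (mc : c ∈ J) (mc' : c' ∈ J) (mb : b ∈ J) (mb' : b' ∈ J)
    (hcpb : c' ≠ b) (hcpbp : c' ≠ b') (h1 : c < c') (h2 : b < b') (h3 : c < b)
    (y1 : Ed G s ℓ f y c c') (y2 : Ed G s ℓ f y b b')
    (x1 : Ed G s ℓ f x c b) (x2 : Ed G s ℓ f x c b') (x3 : Ed G s ℓ f x c' b)
    (x4 : Ed G s ℓ f x c' b') : False := by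
  rcases lt_trichotomy c' b with h4 | h4 | h4
  · refine four_cases C mc mc' mb mb' h1 h4 h2 ?_
    rcases ho with ⟨rfl, rfl⟩ | ⟨rfl, rfl⟩
    · exact Or.inr (Or.inr (Or.inl ⟨x1, x4, y1, y2⟩))
    · exact Or.inl ⟨y1, y2, x1, x4⟩
  · exact absurd h4 hcpb
  · rcases lt_trichotomy c' b' with h5 | h5 | h5
    · refine four_cases C mc mb mc' mb' h3 h4 h5 ?_
      rcases ho with ⟨rfl, rfl⟩ | ⟨rfl, rfl⟩
      · exact Or.inl ⟨x1, x4, y1, y2⟩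
      · exact Or.inr (Or.inr (Or.inl ⟨y1, y2, x1, x4⟩))
    · exact absurd h5 hcpbp
    · refine four_cases C mc mb mb' mc' h3 h2 h5 ?_
      rcases ho with ⟨rfl, rfl⟩ | ⟨rfl, rfl⟩
      · exact Or.inr (Or.inr (Or.inr ⟨x2, x3.symm, y1, y2⟩))
      · exact Or.inr (Or.inl ⟨y1, y2, x2, x3.symm⟩)

lemma k4_aux2 {V : Type} {G : SimpleGraph V} {n s ℓ k : ℕ} {P : V → Prop} {f : ℕ → V}
    {J : Finset ℕ} (C : Ctx G n s ℓ k P f J) {x y : ℕ} (ho : Off ℓ x y) {c c' b b' : ℕ}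
    (mc : c ∈ J) (mc' : c' ∈ J) (mb : b ∈ J) (mb' : b' ∈ J)
    (hcb : c ≠ b) (hcb' : c ≠ b') (hcpb : c' ≠ b) (hcpbp : c' ≠ b') (h1 : c < c') (h2 : b < b')
    (y1 : Ed G s ℓ f y c c') (y2 : Ed G s ℓ f y b b')
    (x1 : Ed G s ℓ f x c b) (x2 : Ed G s ℓ f x c b') (x3 : Ed G s ℓ f x c' b)
    (x4 : Ed G s ℓ f x c' b') : False := by
  rcases lt_or_gt_of_ne hcb with h3 | h3
  · exact k4_aux C ho mc mc' mb mb' hcpb hcpbp h1 h2 h3 y1 y2 x1 x2 x3 x4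
  · exact k4_aux C ho mb mb' mc mc' hcb'.symm hcpbp.symm h2 h1 h3 y2 y1 x1.symm x3.symm
      x2.symm x4.symm

lemma k4 {V : Type} {G : SimpleGraph V} {n s ℓ k : ℕ} {P : V → Prop} {f : ℕ → V}
    {J : Finset ℕ} (C : Ctx G n s ℓ k P f J) {x y : ℕ} (ho : Off ℓ x y) {c c' b b' : ℕ}
    (mc : c ∈ J) (mc' : c' ∈ J) (mb : b ∈ J) (mb' : b' ∈ J)
    (hcc : c ≠ c') (hbb : b ≠ b') (hcb : c ≠ b) (hcb' : c ≠ b') (hcpb : c' ≠ b) (hcpbp : c' ≠ b')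
    (y1 : Ed G s ℓ f y c c') (y2 : Ed G s ℓ f y b b')
    (x1 : Ed G s ℓ f x c b) (x2 : Ed G s ℓ f x c b') (x3 : Ed G s ℓ f x c' b)
    (x4 : Ed G s ℓ f x c' b') : False := by
  rcases lt_or_gt_of_ne hcc with h1 | h1 <;> rcases lt_or_gt_of_ne hbb with h2 | h2
  · exact k4_aux2 C ho mc mc' mb mb' hcb hcb' hcpb hcpbp h1 h2 y1 y2 x1 x2 x3 x4
  · exact k4_aux2 C ho mc mc' mb' mb hcb' hcb hcpbp hcpb h1 h2 y1 y2.symm x2 x1 x4 x3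
  · exact k4_aux2 C ho mc' mc mb mb' hcpb hcpbp hcb hcb' h1 h2 y1.symm y2 x3 x4 x1 x2
  · exact k4_aux2 C ho mc' mc mb' mb hcpbp hcpb hcb' hcb h1 h2 y1.symm y2.symm x4 x3 x2 x1

/-- No short chords inside good blocks. -/
lemma no_chord {V : Type} {G : SimpleGraph V} {n s ℓ k : ℕ} {P : V → Prop} {f : ℕ → V}
    {J : Finset ℕ} (C : Ctx G n s ℓ k P f J) {j p q : ℕ} (hj : j ∈ J) (h1 : j * s ≤ p)
    (h2 : p + 2 ≤ q) (h3 : q < j * s + s) : ¬ G.Adj (f p) (f q) := by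
  intro h
  have := C.big
  have := C.hs
  refine C.nowin (win_shortcut C.cf C.surj p q h2 (by omega) (by omega) ?_ h)
  intro i h4 h5
  exact blk_good C hj (by omega) (by omega)

end HamCyc
namespace HamCyc

lemma tri_aux {V : Type} {G : SimpleGraph V} {n s ℓ k : ℕ} {P : V → Prop} {f : ℕ → V}
    {J : Finset ℕ} (C : Ctx G n s ℓ k P f J) {c y1 : ℕ} (hc : c ∈ J) (hy1 : c * s ≤ y1)
    {d1 j1 u1 v1 d2 j2 u2 w2 y2 : ℕ} (m1 : j1 ∈ J) (m2 : j2 ∈ J)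
    (hd1 : d1 = 0 ∨ d1 = n) (hd2 : d2 = 0 ∨ d2 = n)
    (p1 : c * s + s ≤ j1 * s + d1) (q2 : j2 * s + s + d2 ≤ c * s + n)
    (hv1 : j1 * s ≤ v1) (hvu1 : v1 < u1) (hu1 : u1 < j1 * s + s)
    (hw2 : j2 * s ≤ w2) (hwu2 : w2 < u2) (hu2 : u2 < j2 * s + s)
    (hy : y1 + 2 ≤ y2) (hy2 : y2 < c * s + s)
    (e1 : G.Adj (f v1) (f y1)) (e2 : G.Adj (f w2) (f y2)) (e3 : G.Adj (f u1) (f u2))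
    (hlt : u1 + d1 < u2 + d2) (hsame : j2 * s ≤ u1 → u1 < u2 → u1 ≤ w2) : False := by
  have fit1 := C.fit j1 m1
  have fit2 := C.fit j2 m2
  have hper : ∀ d, (d = 0 ∨ d = n) → ∀ i, f (i + d) = f i := by
    rintro d (rfl | rfl) i
    · rfl
    · exact C.cf.per i
  have hle : u1 + d1 ≤ w2 + d2 := by
    rcases hd1 with rfl | rfl <;> rcases hd2 with rfl | rfl
    · rcases lt_trichotomy j1 j2 with h | h | h
      · have := blk_lt (s := s) h; omega
      · subst h
        have := hsame (by omega) (by omega); omega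
      · have := blk_lt (s := s) h; omega
    · omega
    · omega
    · rcases lt_trichotomy j1 j2 with h | h | h
      · have := blk_lt (s := s) h; omega
      · subst h
        have := hsame (by omega) (by omega); omega
      · have := blk_lt (s := s) h; omega
  refine C.nowin (win_tri C.cf C.surj y1 y2 (v1 + d1) (u1 + d1) (w2 + d2) (u2 + d2) hy ?_ ?_ hle
    ?_ ?_ ?_ ?_ ?_ ?_ ?_ ?_ ?_)
  any_goals omega
  · intro i h1 h2; exact blk_good C hc (by omega) (by omega)
  · intro i h1 h2
    have := hper d1 hd1 (i - d1)
    rw [Nat.sub_add_cancel (by omega)] at this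
    rw [this]
    exact blk_good C m1 (by omega) (by omega)
  · intro i h1 h2
    have := hper d2 hd2 (i - d2)
    rw [Nat.sub_add_cancel (by omega)] at this
    rw [this]
    exact blk_good C m2 (by omega) (by omega)
  · rw [hper d1 hd1]; exact e1
  · rw [hper d1 hd1, hper d2 hd2]; exact e3
  · rw [hper d2 hd2]; exact e2

lemma tri {V : Type} {G : SimpleGraph V} {n s ℓ k : ℕ} {P : V → Prop} {f : ℕ → V}
    {J : Finset ℕ} (C : Ctx G n s ℓ k P f J) {c y1 : ℕ} (hc : c ∈ J) (hy1 : c * s ≤ y1)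
    (U : Finset ℕ)
    (hU : ∀ u ∈ U, ∃ j ∈ J, j ≠ c ∧ ∃ v w y2, j * s ≤ v ∧ j * s ≤ w ∧ v < u ∧ w < u ∧
      u < j * s + s ∧ G.Adj (f v) (f y1) ∧ G.Adj (f w) (f y2) ∧ y1 + 2 ≤ y2 ∧ y2 < c * s + s ∧
      ∀ u' ∈ U, j * s ≤ u' → u' < u → u' ≤ w) : U.card ≤ k := by
  classical
  by_contra hk
  have fitc := C.fit c hc
  have hUn : ∀ u ∈ U, u < n := by
    intro u hu
    obtain ⟨j, hj, -, v, w, y2, -, -, -, -, h, -⟩ := hU u hu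
    have := C.fit j hj; omega
  have hinj : Set.InjOn f (U : Set ℕ) := by
    intro a ha b hb e
    exact C.cf.inj a (hUn a ha) b (hUn b hb) e
  have hex : ∃ a ∈ U, ∃ b ∈ U, a ≠ b ∧ G.Adj (f a) (f b) := by
    by_contra hcon
    push Not at hcon
    have := C.ind (U.image f) (by
      intro x hx y hy hxy
      obtain ⟨a, ha, rfl⟩ := Finset.mem_image.1 hx
      obtain ⟨b, hb, rfl⟩ := Finset.mem_image.1 hy
      exact hcon a ha b hb (by rintro rfl; exact hxy rfl))
    rw [Finset.card_image_of_injOn hinj] at this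
    exact hk this
  have hd : ∀ j ∈ J, j ≠ c → ∃ d, (d = 0 ∨ d = n) ∧ c * s + s ≤ j * s + d ∧
      j * s + s + d ≤ c * s + n := by
    intro j hj hjc
    have := C.fit j hj
    rcases lt_or_gt_of_ne hjc with h | h
    · have := blk_lt (s := s) h
      exact ⟨n, Or.inr rfl, by omega, by omega⟩
    · have := blk_lt (s := s) h
      exact ⟨0, Or.inl rfl, by omega, by omega⟩
  obtain ⟨a, ha, b, hb, hab, hadj⟩ := hex
  have han := hUn a ha
  have hbn := hUn b hb
  obtain ⟨j1, m1, n1, v1, w1, z1, A1, A2, A3, A4, A5, A6, A7, A8, A9, A10⟩ := hU a ha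
  obtain ⟨j2, m2, n2, v2, w2, z2, B1, B2, B3, B4, B5, B6, B7, B8, B9, B10⟩ := hU b hb
  obtain ⟨d1, hd1, p1, q1⟩ := hd j1 m1 n1
  obtain ⟨d2, hd2, p2, q2⟩ := hd j2 m2 n2
  rcases lt_or_ge (a + d1) (b + d2) with h | h
  · exact tri_aux C hc hy1 m1 m2 hd1 hd2 p1 q2 A1 A3 A5 B2 B4 B5 B8 B9 A6 B7 hadj h
      (B10 a ha)
  · exact tri_aux C hc hy1 m2 m1 hd2 hd1 p2 q1 B1 B3 B5 A2 A4 A5 A8 A9 B6 A7 hadj.symm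
      (by omega) (A10 b hb)

open Classical in
/-- `(j, i)` has two far apart neighbours in block `c`. -/
lemma star_bound {V : Type} {G : SimpleGraph V} {n s ℓ k : ℕ} {P : V → Prop} {f : ℕ → V}
    {J : Finset ℕ} (C : Ctx G n s ℓ k P f J) {o : ℕ} (ho : o + ℓ < s) {c : ℕ} (hc : c ∈ J) :
    ((J ×ˢ Finset.range ℓ).filter (fun p => p.1 ≠ c ∧ ∃ i1 < ℓ, ∃ i2 < ℓ, i1 + 2 ≤ i2 ∧
      G.Adj (f (p.1 * s + o + p.2)) (f (c * s + o + i1)) ∧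
      G.Adj (f (p.1 * s + o + p.2)) (f (c * s + o + i2)))).card ≤ k * ℓ := by
  set S := (J ×ˢ Finset.range ℓ).filter (fun p => p.1 ≠ c ∧ ∃ i1 < ℓ, ∃ i2 < ℓ, i1 + 2 ≤ i2 ∧
      G.Adj (f (p.1 * s + o + p.2)) (f (c * s + o + i1)) ∧
      G.Adj (f (p.1 * s + o + p.2)) (f (c * s + o + i2))) with hS
  let F : ℕ → Finset (ℕ × ℕ) := fun i1 => S.filter (fun p => ∃ i2 < ℓ, i1 + 2 ≤ i2 ∧
      G.Adj (f (p.1 * s + o + p.2)) (f (c * s + o + i1)) ∧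
      G.Adj (f (p.1 * s + o + p.2)) (f (c * s + o + i2)))
  have hsub : S ⊆ (Finset.range ℓ).biUnion F := by
    intro p hp
    have hp' := hp
    rw [hS, Finset.mem_filter] at hp'
    obtain ⟨-, -, i1, h1, i2, h2, h3, h4, h5⟩ := hp'
    exact Finset.mem_biUnion.2 ⟨i1, Finset.mem_range.2 h1,
      Finset.mem_filter.2 ⟨hp, i2, h2, h3, h4, h5⟩⟩
  refine (Finset.card_le_card hsub).trans (Finset.card_biUnion_le.trans ?_)
  have hF : ∀ i1 ∈ Finset.range ℓ, (F i1).card ≤ k := by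
    intro i1 hi1
    have hmem : ∀ p ∈ F i1, p.1 ∈ J ∧ p.2 < ℓ ∧ p.1 ≠ c ∧ ∃ i2 < ℓ, i1 + 2 ≤ i2 ∧
      G.Adj (f (p.1 * s + o + p.2)) (f (c * s + o + i1)) ∧
      G.Adj (f (p.1 * s + o + p.2)) (f (c * s + o + i2)) := by
      intro p hp
      obtain ⟨h1, h2⟩ := Finset.mem_filter.1 hp
      obtain ⟨h3, h4, -⟩ := Finset.mem_filter.1 h1
      obtain ⟨h5, h6⟩ := Finset.mem_product.1 h3
      exact ⟨h5, Finset.mem_range.1 h6, h4, h2⟩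
    have hinj : Set.InjOn (fun p : ℕ × ℕ => p.1 * s + o + p.2 + 1) (F i1 : Set (ℕ × ℕ)) := by
      rintro ⟨a, b⟩ h1 ⟨a', b'⟩ h2 e
      have h3 := hmem _ h1
      have h4 := hmem _ h2
      simp only at e h3 h4
      rcases lt_trichotomy a a' with h | h | h
      · have := blk_lt (s := s) h; omega
      · subst h; congr 1; omega
      · have := blk_lt (s := s) h; omega
    rw [← Finset.card_image_of_injOn hinj]
    refine tri C hc (y1 := c * s + o + i1) (by omega) _ ?_
    intro u hu
    obtain ⟨p, hp, rfl⟩ := Finset.mem_image.1 hu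
    obtain ⟨h1, h2, h3, i2, h4, h5, h6, h7⟩ := hmem p hp
    refine ⟨p.1, h1, h3, p.1 * s + o + p.2, p.1 * s + o + p.2, c * s + o + i2, ?_⟩
    refine ⟨by omega, by omega, by omega, by omega, by omega, h6, h7, by omega, by omega, ?_⟩
    intro u' _ _ h8; omega
  calc _ ≤ ∑ i1 ∈ Finset.range ℓ, k := Finset.sum_le_sum hF
    _ = k * ℓ := by simp [mul_comm]

/-- Block `j` is heavy towards block `c`. -/
def Hv {V : Type} (G : SimpleGraph V) (s ℓ : ℕ) (f : ℕ → V) (o j c : ℕ) : Prop :=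
  j ≠ c ∧ ∃ i1 < ℓ, ∃ i2 < ℓ, i1 + 2 ≤ i2 ∧
    (∃ r < ℓ, G.Adj (f (j * s + o + r)) (f (c * s + o + i1))) ∧
    (∃ r < ℓ, G.Adj (f (j * s + o + r)) (f (c * s + o + i2)))

open Classical in
lemma heavy_bound {V : Type} {G : SimpleGraph V} {n s ℓ k : ℕ} {P : V → Prop} {f : ℕ → V}
    {J : Finset ℕ} (C : Ctx G n s ℓ k P f J) {o : ℕ} (ho : o + ℓ < s) {c : ℕ} (hc : c ∈ J) :
    (J.filter (fun j => Hv G s ℓ f o j c)).card ≤ k * ℓ := by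
  let F : ℕ → Finset ℕ := fun i1 => J.filter (fun j => j ≠ c ∧ ∃ i2 < ℓ, i1 + 2 ≤ i2 ∧
    (∃ r < ℓ, G.Adj (f (j * s + o + r)) (f (c * s + o + i1))) ∧
    (∃ r < ℓ, G.Adj (f (j * s + o + r)) (f (c * s + o + i2))))
  have hsub : J.filter (fun j => Hv G s ℓ f o j c) ⊆ (Finset.range ℓ).biUnion F := by
    intro j hj
    obtain ⟨hj, h0, i1, h1, i2, h2, h3, h4, h5⟩ := Finset.mem_filter.1 hj
    exact Finset.mem_biUnion.2 ⟨i1, Finset.mem_range.2 h1,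
      Finset.mem_filter.2 ⟨hj, h0, i2, h2, h3, h4, h5⟩⟩
  refine (Finset.card_le_card hsub).trans (Finset.card_biUnion_le.trans ?_)
  have hF : ∀ i1 ∈ Finset.range ℓ, (F i1).card ≤ k := by
    intro i1 hi1
    have hch : ∀ j, ∃ u, j ∈ F i1 → ∃ v w y2, j * s ≤ v ∧ j * s ≤ w ∧ v < u ∧ w < u ∧
      u < j * s + s ∧ G.Adj (f v) (f (c * s + o + i1)) ∧ G.Adj (f w) (f y2) ∧
      c * s + o + i1 + 2 ≤ y2 ∧ y2 < c * s + s := by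
      intro j
      by_cases hj : j ∈ F i1
      · obtain ⟨hj, h0, i2, h2, h3, ⟨r, hr, h4⟩, ⟨r', hr', h5⟩⟩ := Finset.mem_filter.1 hj
        refine ⟨max (j * s + o + r) (j * s + o + r') + 1, fun _ => ⟨j * s + o + r, j * s + o + r',
          c * s + o + i2, ?_⟩⟩
        refine ⟨by omega, by omega, by omega, by omega, by omega, h4, h5, by omega, by omega⟩
      · exact ⟨0, fun h => absurd h hj⟩
    choose u hu using hch
    have hblk : ∀ a ∈ F i1, a * s ≤ u a ∧ u a < a * s + s := by
      intro a ha
      obtain ⟨v, w, y2, h1, h2, h3, h4, h5, -⟩ := hu a ha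
      omega
    have hinj : Set.InjOn u (F i1 : Set ℕ) := by
      intro a ha b hb e
      have h1 := hblk a ha
      have h2 := hblk b hb
      rcases lt_trichotomy a b with h | h | h
      · have := blk_lt (s := s) h; omega
      · exact h
      · have := blk_lt (s := s) h; omega
    rw [← Finset.card_image_of_injOn hinj]
    refine tri C hc (y1 := c * s + o + i1) (by omega) _ ?_
    intro x hx
    obtain ⟨j, hj, rfl⟩ := Finset.mem_image.1 hx
    have hj' := Finset.mem_filter.1 hj
    obtain ⟨v, w, y2, h1, h2, h3, h4, h5, h6, h7, h8, h9⟩ := hu j hj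
    refine ⟨j, hj'.1, hj'.2.1, v, w, y2, h1, h2, h3, h4, h5, h6, h7, h8, h9, ?_⟩
    intro x' hx' k1 k2
    obtain ⟨j', hj', rfl⟩ := Finset.mem_image.1 hx'
    have b1 := hblk j' hj'
    rcases lt_trichotomy j j' with h | h | h
    · have := blk_lt (s := s) h; omega
    · subst h; omega
    · have := blk_lt (s := s) h; omega
  calc _ ≤ ∑ i1 ∈ Finset.range ℓ, k := Finset.sum_le_sum hF
    _ = k * ℓ := by simp [mul_comm]

open Classical in
lemma codeg_bound {V : Type} {G : SimpleGraph V} {n s ℓ k : ℕ} {P : V → Prop} {f : ℕ → V}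
    {J : Finset ℕ} (C : Ctx G n s ℓ k P f J) {x y : ℕ} (ho : Off ℓ x y) {c c' : ℕ}
    (hc : c ∈ J) (hc' : c' ∈ J) (hcc : c ≠ c') (he : Ed G s ℓ f y c c') :
    (J.filter (fun b => (b ≠ c ∧ Ed G s ℓ f x b c) ∧ (b ≠ c' ∧ Ed G s ℓ f x b c'))).card * ℓ
      ≤ 2 * k := by
  set Q := J.filter (fun b => (b ≠ c ∧ Ed G s ℓ f x b c) ∧ (b ≠ c' ∧ Ed G s ℓ f x b c')) with hQ
  have hs := C.hs
  have hy : y + ℓ < s := by rcases ho with ⟨-, rfl⟩ | ⟨-, rfl⟩ <;> omega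
  let g : ℕ × ℕ → ℕ := fun p => p.1 * s + y + 2 * p.2
  set T := Q ×ˢ Finset.range ((ℓ + 1) / 2) with hT
  have hmem : ∀ p ∈ T, p.1 ∈ J ∧ ((p.1 ≠ c ∧ Ed G s ℓ f x p.1 c) ∧ (p.1 ≠ c' ∧ Ed G s ℓ f x p.1 c'))
      ∧ 2 * p.2 < ℓ := by
    intro p hp
    obtain ⟨h1, h2⟩ := Finset.mem_product.1 hp
    obtain ⟨h3, h4⟩ := Finset.mem_filter.1 h1
    rw [Finset.mem_range] at h2
    exact ⟨h3, h4, by omega⟩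
  have hinj : Set.InjOn (fun p => f (g p)) (T : Set (ℕ × ℕ)) := by
    rintro ⟨a, b⟩ h1 ⟨a', b'⟩ h2 e
    have h3 := hmem _ h1
    have h4 := hmem _ h2
    have f1 := C.fit _ h3.1
    have f2 := C.fit _ h4.1
    simp only at h3 h4 f1 f2
    have e' := C.cf.inj _ (by simp only [g]; omega) _ (by simp only [g]; omega) e
    simp only [g] at e'
    rcases lt_trichotomy a a' with h | h | h
    · have := blk_lt (s := s) h; omega
    · subst h; congr 1; omega
    · have := blk_lt (s := s) h; omega
  have hcard := C.ind (T.image (fun p => f (g p))) (by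
    intro u hu v hv huv hadj
    obtain ⟨⟨b, i⟩, hp, rfl⟩ := Finset.mem_image.1 hu
    obtain ⟨⟨b', i'⟩, hp', rfl⟩ := Finset.mem_image.1 hv
    obtain ⟨m1, ⟨⟨a1, a2⟩, ⟨a3, a4⟩⟩, h1⟩ := hmem _ hp
    obtain ⟨m2, ⟨⟨b1, b2⟩, ⟨b3, b4⟩⟩, h2⟩ := hmem _ hp'
    simp only [g] at *
    by_cases hbb : b = b'
    · subst hbb
      rcases lt_trichotomy i i' with h | h | h
      · exact no_chord C m1 (p := b * s + y + 2 * i) (q := b * s + y + 2 * i') (by omega) (by omega)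
          (by omega) hadj
      · subst h; exact huv rfl
      · exact no_chord C m1 (p := b * s + y + 2 * i') (q := b * s + y + 2 * i) (by omega) (by omega)
          (by omega) hadj.symm
    · exact k4 C ho hc hc' m1 m2 hcc hbb a1.symm b1.symm a3.symm b3.symm he
        ⟨2 * i, h1, 2 * i', h2, hadj⟩ a2.symm b2.symm a4.symm b4.symm)
  rw [Finset.card_image_of_injOn hinj, hT, Finset.card_product, Finset.card_range] at hcard
  have h2 : ℓ ≤ 2 * ((ℓ + 1) / 2) := by omega
  calc Q.card * ℓ ≤ Q.card * (2 * ((ℓ + 1) / 2)) := Nat.mul_le_mul_left _ h2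
    _ = 2 * (Q.card * ((ℓ + 1) / 2)) := by ring
    _ ≤ 2 * k := Nat.mul_le_mul_left _ hcard

end HamCyc
namespace HamCyc

open Classical in
/-- A Turan type bound. -/
lemma turan {α : Type} (r : α → α → Prop) (hr : ∀ a b, r a b → r b a) (k : ℕ) :
    ∀ (m : ℕ) (T : Finset α), T.card = m →
    (∀ S ⊆ T, (∀ a ∈ S, ∀ b ∈ S, a ≠ b → ¬ r a b) → S.card ≤ k) →
    T.card ^ 2 ≤ k * ((∑ a ∈ T, ∑ b ∈ T, if r a b then 1 else 0) + T.card) := by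
  intro m
  induction m using Nat.strong_induction_on with
  | _ m ih =>
  intro T hT hind
  rcases T.eq_empty_or_nonempty with rfl | hne
  · simp
  obtain ⟨Q, hQ⟩ : ∃ Q : Finset α → Prop, ∀ S, Q S ↔ ∀ a ∈ S, ∀ b ∈ S, a ≠ b → ¬ r a b :=
    ⟨_, fun _ => Iff.rfl⟩
  let F := T.powerset.filter Q
  have hFne : F.Nonempty := ⟨∅, by simp [F, hQ]⟩
  obtain ⟨I, hIF, hImax⟩ := F.exists_max_image Finset.card hFne
  obtain ⟨hIT, hI⟩ := Finset.mem_filter.1 hIF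
  rw [Finset.mem_powerset] at hIT
  rw [hQ] at hI
  have hnb : ∀ v ∈ T \ I, ∃ u ∈ I, r v u := by
    intro v hv
    rw [Finset.mem_sdiff] at hv
    by_contra hcon
    push Not at hcon
    have h1 : insert v I ∈ F := by
      refine Finset.mem_filter.2 ⟨Finset.mem_powerset.2 (Finset.insert_subset hv.1 hIT), (hQ _).2 ?_⟩
      intro a ha b hb hab
      rw [Finset.mem_insert] at ha hb
      rcases ha with rfl | ha <;> rcases hb with rfl | hb
      · exact absurd rfl hab
      · exact hcon b hb
      · exact fun h => hcon a ha (hr _ _ h)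
      · exact hI a ha b hb hab
    have := hImax _ h1
    rw [Finset.card_insert_of_notMem hv.2] at this
    omega
  have hIne : 1 ≤ I.card := by
    obtain ⟨v, hv⟩ := hne
    have h1 : ({v} : Finset α) ∈ F := by
      refine Finset.mem_filter.2 ⟨by simpa using hv, (hQ _).2 ?_⟩
      intro a ha b hb hab
      rw [Finset.mem_singleton] at ha hb
      exact absurd (ha.trans hb.symm) hab
    simpa using hImax _ h1
  have hIk := hind I hIT hI
  have hc : (T \ I).card + I.card = T.card := Finset.card_sdiff_add_card_eq_card hIT
  have hih := ih (T \ I).card (by omega) (T \ I) rfl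
    (fun S hS => hind S (hS.trans Finset.sdiff_subset))
  have hsum : (∑ a ∈ T \ I, ∑ b ∈ T \ I, if r a b then 1 else 0) + 2 * (T \ I).card ≤
      ∑ a ∈ T, ∑ b ∈ T, if r a b then 1 else 0 := by
    have h1 : ∀ a ∈ T \ I, 1 ≤ ∑ b ∈ I, if r a b then 1 else 0 := by
      intro a ha
      obtain ⟨u, hu, h⟩ := hnb a ha
      calc 1 = if r a u then 1 else 0 := by simp [h]
        _ ≤ _ := Finset.single_le_sum (f := fun b => if r a b then 1 else 0)
          (fun _ _ => Nat.zero_le _) hu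
    have h2 : (T \ I).card ≤ ∑ a ∈ T \ I, ∑ b ∈ I, if r a b then 1 else 0 := by
      calc (T \ I).card = ∑ a ∈ T \ I, 1 := by simp
        _ ≤ _ := Finset.sum_le_sum h1
    have h3 : ∑ a ∈ I, ∑ b ∈ T \ I, (if r a b then 1 else 0) =
        ∑ a ∈ T \ I, ∑ b ∈ I, if r a b then 1 else 0 := by
      rw [Finset.sum_comm]
      refine Finset.sum_congr rfl fun a _ => Finset.sum_congr rfl fun b _ => ?_
      have : r b a ↔ r a b := ⟨hr _ _, hr _ _⟩
      simp [this]
    have h4 : ∀ a, ∑ b ∈ T, (if r a b then 1 else 0) =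
        ∑ b ∈ T \ I, (if r a b then 1 else 0) + ∑ b ∈ I, if r a b then 1 else 0 := by
      intro a; rw [Finset.sum_sdiff hIT]
    rw [← Finset.sum_sdiff hIT]
    simp only [h4, Finset.sum_add_distrib]
    omega
  set e' := ∑ a ∈ T \ I, ∑ b ∈ T \ I, if r a b then 1 else 0
  set e := ∑ a ∈ T, ∑ b ∈ T, if r a b then 1 else 0
  set t' := (T \ I).card
  rw [← hc]
  have h5 : k * (e' + 2 * t') ≤ k * e := Nat.mul_le_mul_left _ hsum
  have h6 : I.card * (2 * t' + I.card) ≤ k * (2 * t' + I.card) := Nat.mul_le_mul_right _ hIk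
  nlinarith

lemma card_close (S : Finset ℕ) (h : ∀ a ∈ S, ∀ b ∈ S, ¬ (a + 2 ≤ b)) : S.card ≤ 2 := by
  rcases S.eq_empty_or_nonempty with rfl | hne
  · simp
  · have : S ⊆ {S.min' hne, S.min' hne + 1} := by
      intro a ha
      have h1 := S.min'_le a ha
      have h2 := h _ (S.min'_mem hne) a ha
      simp only [Finset.mem_insert, Finset.mem_singleton]
      omega
    exact (Finset.card_le_card this).trans Finset.card_le_two

open Classical in
/-- Number of edges between two blocks. -/
noncomputable def ee {V : Type} (G : SimpleGraph V) (s ℓ : ℕ) (f : ℕ → V) (o j j' : ℕ) : ℕ :=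
  ∑ i ∈ Finset.range ℓ, ∑ i' ∈ Finset.range ℓ,
    if G.Adj (f (j * s + o + i)) (f (j' * s + o + i')) then 1 else 0

open Classical in
/-- Indicator of block adjacency. -/
noncomputable def gam {V : Type} (G : SimpleGraph V) (s ℓ : ℕ) (f : ℕ → V) (o j j' : ℕ) : ℕ :=
  if j ≠ j' ∧ Ed G s ℓ f o j j' then 1 else 0

lemma gam_symm {V : Type} (G : SimpleGraph V) (s ℓ : ℕ) (f : ℕ → V) (o j j' : ℕ) :
    gam G s ℓ f o j j' = gam G s ℓ f o j' j := by
  have : (j ≠ j' ∧ Ed G s ℓ f o j j') ↔ (j' ≠ j ∧ Ed G s ℓ f o j' j) :=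
    ⟨fun h => ⟨h.1.symm, h.2.symm⟩, fun h => ⟨h.1.symm, h.2.symm⟩⟩
  unfold gam
  by_cases h : j ≠ j' ∧ Ed G s ℓ f o j j'
  · rw [if_pos h, if_pos (this.1 h)]
  · rw [if_neg h, if_neg (fun h' => h (this.2 h'))]

open Classical in
/-- Indicator of heaviness. -/
noncomputable def hh {V : Type} (G : SimpleGraph V) (s ℓ : ℕ) (f : ℕ → V) (o j c : ℕ) : ℕ :=
  if Hv G s ℓ f o j c then 1 else 0

open Classical in
/-- Indicator of a star. -/
noncomputable def st {V : Type} (G : SimpleGraph V) (s ℓ : ℕ) (f : ℕ → V) (o j i c : ℕ) : ℕ :=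
  if j ≠ c ∧ ∃ i1 < ℓ, ∃ i2 < ℓ, i1 + 2 ≤ i2 ∧
      G.Adj (f (j * s + o + i)) (f (c * s + o + i1)) ∧
      G.Adj (f (j * s + o + i)) (f (c * s + o + i2)) then 1 else 0

lemma ee_le_sq {V : Type} (G : SimpleGraph V) (s ℓ : ℕ) (f : ℕ → V) (o j j' : ℕ) :
    ee G s ℓ f o j j' ≤ ℓ ^ 2 := by
  calc ee G s ℓ f o j j' ≤ ∑ i ∈ Finset.range ℓ, ∑ i' ∈ Finset.range ℓ, 1 := by
        refine Finset.sum_le_sum fun i _ => Finset.sum_le_sum fun i' _ => ?_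
        split_ifs <;> simp
    _ = ℓ ^ 2 := by simp [sq]

lemma ee_zero {V : Type} (G : SimpleGraph V) (s ℓ : ℕ) (f : ℕ → V) (o j j' : ℕ)
    (h : ¬ Ed G s ℓ f o j j') : ee G s ℓ f o j j' = 0 := by
  refine Finset.sum_eq_zero fun i hi => Finset.sum_eq_zero fun i' hi' => ?_
  rw [if_neg]
  intro h'
  exact h ⟨i, Finset.mem_range.1 hi, i', Finset.mem_range.1 hi', h'⟩

open Classical in
lemma ee_point {V : Type} (G : SimpleGraph V) (s ℓ : ℕ) (f : ℕ → V) (o j j' : ℕ) :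
    ee G s ℓ f o j j' ≤ (if j = j' then ℓ ^ 2 else 0) +
      ℓ * (∑ i ∈ Finset.range ℓ, st G s ℓ f o j i j') +
      2 * ℓ * (hh G s ℓ f o j j' + hh G s ℓ f o j' j) + 4 * gam G s ℓ f o j j' := by
  by_cases hj : j = j'
  · rw [if_pos hj]
    have := ee_le_sq G s ℓ f o j j'
    omega
  rw [if_neg hj]
  by_cases hE : Ed G s ℓ f o j j'
  swap
  · rw [ee_zero _ _ _ _ _ _ _ hE]; omega
  by_cases hH : Hv G s ℓ f o j j' ∨ Hv G s ℓ f o j' j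
  · have h1 : 1 ≤ hh G s ℓ f o j j' + hh G s ℓ f o j' j := by
      rcases hH with h | h <;> simp [hh, h]
    have h2 : ee G s ℓ f o j j' ≤ ∑ i ∈ Finset.range ℓ, (ℓ * st G s ℓ f o j i j' + 2) := by
      refine Finset.sum_le_sum fun i _ => ?_
      rw [Finset.sum_boole]
      by_cases hst : j ≠ j' ∧ ∃ i1 < ℓ, ∃ i2 < ℓ, i1 + 2 ≤ i2 ∧
        G.Adj (f (j * s + o + i)) (f (j' * s + o + i1)) ∧
        G.Adj (f (j * s + o + i)) (f (j' * s + o + i2))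
      · have h3 : ((Finset.range ℓ).filter
            (fun i' => G.Adj (f (j * s + o + i)) (f (j' * s + o + i')))).card ≤ ℓ := by
          refine (Finset.card_filter_le _ _).trans (by simp)
        simp only [st, if_pos hst, Nat.cast_id]
        omega
      · have h3 : ((Finset.range ℓ).filter
            (fun i' => G.Adj (f (j * s + o + i)) (f (j' * s + o + i')))).card ≤ 2 := by
          refine card_close _ ?_
          intro a ha b hb hab
          simp only [Finset.mem_filter, Finset.mem_range] at ha hb
          exact hst ⟨hj, a, ha.1, b, hb.1, hab, ha.2, hb.2⟩
        simp only [Nat.cast_id]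
        omega
    rw [Finset.sum_add_distrib, ← Finset.mul_sum] at h2
    simp only [Finset.sum_const, Finset.card_range, smul_eq_mul] at h2
    have h3 : 2 * ℓ * 1 ≤ 2 * ℓ * (hh G s ℓ f o j j' + hh G s ℓ f o j' j) :=
      Nat.mul_le_mul_left _ h1
    omega
  · push Not at hH
    have hg : gam G s ℓ f o j j' = 1 := by simp [gam, hj, hE]
    rw [hg]
    let A := (Finset.range ℓ).filter (fun i => ∃ i' < ℓ, G.Adj (f (j * s + o + i)) (f (j' * s + o + i')))
    let B := (Finset.range ℓ).filter (fun i' => ∃ i < ℓ, G.Adj (f (j * s + o + i)) (f (j' * s + o + i')))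
    have hA : A.card ≤ 2 := by
      refine card_close _ ?_
      intro a ha b hb hab
      simp only [A, Finset.mem_filter, Finset.mem_range] at ha hb
      obtain ⟨ha, a', ha', e1⟩ := ha
      obtain ⟨hb, b', hb', e2⟩ := hb
      exact hH.2 ⟨fun h => hj h.symm, a, ha, b, hb, hab, ⟨a', ha', e1.symm⟩, ⟨b', hb', e2.symm⟩⟩
    have hB : B.card ≤ 2 := by
      refine card_close _ ?_
      intro a ha b hb hab
      simp only [B, Finset.mem_filter, Finset.mem_range] at ha hb
      obtain ⟨ha, a', ha', e1⟩ := ha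
      obtain ⟨hb, b', hb', e2⟩ := hb
      exact hH.1 ⟨hj, a, ha, b, hb, hab, ⟨a', ha', e1⟩, ⟨b', hb', e2⟩⟩
    have h2 : ee G s ℓ f o j j' = ∑ i ∈ A, ∑ i' ∈ B,
        if G.Adj (f (j * s + o + i)) (f (j' * s + o + i')) then 1 else 0 := by
      symm
      unfold ee
      refine (Finset.sum_subset (Finset.filter_subset _ _) ?_).trans
        (Finset.sum_congr rfl fun i hi => ?_)
      · intro i hi hiA
        refine Finset.sum_eq_zero fun i' hi' => ?_
        rw [if_neg]
        intro h
        have hi'' := Finset.mem_range.1 (Finset.mem_filter.1 hi').1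
        exact hiA (Finset.mem_filter.2 ⟨hi, i', hi'', h⟩)
      · refine Finset.sum_subset (Finset.filter_subset _ _) ?_
        intro i' hi' hiB
        rw [if_neg]
        intro h
        exact hiB (Finset.mem_filter.2 ⟨hi', i, Finset.mem_range.1 hi, h⟩)
    have h3 : ee G s ℓ f o j j' ≤ A.card * B.card := by
      rw [h2]
      calc _ ≤ ∑ i ∈ A, ∑ i' ∈ B, 1 := by
            refine Finset.sum_le_sum fun i _ => Finset.sum_le_sum fun i' _ => ?_
            split_ifs <;> simp
        _ = _ := by simp
    have h4 := Nat.mul_le_mul hA hB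
    omega

lemma E_bound {V : Type} {G : SimpleGraph V} {n s ℓ k : ℕ} {P : V → Prop} {f : ℕ → V}
    {J : Finset ℕ} (C : Ctx G n s ℓ k P f J) (hk : 1 ≤ k) {o : ℕ} (ho : o + ℓ < s) :
    ∑ j ∈ J, ∑ j' ∈ J, ee G s ℓ f o j j' ≤ 6 * J.card * k * ℓ ^ 2 +
      4 * ∑ j ∈ J, ∑ j' ∈ J, gam G s ℓ f o j j' := by
  classical
  have h1 : ∑ j ∈ J, ∑ j' ∈ J, (if j = j' then ℓ ^ 2 else 0) = J.card * ℓ ^ 2 := by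
    rw [Finset.sum_congr rfl (g := fun _ => ℓ ^ 2)]
    · simp
    · intro j hj
      rw [Finset.sum_ite_eq, if_pos hj]
  have h2 : ∑ j ∈ J, ∑ j' ∈ J, (∑ i ∈ Finset.range ℓ, st G s ℓ f o j i j') ≤ J.card * (k * ℓ) := by
    rw [Finset.sum_comm]
    calc _ ≤ ∑ c ∈ J, k * ℓ := by
          refine Finset.sum_le_sum fun c hc => ?_
          rw [← Finset.sum_product' J (Finset.range ℓ) (fun j i => st G s ℓ f o j i c)]
          have := star_bound C ho hc
          rw [Finset.card_filter] at this
          exact this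
      _ = _ := by simp
  have h3 : ∑ j ∈ J, ∑ j' ∈ J, hh G s ℓ f o j j' ≤ J.card * (k * ℓ) := by
    rw [Finset.sum_comm]
    calc _ ≤ ∑ c ∈ J, k * ℓ := by
          refine Finset.sum_le_sum fun c hc => ?_
          have := heavy_bound C ho hc
          rw [Finset.card_filter] at this
          exact this
      _ = _ := by simp
  have h4 : ∑ j ∈ J, ∑ j' ∈ J, hh G s ℓ f o j' j ≤ J.card * (k * ℓ) := by
    rw [Finset.sum_comm]; exact h3
  have h5 := Finset.sum_le_sum (s := J) fun j _ => Finset.sum_le_sum (s := J) fun j' _ =>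
    ee_point G s ℓ f o j j'
  refine h5.trans ?_
  simp only [Finset.sum_add_distrib, ← Finset.mul_sum, mul_add]
  rw [h1]
  have h6 : J.card * ℓ ^ 2 * 1 ≤ J.card * ℓ ^ 2 * k := Nat.mul_le_mul_left _ hk
  have h2' := Nat.mul_le_mul_left ℓ h2
  have h3' := Nat.mul_le_mul_left (2 * ℓ) h3
  have h4' := Nat.mul_le_mul_left (2 * ℓ) h4
  nlinarith

lemma turan_block {V : Type} {G : SimpleGraph V} {n s ℓ k : ℕ} {P : V → Prop} {f : ℕ → V}
    {J : Finset ℕ} (C : Ctx G n s ℓ k P f J) {o : ℕ} (ho : o + ℓ < s) (K : Finset ℕ) (hK : K ⊆ J) :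
    (K.card * ℓ) ^ 2 ≤ k * ((∑ c ∈ K, ∑ c' ∈ K, ee G s ℓ f o c c') + K.card * ℓ) := by
  classical
  have h := turan (fun p q : ℕ × ℕ => G.Adj (f (p.1 * s + o + p.2)) (f (q.1 * s + o + q.2)))
    (fun a b h => h.symm) k _ (K ×ˢ Finset.range ℓ) rfl (by
      intro S hS hind
      have hmem : ∀ p ∈ S, p.1 ∈ J ∧ p.2 < ℓ := by
        intro p hp
        obtain ⟨h1, h2⟩ := Finset.mem_product.1 (hS hp)
        exact ⟨hK h1, Finset.mem_range.1 h2⟩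
      have hinj : Set.InjOn (fun p : ℕ × ℕ => f (p.1 * s + o + p.2)) (S : Set (ℕ × ℕ)) := by
        rintro ⟨a, b⟩ h1 ⟨a', b'⟩ h2 e
        have h3 := hmem _ h1
        have h4 := hmem _ h2
        have f1 := C.fit _ h3.1
        have f2 := C.fit _ h4.1
        simp only at h3 h4 f1 f2
        have e' := C.cf.inj _ (by dsimp only; omega) _ (by dsimp only; omega) e
        simp only at e'
        rcases lt_trichotomy a a' with h | h | h
        · have := blk_lt (s := s) h; omega
        · subst h; congr 1; omega
        · have := blk_lt (s := s) h; omega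
      rw [← Finset.card_image_of_injOn hinj]
      refine C.ind _ ?_
      intro u hu v hv huv
      obtain ⟨a, ha, rfl⟩ := Finset.mem_image.1 hu
      obtain ⟨b, hb, rfl⟩ := Finset.mem_image.1 hv
      exact hind a ha b hb (by rintro rfl; exact huv rfl))
  rw [Finset.card_product, Finset.card_range] at h
  have he : (∑ c ∈ K, ∑ c' ∈ K, ee G s ℓ f o c c') = ∑ a ∈ K ×ˢ Finset.range ℓ,
      ∑ b ∈ K ×ˢ Finset.range ℓ,
        if G.Adj (f (a.1 * s + o + a.2)) (f (b.1 * s + o + b.2)) then 1 else 0 := by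
    rw [Finset.sum_product]
    refine Finset.sum_congr rfl fun c _ => ?_
    simp only [Finset.sum_product]
    rw [Finset.sum_comm]
    rfl
  rw [he]
  exact h

lemma main_count {V : Type} {G : SimpleGraph V} {n s ℓ k : ℕ} {P : V → Prop} {f : ℕ → V}
    {J : Finset ℕ} (C : Ctx G n s ℓ k P f J) {x y : ℕ} (ho : Off ℓ x y) :
    ℓ ^ 3 * (∑ j ∈ J, ∑ j' ∈ J, gam G s ℓ f x j j') ^ 2 ≤
      J.card * (2 * k * ℓ ^ 3 * (∑ j ∈ J, ∑ j' ∈ J, gam G s ℓ f x j j') +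
        2 * k ^ 2 * (∑ j ∈ J, ∑ j' ∈ J, ee G s ℓ f y j j')) := by
  classical
  have hs := C.hs
  have hl := C.hl
  have hy : y + ℓ < s := by rcases ho with ⟨-, rfl⟩ | ⟨-, rfl⟩ <;> omega
  set g := gam G s ℓ f x with hg
  set e := ee G s ℓ f y with he
  set Γ := ∑ j ∈ J, ∑ j' ∈ J, g j j' with hΓ
  set E := ∑ j ∈ J, ∑ j' ∈ J, e j j' with hE
  let d : ℕ → ℕ := fun b => ∑ c ∈ J, g b c
  have hg01 : ∀ a b, g a b = 0 ∨ g a b = 1 := by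
    intro a b; simp only [hg, gam]; split_ifs <;> simp
  have h1 : ∀ b ∈ J, (d b * ℓ) ^ 2 ≤
      k * ((∑ c ∈ J, ∑ c' ∈ J, g b c * g b c' * e c c') + d b * ℓ) := by
    intro b hb
    have h := turan_block C hy (J.filter (fun c => b ≠ c ∧ Ed G s ℓ f x b c)) (Finset.filter_subset _ _)
    have hc : (J.filter (fun c => b ≠ c ∧ Ed G s ℓ f x b c)).card = d b := by
      rw [Finset.card_filter]; rfl
    rw [hc] at h
    refine h.trans (le_of_eq ?_)
    congr 2
    rw [Finset.sum_filter]
    refine Finset.sum_congr rfl fun c _ => ?_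
    rw [Finset.sum_filter]
    by_cases h1 : b ≠ c ∧ Ed G s ℓ f x b c
    · rw [if_pos h1]
      refine Finset.sum_congr rfl fun c' _ => ?_
      simp only [hg, gam, if_pos h1]
      split_ifs <;> simp [he]
    · rw [if_neg h1]
      symm
      refine Finset.sum_eq_zero fun c' _ => ?_
      simp only [hg, gam, if_neg h1]; simp
  have h2 : ∀ c ∈ J, ∀ c' ∈ J, ℓ * ((∑ b ∈ J, g b c * g b c') * e c c') ≤
      2 * k * e c c' + if c = c' then ℓ ^ 3 * d c else 0 := by
    intro c hc c' hc'
    by_cases hcc : c = c'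
    · subst hcc
      rw [if_pos rfl]
      have h3 : ∑ b ∈ J, g b c * g b c = d c := by
        refine Finset.sum_congr rfl fun b _ => ?_
        rw [hg, gam_symm, ← hg]
        rcases hg01 c b with h | h <;> simp [h]
      rw [h3]
      have h4 : e c c ≤ ℓ ^ 2 := ee_le_sq _ _ _ _ _ _ _
      have := Nat.mul_le_mul_left (ℓ * d c) h4
      nlinarith
    · rw [if_neg hcc, add_zero]
      by_cases hEd : Ed G s ℓ f y c c'
      · have h3 := codeg_bound C ho hc hc' hcc hEd
        have h4 : ∑ b ∈ J, g b c * g b c' = (J.filter (fun b => (b ≠ c ∧ Ed G s ℓ f x b c) ∧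
            (b ≠ c' ∧ Ed G s ℓ f x b c'))).card := by
          rw [Finset.card_filter]
          refine Finset.sum_congr rfl fun b _ => ?_
          simp only [hg, gam]
          by_cases a1 : b ≠ c ∧ Ed G s ℓ f x b c
          · by_cases a2 : b ≠ c' ∧ Ed G s ℓ f x b c'
            · rw [if_pos a1, if_pos a2, if_pos ⟨a1, a2⟩]
            · rw [if_neg a2, mul_zero, if_neg (fun h => a2 h.2)]
          · rw [if_neg a1, zero_mul, if_neg (fun h => a1 h.1)]
        rw [← h4] at h3
        have := Nat.mul_le_mul_right (e c c') h3
        nlinarith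
      · have : e c c' = 0 := ee_zero _ _ _ _ _ _ _ hEd
        simp [this]
  have h3 : ∑ b ∈ J, ∑ c ∈ J, ∑ c' ∈ J, g b c * g b c' * e c c' =
      ∑ c ∈ J, ∑ c' ∈ J, (∑ b ∈ J, g b c * g b c') * e c c' := by
    rw [Finset.sum_comm]
    refine Finset.sum_congr rfl fun c _ => ?_
    rw [Finset.sum_comm]
    refine Finset.sum_congr rfl fun c' _ => ?_
    rw [Finset.sum_mul]
  have hdΓ : ∑ b ∈ J, d b = Γ := rfl
  have h4 : ℓ * (∑ b ∈ J, ∑ c ∈ J, ∑ c' ∈ J, g b c * g b c' * e c c') ≤ 2 * k * E + ℓ ^ 3 * Γ := by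
    rw [h3, Finset.mul_sum]
    calc _ ≤ ∑ c ∈ J, ∑ c' ∈ J, (2 * k * e c c' + if c = c' then ℓ ^ 3 * d c else 0) := by
          refine Finset.sum_le_sum fun c hc => ?_
          rw [Finset.mul_sum]
          exact Finset.sum_le_sum fun c' hc' => h2 c hc c' hc'
      _ = 2 * k * E + ∑ c ∈ J, ∑ c' ∈ J, (if c = c' then ℓ ^ 3 * d c else 0) := by
          simp only [Finset.sum_add_distrib, ← Finset.mul_sum, hE]
      _ = 2 * k * E + ∑ c ∈ J, ℓ ^ 3 * d c := by
          congr 1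
          refine Finset.sum_congr rfl fun c hc => ?_
          rw [Finset.sum_ite_eq, if_pos hc]
      _ = _ := by rw [← Finset.mul_sum, hdΓ]
  have h5 : ℓ ^ 2 * ∑ b ∈ J, d b ^ 2 ≤
      k * ((∑ b ∈ J, ∑ c ∈ J, ∑ c' ∈ J, g b c * g b c' * e c c') + Γ * ℓ) := by
    have := Finset.sum_le_sum h1
    simp only [mul_pow, ← Finset.sum_mul, ← Finset.mul_sum, Finset.sum_add_distrib, hdΓ] at this
    rw [mul_comm]; exact this
  have h6 : Γ ^ 2 ≤ J.card * ∑ b ∈ J, d b ^ 2 := by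
    rw [← hdΓ]; exact sq_sum_le_card_mul_sum_sq
  set D := ∑ b ∈ J, d b ^ 2
  set Z := ∑ b ∈ J, ∑ c ∈ J, ∑ c' ∈ J, g b c * g b c' * e c c'
  have h7 : ℓ ^ 3 * D ≤ 2 * k * ℓ ^ 3 * Γ + 2 * k ^ 2 * E := by
    have a1 := Nat.mul_le_mul_left ℓ h5
    have a2 := Nat.mul_le_mul_left k h4
    have a3 : ℓ ^ 2 ≤ ℓ ^ 3 := Nat.pow_le_pow_right hl (by norm_num)
    have a4 := Nat.mul_le_mul_left (k * Γ) a3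
    nlinarith
  calc ℓ ^ 3 * Γ ^ 2 ≤ ℓ ^ 3 * (J.card * D) := Nat.mul_le_mul_left _ h6
    _ = J.card * (ℓ ^ 3 * D) := by ring
    _ ≤ _ := Nat.mul_le_mul_left _ h7

lemma final_arith (N k l Γ EA EB : ℝ) (hk : 1 ≤ k) (hl : 1 ≤ l) (hN : 300 * k ^ 2 ≤ N)
    (hkl : k ≤ l ^ 5) (hEB : EB ≤ EA) (hEA : EA ≤ 6 * N * k * l ^ 2 + 4 * Γ)
    (hT : (N * l) ^ 2 ≤ k * (EA + N * l))
    (hm : l ^ 3 * Γ ^ 2 ≤ N * (2 * k * l ^ 3 * Γ + 2 * k ^ 2 * EB)) : False := by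
  have hk2 : k ≤ k ^ 2 := by nlinarith
  have hNpos : 0 < N := by nlinarith
  have hl2 : l ≤ l ^ 2 := by nlinarith
  have hNl : 0 < N * l ^ 2 := by positivity
  have a1 : 300 * (k ^ 2 * (N * l ^ 2)) ≤ N ^ 2 * l ^ 2 := by
    have := mul_le_mul_of_nonneg_right hN hNl.le
    nlinarith
  have a2 : k * (N * l) ≤ k ^ 2 * (N * l ^ 2) := by
    have : N * l ≤ N * l ^ 2 := mul_le_mul_of_nonneg_left hl2 hNpos.le
    exact mul_le_mul hk2 this (by positivity) (by positivity)
  have a3 : N ^ 2 * l ^ 2 ≤ 8 * k * Γ := by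
    have := mul_le_mul_of_nonneg_left hEA (show (0:ℝ) ≤ k by linarith)
    nlinarith
  have hkpos : 0 < k := by linarith
  have hΓ : 0 < Γ := by
    have : 0 < N ^ 2 * l ^ 2 := by positivity
    by_contra h
    push Not at h
    have : 8 * k * Γ ≤ 0 := by nlinarith
    linarith
  have a4 : EA ≤ 8 * Γ := by
    have : k * (6 * N * k * l ^ 2) ≤ k * (4 * Γ) := by nlinarith
    have := le_of_mul_le_mul_left this hkpos
    linarith
  have hEB8 : EB ≤ 8 * Γ := hEB.trans a4
  have a5 : l ^ 3 * Γ ≤ N * (2 * k * l ^ 3 + 16 * k ^ 2) := by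
    have b1 : 2 * k ^ 2 * EB ≤ 2 * k ^ 2 * (8 * Γ) := mul_le_mul_of_nonneg_left hEB8 (by positivity)
    have b2 := mul_le_mul_of_nonneg_left b1 hNpos.le
    have : (l ^ 3 * Γ) * Γ ≤ (N * (2 * k * l ^ 3 + 16 * k ^ 2)) * Γ := by nlinarith
    exact le_of_mul_le_mul_right this hΓ
  have a6 : N * (l ^ 5 * N) ≤ N * (16 * k ^ 2 * l ^ 3 + 128 * k ^ 3) := by
    have c1 := mul_le_mul_of_nonneg_left a3 (show (0:ℝ) ≤ l ^ 3 by positivity)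
    have c2 := mul_le_mul_of_nonneg_left a5 (show (0:ℝ) ≤ 8 * k by positivity)
    nlinarith
  have a7 := le_of_mul_le_mul_left a6 hNpos
  have a8 : l ^ 3 ≤ l ^ 5 := pow_le_pow_right₀ hl (by norm_num)
  have a9 : l ^ 5 * N ≤ l ^ 5 * (144 * k ^ 2) := by
    have c1 := mul_le_mul_of_nonneg_left a8 (show (0:ℝ) ≤ 16 * k ^ 2 by positivity)
    have c2 := mul_le_mul_of_nonneg_left hkl (show (0:ℝ) ≤ 128 * k ^ 2 by positivity)
    nlinarith
  have a10 := le_of_mul_le_mul_left a9 (show (0:ℝ) < l ^ 5 by positivity)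
  nlinarith

lemma ctx_false {V : Type} {G : SimpleGraph V} {n s ℓ k : ℕ} {P : V → Prop} {f : ℕ → V}
    {J : Finset ℕ} (C : Ctx G n s ℓ k P f J) (hk : 1 ≤ k) (hkl : k ≤ ℓ ^ 5)
    (hN : 300 * k ^ 2 ≤ J.card) : False := by
  have main : ∀ x y, Off ℓ x y → ∑ j ∈ J, ∑ j' ∈ J, ee G s ℓ f y j j' ≤
      ∑ j ∈ J, ∑ j' ∈ J, ee G s ℓ f x j j' → False := by
    intro x y ho hle
    have hs := C.hs
    have hx : x + ℓ < s := by rcases ho with ⟨rfl, -⟩ | ⟨rfl, -⟩ <;> omega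
    have h1 := E_bound C hk hx
    have h2 := turan_block C hx J (Finset.Subset.refl _)
    have h3 := main_count C ho
    refine final_arith (J.card : ℝ) k ℓ (∑ j ∈ J, ∑ j' ∈ J, gam G s ℓ f x j j' : ℕ)
      (∑ j ∈ J, ∑ j' ∈ J, ee G s ℓ f x j j' : ℕ) (∑ j ∈ J, ∑ j' ∈ J, ee G s ℓ f y j j' : ℕ)
      ?_ ?_ ?_ ?_ ?_ ?_ ?_ ?_
    · exact_mod_cast hk
    · exact_mod_cast C.hl
    · exact_mod_cast hN
    · exact_mod_cast hkl
    · exact_mod_cast hle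
    · exact_mod_cast h1
    · exact_mod_cast h2
    · exact_mod_cast h3
  rcases le_total (∑ j ∈ J, ∑ j' ∈ J, ee G s ℓ f (ℓ + 1) j j')
    (∑ j ∈ J, ∑ j' ∈ J, ee G s ℓ f 0 j j') with h | h
  · exact main 0 (ℓ + 1) (Or.inl ⟨rfl, rfl⟩) h
  · exact main (ℓ + 1) 0 (Or.inr ⟨rfl, rfl⟩) h

end HamCyc
namespace HamCyc

lemma win_finish {V : Type} [Fintype V] [DecidableEq V] {G : SimpleGraph V} [DecidableRel G.Adj]
    {k M : ℕ} {W : Finset V}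
    (hα : ∀ s : Finset V, (∀ u ∈ s, ∀ v ∈ s, u ≠ v → ¬ G.Adj u v) → s.card ≤ k)
    (h : Win G (Fintype.card V) M (fun v => v ∉ W ∧ k + M < G.degree v)) :
    ∃ (u : V) (w : G.Walk u u), w.IsCycle ∧ w.length = Fintype.card V - 1 ∧
      ∀ x ∈ W, x ∈ w.support := by
  obtain ⟨l, hl, ⟨u0, hu0⟩, hP, hM⟩ := h
  have hfil : Finset.univ.filter (fun u => u ∉ l) = Finset.univ \ l.toFinset := by
    ext u; simp
  have hcard : (Finset.univ.filter (fun u => u ∉ l)).card + l.length = Fintype.card V := by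
    rw [hfil, ← List.toFinset_card_of_nodup hl.2.1,
      Finset.card_sdiff_add_card_eq_card (Finset.subset_univ _), Finset.card_univ]
  have hpos : 0 < (Finset.univ.filter (fun u => u ∉ l)).card :=
    Finset.card_pos.2 ⟨u0, by simpa using hu0⟩
  obtain ⟨l', hl', hm'⟩ := absorb_all (M := M) u0 hα
    ((Finset.univ.filter (fun u => u ∉ l)).card - 1) l hl hu0 (by omega) (by omega)
    (fun v hv => (hP v hv).2)
  obtain ⟨u, w, hw, hlen, hsup⟩ := hl'.toWalk
  refine ⟨u, w, hw, ?_, ?_⟩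
  · rw [hlen, ← List.toFinset_card_of_nodup hl'.2.1]
    have : l'.toFinset = Finset.univ.erase u0 := by
      ext v; simp [hm']
    rw [this, Finset.card_erase_of_mem (Finset.mem_univ _), Finset.card_univ]
  · intro x hx
    apply hsup
    rw [hm']
    rintro rfl
    exact (hP _ hu0).1 hx

lemma low_bound {V : Type} [Fintype V] [DecidableEq V] {G : SimpleGraph V} [DecidableRel G.Adj]
    {k D : ℕ} (hα : ∀ s : Finset V, (∀ u ∈ s, ∀ v ∈ s, u ≠ v → ¬ G.Adj u v) → s.card ≤ k) :
    (Finset.univ.filter (fun v => G.degree v ≤ D)).card ≤ k * (D + 1) := by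
  classical
  set L := Finset.univ.filter (fun v => G.degree v ≤ D) with hL
  have h := turan (fun a b => G.Adj a b) (fun a b h => h.symm) k _ L rfl (fun S _ hS => hα S hS)
  have h2 : ∑ a ∈ L, ∑ b ∈ L, (if G.Adj a b then 1 else 0) ≤ L.card * D := by
    calc _ ≤ ∑ a ∈ L, D := by
          refine Finset.sum_le_sum fun a ha => ?_
          have had : G.degree a ≤ D := (Finset.mem_filter.1 ha).2
          rw [← Finset.card_filter]
          refine le_trans (Finset.card_le_card ?_) had
          intro b hb
          rw [SimpleGraph.mem_neighborFinset]
          exact (Finset.mem_filter.1 hb).2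
      _ = _ := by simp
  rcases Nat.eq_zero_or_pos L.card with h0 | h0
  · rw [h0]; exact Nat.zero_le _
  · have h3 : L.card * L.card ≤ L.card * (k * (D + 1)) := by
      have h5 : ∑ a ∈ L, ∑ b ∈ L, (if G.Adj a b then 1 else 0) + L.card ≤ L.card * D + L.card := by
        omega
      have h4 := Nat.mul_le_mul_left k h5
      have h6 : L.card ^ 2 ≤ k * (L.card * D + L.card) := by
        refine (h.trans (le_of_eq ?_)).trans h4
        congr!
      nlinarith
    exact Nat.le_of_mul_le_mul_left h3 h0

lemma main_nat {V : Type} [Fintype V] [DecidableEq V] {G : SimpleGraph V} [DecidableRel G.Adj]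
    {k ℓ : ℕ} {W : Finset V} (hk : 1 ≤ k) (hl : 1 ≤ ℓ) (hlk : ℓ ≤ k) (hkl : k ≤ ℓ ^ 5)
    (hham : G.IsHamiltonian)
    (hα : ∀ s : Finset V, (∀ u ∈ s, ∀ v ∈ s, u ≠ v → ¬ G.Adj u v) → s.card ≤ k)
    (hn : 375 * k ^ 2 * (2 * ℓ + 2) ≤ Fintype.card V) (hW : W.card ≤ 20 * k ^ 2) :
    ∃ (u : V) (w : G.Walk u u), w.IsCycle ∧ w.length = Fintype.card V - 1 ∧
      ∀ x ∈ W, x ∈ w.support := by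
  by_contra hcon
  obtain ⟨s, hs⟩ : ∃ s, s = 2 * ℓ + 2 := ⟨_, rfl⟩
  rw [← hs] at hn
  have hk2 : 1 ≤ k ^ 2 := Nat.one_le_pow _ _ hk
  have hbig : 375 * s ≤ Fintype.card V := by nlinarith
  obtain ⟨f, hf, hsurj⟩ := CF.ofHam hham (by omega)
  set n := Fintype.card V with hnV
  let P : V → Prop := fun v => v ∉ W ∧ k + 4 * s < G.degree v
  have hnowin : ¬ Win G n (4 * s) P := fun h => hcon (win_finish hα h)
  set m := n / s with hm
  classical
  let J := (Finset.range m).filter (fun j => ∀ i < s, P (f (j * s + i)))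
  let B := (Finset.range m).filter (fun j => ¬ ∀ i < s, P (f (j * s + i)))
  have hfit : ∀ j < m, j * s + s ≤ n := by
    intro j hj
    have h1 : (j + 1) * s ≤ m * s := Nat.mul_le_mul_right s hj
    have h2 : m * s ≤ n := Nat.div_mul_le_self n s
    rw [Nat.add_mul, one_mul] at h1
    omega
  have hJB : J.card + B.card = m := by
    have := Finset.card_filter_add_card_filter_not (s := Finset.range m)
      (fun j => ∀ i < s, P (f (j * s + i)))
    rw [Finset.card_range] at this
    exact this
  have hB : B.card ≤ 38 * k ^ 2 := by
    have hch : ∀ j, ∃ i, j ∈ B → i < s ∧ ¬ P (f (j * s + i)) := by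
      intro j
      by_cases hj : j ∈ B
      · have := (Finset.mem_filter.1 hj).2
        push Not at this
        obtain ⟨i, h1, h2⟩ := this
        exact ⟨i, fun _ => ⟨h1, h2⟩⟩
      · exact ⟨0, fun h => absurd h hj⟩
    choose i hi using hch
    have hinj : Set.InjOn (fun j => f (j * s + i j)) (B : Set ℕ) := by
      intro a ha b hb e
      have h1 := hi a ha
      have h2 := hi b hb
      have f1 := hfit a (Finset.mem_range.1 (Finset.mem_filter.1 ha).1)
      have f2 := hfit b (Finset.mem_range.1 (Finset.mem_filter.1 hb).1)
      have e' := hf.inj _ (by omega) _ (by omega) e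
      rcases lt_trichotomy a b with h | h | h
      · have := blk_lt (s := s) h; omega
      · exact h
      · have := blk_lt (s := s) h; omega
    rw [← Finset.card_image_of_injOn hinj]
    have hsub : B.image (fun j => f (j * s + i j)) ⊆
        W ∪ Finset.univ.filter (fun v => G.degree v ≤ k + 4 * s) := by
      intro v hv
      obtain ⟨j, hj, rfl⟩ := Finset.mem_image.1 hv
      have h1 := (hi j hj).2
      simp only [P, not_and, not_lt] at h1
      rw [Finset.mem_union, Finset.mem_filter]
      by_cases hw : f (j * s + i j) ∈ W
      · exact Or.inl hw
      · exact Or.inr ⟨Finset.mem_univ _, h1 hw⟩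
    have h1 := (Finset.card_le_card hsub).trans (Finset.card_union_le _ _)
    have h2 := low_bound (D := k + 4 * s) hα
    have h3 : k * (k + 4 * s + 1) ≤ k * (18 * k) := Nat.mul_le_mul_left _ (by omega)
    have h4 : k * (18 * k) = 18 * k ^ 2 := by ring
    omega
  have hmk : 375 * k ^ 2 ≤ m := (Nat.le_div_iff_mul_le (by omega)).2 hn
  refine ctx_false (G := G) (n := n) (s := s) (ℓ := ℓ) (k := k) (P := P) (f := f) (J := J)
    ⟨hf, ?_, hs, hl, by omega, ?_, ?_, hα, hnowin⟩ hk hkl (by omega)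
  · intro v
    obtain ⟨i, -, h⟩ := hsurj v
    exact ⟨i, h⟩
  · intro j hj
    exact hfit j (Finset.mem_range.1 (Finset.mem_filter.1 hj).1)
  · intro j hj
    exact (Finset.mem_filter.1 hj).2

end HamCyc

theorem statement1 :
    ∃ c : ℝ, 0 < c ∧
      ∀ (k : ℕ), 0 < k →
        ∀ (V : Type) [Fintype V] [DecidableEq V] (G : SimpleGraph V) (W : Finset V),
          G.IsHamiltonian →
          (∀ s : Finset V, (∀ u ∈ s, ∀ v ∈ s, u ≠ v → ¬ G.Adj u v) → s.card ≤ k) →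
          c * (k : ℝ) ^ ((11 : ℝ) / 5) ≤ (Fintype.card V : ℝ) →
          W.card ≤ 20 * k ^ 2 →
          ∃ (u : V) (w : G.Walk u u), w.IsCycle ∧ w.length = Fintype.card V - 1 ∧
            ∀ x ∈ W, x ∈ w.support := by
  refine ⟨3000, by norm_num, ?_⟩
  intro k hk V _ _ G W hham hα hn hW
  classical
  have hk1 : (1 : ℝ) ≤ k := by exact_mod_cast hk
  have hk0 : (0 : ℝ) ≤ k := by linarith
  set t : ℝ := (k : ℝ) ^ ((1 : ℝ) / 5) with ht
  have ht1 : 1 ≤ t := Real.one_le_rpow hk1 (by norm_num)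
  have ht5 : t ^ 5 = k := by
    rw [ht, ← Real.rpow_natCast, ← Real.rpow_mul hk0]
    norm_num
  have htk : t ≤ k := by
    rw [← ht5]; exact le_self_pow₀ ht1 (by norm_num)
  have h11 : (k : ℝ) ^ ((11 : ℝ) / 5) = (k : ℝ) ^ 2 * t := by
    rw [ht, ← Real.rpow_natCast, ← Real.rpow_add (by linarith)]
    norm_num
  rw [h11] at hn
  have hl1 : 1 ≤ ⌈t⌉₊ := Nat.one_le_ceil_iff.2 (by linarith)
  have hlk : ⌈t⌉₊ ≤ k := Nat.ceil_le.2 htk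
  have hlt : (⌈t⌉₊ : ℝ) < t + 1 := Nat.ceil_lt_add_one (by linarith)
  have htl : t ≤ (⌈t⌉₊ : ℝ) := Nat.le_ceil t
  refine HamCyc.main_nat (ℓ := ⌈t⌉₊) hk hl1 hlk ?_ hham hα ?_ hW
  · have : (k : ℝ) ≤ (⌈t⌉₊ : ℝ) ^ 5 := by
      rw [← ht5]; exact pow_le_pow_left₀ (by linarith) htl 5
    exact_mod_cast this
  · have : (375 * (k : ℝ) ^ 2 * (2 * (⌈t⌉₊ : ℝ) + 2)) ≤ (Fintype.card V : ℝ) := by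
      refine le_trans ?_ hn
      have : 2 * (⌈t⌉₊ : ℝ) + 2 ≤ 8 * t := by linarith
      have := mul_le_mul_of_nonneg_left this (show (0 : ℝ) ≤ 375 * (k : ℝ) ^ 2 by positivity)
      linarith
    exact_mod_cast this
end
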